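/- arXiv:1010.6278 — 2 statements merged into one kernel-verified Lean document; each statement's English description precedes it below -/
import Mathlib

section
/- For each fixed positive integer k, |(Apex^k F)_n| / (2^{kn} · |F_n|) → c_k as n → ∞, where c_k = (2^{k(k+1)/2} · e^k · k!)^{-1}. That is, |(Apex^k F)_n| ∼ c_k · 2^{kn} · |F_n|. -/
/-!
The forests `F_n` are counted precisely enough to know `n |F_(n-1)| / |F_n| → 1 / e`, and then
`Apex^k F` is counted through its blockers.

*Forests.*  Let `f (n, m)` be the number of forests on `n` vertices in which `n - m` given vertices
(roots) lie in distinct components.  Deleting a root turns its neighbours into roots, so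
`f (n + 1, m) = ∑ j, (m choose j) f (n, m - j)` as long as there is a root, and declaring one vertex
a root changes nothing, so `f (n + 1, n + 1) = f (n + 1, n)`.  Both relations hold for `m!` times the
coefficient of `u ^ m` in `(1 - u) exp ((n + 1) u - u ^ 2 / 2)` (`forestNum_rec`, `forestNum_diag`),
which is therefore `f (n, m)` (`card_sepForests`).  Expanding in powers of `-u ^ 2 / 2` and using
dominated convergence gives `|F_n| ~ e ^ (-1 / 2) (n + 1) ^ (n - 2)` (`tendsto_forestNum`), hence the
limit of the ratios (`tendsto_forestCount_ratio`).

*Blockers.*  A set `S` of size `k` blocks exactly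
`|F_(n-k)| 2 ^ (k (n - k) + (k choose 2)) = |F_(n-k)| 2 ^ (k n - k (k + 1) / 2)` graphs, since the
edges meeting `S` are free (`card_blocked`, `card_below_compl'`).  For `n ≥ k` a graph of `Apex^k F`
has a blocker of size exactly `k`, so the union bound gives
`|(Apex^k F)_n| ≤ (n choose k) |F_(n-k)| 2 ^ (k n - k (k + 1) / 2)`, which is asymptotically
`2 ^ (k n) |F_n| / (2 ^ (k (k + 1) / 2) e ^ k k!)` (`tendsto_main`).

*Uniqueness.*  For the lower bound it suffices, by Bonferroni, that graphs with two different
blockers `S` and `S'` of size `k` are rare (`card_two_blockers`).  Take `s ∈ S \ S'` and let `W` be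
the complement of `S ∪ S'`.  If `s` has at most `n / 8` neighbours in `W`, an exponentially small
part of the choices of edges at `s` remains.  Otherwise, as `s` lies in the forest `G - S'`, these
neighbours lie in distinct components of the forest induced on `W`, and there are at most
`(n + 1) ^ (n - n / 8)` such forests for each neighbourhood (`forestNum_le`), which is smaller than
`|F_n|` by more than any exponential factor.
-/


open SimpleGraph Filter Real

def IsBlocker {V : Type*} (G : SimpleGraph V) (B : Set V) : Prop :=
  (G.induce Bᶜ).IsAcyclic

def HasDisjointCycles {V : Type*} (G : SimpleGraph V) (m : ℕ) : Prop :=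
  ∃ c : Fin m → (Σ v : V, G.Walk v v),
    (∀ i, (c i).2.IsCycle) ∧
    ∀ i j, i ≠ j → ∀ v, v ∈ (c i).2.support → v ∉ (c j).2.support

noncomputable def apexCount (n k : ℕ) : ℕ :=
  Nat.card {G : SimpleGraph (Fin n) // ∃ B : Finset (Fin n), B.card ≤ k ∧ IsBlocker G ↑B}

noncomputable def exCount (n k : ℕ) : ℕ :=
  Nat.card {G : SimpleGraph (Fin n) // ¬ HasDisjointCycles G k}

noncomputable def forestCount (n : ℕ) : ℕ :=
  Nat.card {G : SimpleGraph (Fin n) // G.IsAcyclic}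

def IsSpike {V : Type*} (G : SimpleGraph V) (u v : V) : Prop :=
  G.Adj u v ∧ (G.neighborSet u).ncard = 1 ∧ (G.neighborSet v).ncard = 2 ∧
  ¬ ∃ a b c : V, a ≠ b ∧ b ≠ c ∧ a ≠ c ∧ G.Adj a b ∧ G.Adj b c ∧ ¬ G.Adj a c ∧
      (G.connectedComponentMk u).supp = {a, b, c}

namespace ApexForest

open Finset
open scoped Classical

/-! ### Forests and deletion of a vertex -/

section Forests

variable {V : Type*}

/-- The complete graph on the vertex set `A`, with all vertices outside `A` isolated.  A graph on
`A` is encoded as a graph `G ≤ cliqueOn A` on the ambient vertex type. -/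
def cliqueOn (A : Finset V) : SimpleGraph V where
  Adj u w := u ≠ w ∧ u ∈ A ∧ w ∈ A
  symm := ⟨fun _ _ h => ⟨h.1.symm, h.2.2, h.2.1⟩⟩
  loopless := ⟨fun _ h => h.1 rfl⟩

/-- The star with centre `v` and set of leaves `N`. -/
def starAt (v : V) (N : Finset V) : SimpleGraph V where
  Adj a b := a ≠ b ∧ ((a = v ∧ b ∈ N) ∨ (b = v ∧ a ∈ N))
  symm := ⟨fun _ _ h => ⟨h.1.symm, h.2.symm⟩⟩
  loopless := ⟨fun _ h => h.1 rfl⟩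

/-- Distinct vertices of `R` lie in distinct components of `G`. -/
def Sep (G : SimpleGraph V) (R : Finset V) : Prop :=
  ∀ x ∈ R, ∀ y ∈ R, G.Reachable x y → x = y

lemma cliqueOn_adj {A : Finset V} {u w : V} :
    (cliqueOn A).Adj u w ↔ u ≠ w ∧ u ∈ A ∧ w ∈ A := Iff.rfl

lemma starAt_adj {v : V} {N : Finset V} {a b : V} :
    (starAt v N).Adj a b ↔ a ≠ b ∧ ((a = v ∧ b ∈ N) ∨ (b = v ∧ a ∈ N)) := Iff.rfl

lemma reachable_isolated {G : SimpleGraph V} {v u : V} (hv : ∀ u, ¬ G.Adj v u)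
    (h : G.Reachable v u) : u = v := by
  obtain ⟨w⟩ := h
  cases w with
  | nil => rfl
  | cons h _ => exact absurd h (hv _)

/-- Adding a star merges the components that meet it and leaves the others unchanged. -/
lemma reachable_sup_starAt {G : SimpleGraph V} {v : V} {N : Finset V} {a b : V}
    (h : (G ⊔ starAt v N).Reachable a b) :
    G.Reachable a b ∨ ((G.Reachable a v ∨ ∃ x ∈ N, G.Reachable a x) ∧
      (G.Reachable b v ∨ ∃ x ∈ N, G.Reachable b x)) := by
  obtain ⟨w⟩ := h
  induction w with
  | nil => exact Or.inl (Reachable.refl _)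
  | @cons a c b hac _ ih =>
    rw [sup_adj, starAt_adj] at hac
    rcases hac with hac | ⟨-, ⟨rfl, hc⟩ | ⟨rfl, ha⟩⟩
    · have r : G.Reachable a c := hac.reachable
      rcases ih with ih | ⟨h1 | ⟨x, hx, h1⟩, h2⟩
      · exact Or.inl (r.trans ih)
      · exact Or.inr ⟨Or.inl (r.trans h1), h2⟩
      · exact Or.inr ⟨Or.inr ⟨x, hx, r.trans h1⟩, h2⟩
    · rcases ih with ih | ⟨-, h2⟩
      · exact Or.inr ⟨Or.inl (Reachable.refl _), Or.inr ⟨c, hc, ih.symm⟩⟩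
      · exact Or.inr ⟨Or.inl (Reachable.refl _), h2⟩
    · rcases ih with ih | ⟨-, h2⟩
      · exact Or.inr ⟨Or.inr ⟨a, ha, Reachable.refl _⟩, Or.inl ih.symm⟩
      · exact Or.inr ⟨Or.inr ⟨a, ha, Reachable.refl _⟩, h2⟩

lemma isAcyclic_sup_starAt_iff {G : SimpleGraph V} {v : V} {N : Finset V}
    (hv : ∀ u, ¬ G.Adj v u) (hvN : v ∉ N) :
    (G ⊔ starAt v N).IsAcyclic ↔ G.IsAcyclic ∧ Sep G N := by
  constructor
  · intro h
    refine ⟨h.anti le_sup_left, ?_⟩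
    intro x hx y hy hxy
    by_contra hne
    have hxv : v ≠ x := fun e => hvN (e ▸ hx)
    have hyv : v ≠ y := fun e => hvN (e ▸ hy)
    have hb := (isAcyclic_iff_forall_adj_isBridge.1 h) (v := v) (w := x)
      (Or.inr ⟨hxv, Or.inl ⟨rfl, hx⟩⟩)
    rw [isBridge_iff] at hb
    apply hb
    have h1 : ((G ⊔ starAt v N).deleteEdges {s(v, x)}).Adj v y := by
      rw [deleteEdges_adj]
      refine ⟨Or.inr ⟨hyv, Or.inl ⟨rfl, hy⟩⟩, ?_⟩
      simp only [Set.mem_singleton_iff, Sym2.eq_iff]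
      grind
    refine h1.reachable.trans (hxy.symm.mono ?_)
    intro a b hab
    rw [deleteEdges_adj]
    refine ⟨Or.inl hab, ?_⟩
    simp only [Set.mem_singleton_iff, Sym2.eq_iff]
    rintro (⟨rfl, rfl⟩ | ⟨rfl, rfl⟩)
    · exact hv _ hab
    · exact hv _ hab.symm
  · rintro ⟨hG, hS⟩
    -- every edge of the star, listed from the centre, is a bridge
    have key : ∀ x ∈ N, (G ⊔ starAt v N).IsBridge s(v, x) := by
      intro x hx hr
      have hxv : x ≠ v := fun e => hvN (e ▸ hx)
      have hle : (G ⊔ starAt v N).deleteEdges {s(v, x)} ≤ G ⊔ starAt v (N.erase x) := by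
        intro a b hab
        rw [deleteEdges_adj, sup_adj, starAt_adj] at hab
        rw [sup_adj, starAt_adj]
        simp only [Set.mem_singleton_iff, Sym2.eq_iff] at hab
        grind
      rcases reachable_sup_starAt (hr.mono hle) with h | ⟨-, h | ⟨y, hy, h⟩⟩
      · exact hxv (reachable_isolated hv h)
      · exact hxv (reachable_isolated hv h.symm)
      · exact (Finset.ne_of_mem_erase hy) (hS x hx y (Finset.mem_of_mem_erase hy) h).symm
    rw [isAcyclic_iff_forall_adj_isBridge]
    intro a b hab
    rw [sup_adj, starAt_adj] at hab
    rcases hab with hab | ⟨-, ⟨rfl, hb⟩ | ⟨rfl, ha⟩⟩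
    · rw [isBridge_iff]
      intro hr
      have hbr := (isAcyclic_iff_forall_adj_isBridge.1 hG) hab
      rw [isBridge_iff] at hbr
      have hle : (G ⊔ starAt v N).deleteEdges {s(a, b)} ≤
          G.deleteEdges {s(a, b)} ⊔ starAt v N := by
        intro c d hcd
        simp only [deleteEdges_adj, sup_adj] at hcd ⊢
        tauto
      have hav : a ≠ v := fun e => hv b (e ▸ hab)
      have hbv : b ≠ v := fun e => hv a (e ▸ hab.symm)
      have hle' : G.deleteEdges {s(a, b)} ≤ G := deleteEdges_le _
      rcases reachable_sup_starAt (hr.mono hle) with h | ⟨h | ⟨x, hx, h1⟩, h' | ⟨y, hy, h2⟩⟩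
      · exact hbr h
      · exact hav (reachable_isolated hv (h.mono hle').symm)
      · exact hav (reachable_isolated hv (h.mono hle').symm)
      · exact hbv (reachable_isolated hv (h'.mono hle').symm)
      · have : x = y := hS x hx y hy
          (((h1.mono hle').symm.trans hab.reachable).trans (h2.mono hle'))
        subst this
        exact hbr (h1.trans h2.symm)
    · exact key b hb
    · rw [Sym2.eq_swap]
      exact key a ha

lemma cliqueOn_mono {A B : Finset V} (h : A ⊆ B) : cliqueOn A ≤ cliqueOn B :=
  fun _ _ hab => ⟨hab.1, h hab.2.1, h hab.2.2⟩

lemma disjoint_cliqueOn_starAt {A N : Finset V} {v : V} (h : v ∉ A) :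
    Disjoint (cliqueOn A) (starAt v N) := by
  rw [disjoint_iff]
  ext a b
  simp only [inf_adj, cliqueOn_adj, starAt_adj, bot_adj]
  grind

variable [DecidableEq V]

/-- Attaching a vertex `v` to the neighbourhood `N` keeps a graph a forest in which the set
`R ∋ v` is separated exactly when the roots `R` without `v`, together with `N`, are separated
in the forest that is left after deleting `v`. -/
lemma sup_starAt_iff {G : SimpleGraph V} {v : V} {N R : Finset V}
    (hv : ∀ u, ¬ G.Adj v u) (hvR : v ∈ R) (hNR : Disjoint N R) :
    ((G ⊔ starAt v N).IsAcyclic ∧ Sep (G ⊔ starAt v N) R) ↔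
      G.IsAcyclic ∧ Sep G (R.erase v ∪ N) := by
  have hvN : v ∉ N := fun h => Finset.disjoint_left.1 hNR h hvR
  have hstar : ∀ x ∈ N, (G ⊔ starAt v N).Reachable v x := fun x hx =>
    Adj.reachable (Or.inr ⟨fun e => hvN (e ▸ hx), Or.inl ⟨rfl, hx⟩⟩)
  have hle : G ≤ G ⊔ starAt v N := le_sup_left
  rw [isAcyclic_sup_starAt_iff hv hvN]
  constructor
  · rintro ⟨⟨hG, hN⟩, hR⟩
    refine ⟨hG, ?_⟩
    have hmix : ∀ x ∈ R.erase v, ∀ y ∈ N, ¬ G.Reachable x y := by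
      intro x hx y hy h
      exact Finset.ne_of_mem_erase hx (hR x (Finset.mem_of_mem_erase hx) v hvR
        ((h.mono hle).trans (hstar y hy).symm))
    intro x hx y hy h
    rcases Finset.mem_union.1 hx with hx | hx <;> rcases Finset.mem_union.1 hy with hy | hy
    · exact hR x (Finset.mem_of_mem_erase hx) y (Finset.mem_of_mem_erase hy) (h.mono hle)
    · exact absurd h (hmix x hx y hy)
    · exact absurd h.symm (hmix y hy x hx)
    · exact hN x hx y hy h
  · rintro ⟨hG, hS⟩
    refine ⟨⟨hG, fun x hx y hy h => hS x (Finset.mem_union_right _ hx) y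
      (Finset.mem_union_right _ hy) h⟩, ?_⟩
    have hL : ∀ x ∈ R, (G.Reachable x v ∨ ∃ n ∈ N, G.Reachable x n) → x = v := by
      rintro x hx (h | ⟨n, hn, h⟩)
      · exact reachable_isolated hv h.symm
      · by_contra hne
        have := hS x (Finset.mem_union_left _ (Finset.mem_erase.2 ⟨hne, hx⟩)) n
          (Finset.mem_union_right _ hn) h
        subst this
        exact Finset.disjoint_left.1 hNR hn hx
    intro x hx y hy hxy
    rcases reachable_sup_starAt hxy with h | ⟨h1, h2⟩
    · by_cases hxv : x = v
      · subst hxv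
        exact (reachable_isolated hv h).symm
      · by_cases hyv : y = v
        · subst hyv
          exact reachable_isolated hv h.symm
        · exact hS x (Finset.mem_union_left _ (Finset.mem_erase.2 ⟨hxv, hx⟩)) y
            (Finset.mem_union_left _ (Finset.mem_erase.2 ⟨hyv, hy⟩)) h
    · rw [hL x hx h1, hL y hy h2]

lemma not_adj_of_le_cliqueOn_erase {A : Finset V} {v : V} {G : SimpleGraph V}
    (hG : G ≤ cliqueOn (A.erase v)) (u : V) : ¬ G.Adj v u := by
  intro h
  have := (hG h).2.1
  simp at this

/-- The blocker condition, stated for the part of `G` outside `S` as a graph on all of `V`. -/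
lemma isBlocker_iff [Fintype V] (G : SimpleGraph V) (S : Finset V) :
    IsBlocker G (S : Set V) ↔ (G ⊓ cliqueOn Sᶜ).IsAcyclic := by
  have hind : (G ⊓ cliqueOn Sᶜ).induce ((S : Set V)ᶜ) = G.induce ((S : Set V)ᶜ) := by
    ext a b
    have ha : (a : V) ∉ S := Finset.mem_coe.not.1 a.2
    have hb : (b : V) ∉ S := Finset.mem_coe.not.1 b.2
    simp only [comap_adj, Function.Embedding.subtype_apply, inf_adj, cliqueOn_adj,
      Finset.mem_compl]
    exact ⟨fun h => h.1, fun h => ⟨h, h.ne, ha, hb⟩⟩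
  unfold IsBlocker
  rw [← hind]
  constructor
  · intro h v w hw
    have hsupp : ∀ {a b : V} (p : (G ⊓ cliqueOn Sᶜ).Walk a b), a ∉ S → ∀ x ∈ p.support, x ∉ S := by
      intro a b p
      induction p with
      | nil => intro ha x hx; simp at hx; exact hx ▸ ha
      | cons hadj q ih =>
        intro ha x hx
        rw [Walk.support_cons, List.mem_cons] at hx
        rcases hx with rfl | hx
        · exact ha
        · exact ih (by simpa using hadj.2.2.2) x hx
    have hvS : v ∉ S := by
      cases w with
      | nil => exact absurd rfl hw.ne_nil
      | cons hadj q => simpa using hadj.2.2.1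
    have hall : ∀ x ∈ w.support, x ∈ ((S : Set V)ᶜ) := fun x hx => by
      simpa using hsupp w hvS x hx
    refine h (w.induce _ hall) ((Walk.isCycle_map_iff_of_injective
      (f := (SimpleGraph.Embedding.induce (G := G ⊓ cliqueOn Sᶜ) ((S : Set V)ᶜ)).toHom)
      Subtype.val_injective).1 ?_)
    rw [Walk.map_induce]
    exact hw
  · intro h
    exact h.induce _

end Forests

/-! ### Counting graphs piece by piece -/

section Counting

variable {V : Type*} [Fintype V]

/-- The spanning subgraphs of `Q`. -/
noncomputable def below (Q : SimpleGraph V) : Finset (SimpleGraph V) :=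
  Finset.univ.filter (fun G => G ≤ Q)

/-- The forests on the vertex set `A` in which the vertices of `R` lie in distinct components. -/
noncomputable def sepForests (A R : Finset V) : Finset (SimpleGraph V) :=
  Finset.univ.filter (fun G => G ≤ cliqueOn A ∧ G.IsAcyclic ∧ Sep G R)

/-- The neighbourhood of `v` as a `Finset`. -/
noncomputable def nbr (G : SimpleGraph V) (v : V) : Finset V :=
  Finset.univ.filter (fun u => G.Adj v u)

lemma mem_below {Q G : SimpleGraph V} : G ∈ below Q ↔ G ≤ Q := by simp [below]

lemma mem_sepForests {A R : Finset V} {G : SimpleGraph V} :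
    G ∈ sepForests A R ↔ G ≤ cliqueOn A ∧ G.IsAcyclic ∧ Sep G R := by simp [sepForests]

lemma mem_nbr {G : SimpleGraph V} {v u : V} : u ∈ nbr G v ↔ G.Adj v u := by simp [nbr]

lemma cliqueOn_univ : cliqueOn (Finset.univ : Finset V) = ⊤ := by
  ext a b
  simp [cliqueOn_adj]

section Decidable

variable [DecidableEq V]

lemma inf_cliqueOn_erase_sup {A : Finset V} {v : V} {G : SimpleGraph V} (hG : G ≤ cliqueOn A) :
    (G ⊓ cliqueOn (A.erase v)) ⊔ starAt v (nbr G v) = G := by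
  ext a b
  simp only [sup_adj, inf_adj, cliqueOn_adj, starAt_adj, mem_nbr, Finset.mem_erase]
  constructor
  · rintro (h | ⟨-, ⟨rfl, h⟩ | ⟨rfl, h⟩⟩)
    · exact h.1
    · exact h
    · exact h.symm
  · intro h
    have h1 := hG h
    rw [cliqueOn_adj] at h1
    by_cases ha : a = v
    · subst ha; exact Or.inr ⟨h1.1, Or.inl ⟨rfl, h⟩⟩
    · by_cases hb : b = v
      · subst hb; exact Or.inr ⟨h1.1, Or.inr ⟨rfl, h.symm⟩⟩
      · exact Or.inl ⟨h, h1.1, ⟨ha, h1.2.1⟩, ⟨hb, h1.2.2⟩⟩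

/-- The recursion obtained by deleting the root `v`: its neighbours become new roots. -/
lemma card_sepForests_rec {A R : Finset V} {v : V} (hRA : R ⊆ A) (hv : v ∈ R) :
    (sepForests A R).card =
      ∑ N ∈ (A \ R).powerset, (sepForests (A.erase v) (R.erase v ∪ N)).card := by
  rw [← Finset.card_sigma]
  refine Finset.card_nbij' (fun G => ⟨nbr G v, G ⊓ cliqueOn (A.erase v)⟩)
    (fun p => p.2 ⊔ starAt v p.1) ?_ ?_ ?_ ?_
  · intro G hG
    simp only [Finset.mem_coe, mem_sepForests] at hG
    obtain ⟨hGA, hac, hsep⟩ := hG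
    have hNR : Disjoint (nbr G v) R := by
      rw [Finset.disjoint_left]
      intro u hu huR
      have hadj := mem_nbr.1 hu
      exact hadj.ne (hsep v hv u huR hadj.reachable)
    have hNA : nbr G v ⊆ A := fun u hu => (hGA (mem_nbr.1 hu)).2.2
    simp only [Finset.coe_sigma, Set.mem_sigma_iff, Finset.mem_coe, Finset.mem_powerset,
      mem_sepForests]
    refine ⟨fun u hu => Finset.mem_sdiff.2 ⟨hNA hu, Finset.disjoint_left.1 hNR hu⟩,
      inf_le_right, ?_⟩
    rw [← sup_starAt_iff (not_adj_of_le_cliqueOn_erase (A := A) inf_le_right) hv hNR,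
      inf_cliqueOn_erase_sup hGA]
    exact ⟨hac, hsep⟩
  · rintro ⟨N, H⟩ hp
    simp only [Finset.coe_sigma, Set.mem_sigma_iff, Finset.mem_coe, Finset.mem_powerset,
      mem_sepForests] at hp ⊢
    obtain ⟨hN, hH, h⟩ := hp
    have hNR : Disjoint N R := Finset.disjoint_left.2 fun u hu => (Finset.mem_sdiff.1 (hN hu)).2
    refine ⟨sup_le (hH.trans (cliqueOn_mono (Finset.erase_subset _ _))) ?_,
      (sup_starAt_iff (not_adj_of_le_cliqueOn_erase hH) hv hNR).2 h⟩
    intro a b hab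
    rw [starAt_adj] at hab
    rw [cliqueOn_adj]
    have hNA : ∀ x ∈ N, x ∈ A := fun x hx => (Finset.mem_sdiff.1 (hN hx)).1
    rcases hab with ⟨h1, ⟨rfl, h2⟩ | ⟨rfl, h2⟩⟩
    · exact ⟨h1, hRA hv, hNA _ h2⟩
    · exact ⟨h1, hNA _ h2, hRA hv⟩
  · intro G hG
    simp only [Finset.mem_coe, mem_sepForests] at hG
    exact inf_cliqueOn_erase_sup hG.1
  · rintro ⟨N, H⟩ hp
    simp only [Finset.coe_sigma, Set.mem_sigma_iff, Finset.mem_coe, Finset.mem_powerset,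
      mem_sepForests] at hp
    obtain ⟨hN, hH, h⟩ := hp
    have hiso := not_adj_of_le_cliqueOn_erase hH
    have hvN : v ∉ N := fun h => (Finset.mem_sdiff.1 (hN h)).2 hv
    have e1 : nbr (H ⊔ starAt v N) v = N := by
      ext u
      simp only [mem_nbr, sup_adj, starAt_adj, hiso u, false_or]
      grind
    have e2 : (H ⊔ starAt v N) ⊓ cliqueOn (A.erase v) = H := by
      ext a b
      simp only [inf_adj, sup_adj, starAt_adj, cliqueOn_adj, Finset.mem_erase]
      constructor
      · rintro ⟨h1 | h1, h2⟩
        · exact h1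
        · grind
      · intro h1
        have := hH h1
        rw [cliqueOn_adj, Finset.mem_erase, Finset.mem_erase] at this
        exact ⟨Or.inl h1, this⟩
    simp only [e1, e2]

end Decidable

lemma sepForests_empty : (sepForests (∅ : Finset V) ∅).card = 1 := by
  rw [Finset.card_eq_one]
  refine ⟨⊥, ?_⟩
  ext G
  rw [mem_sepForests, Finset.mem_singleton]
  constructor
  · rintro ⟨h, -⟩
    ext a b
    simp only [bot_adj, iff_false]
    intro hab
    simpa using (h hab).2.1
  · rintro rfl
    exact ⟨bot_le, isAcyclic_bot, by intro x hx; simp at hx⟩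

lemma sepForests_singleton (A : Finset V) (v : V) : sepForests A {v} = sepForests A ∅ := by
  ext G
  simp only [mem_sepForests, Sep]
  simp

lemma card_below_sup {P Q : SimpleGraph V} (h : Disjoint P Q) :
    (below (P ⊔ Q)).card = (below P).card * (below Q).card := by
  rw [← Finset.card_product]
  refine Finset.card_nbij' (fun G => (G ⊓ P, G ⊓ Q)) (fun p => p.1 ⊔ p.2) ?_ ?_ ?_ ?_
  · intro G _
    simp [mem_below]
  · rintro ⟨H, K⟩ hp
    simp only [Finset.coe_product, Set.mem_prod, Finset.mem_coe, mem_below] at hp ⊢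
    exact sup_le_sup hp.1 hp.2
  · intro G hG
    simp only [Finset.mem_coe, mem_below] at hG
    simp only [← inf_sup_left]
    exact inf_eq_left.2 hG
  · rintro ⟨H, K⟩ hp
    simp only [Finset.coe_product, Set.mem_prod, Finset.mem_coe, mem_below] at hp
    obtain ⟨h1, h2⟩ := hp
    simp only [inf_sup_right, inf_eq_left.2 h1, inf_eq_left.2 h2,
      (h.mono_left h1).eq_bot, (h.symm.mono_left h2).eq_bot, sup_bot_eq, bot_sup_eq]

lemma nbr_starAt {v : V} {N : Finset V} (h : v ∉ N) : nbr (starAt v N) v = N := by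
  ext u
  simp only [mem_nbr, starAt_adj]
  grind

lemma card_below_starAt {v : V} {N : Finset V} (h : v ∉ N) :
    (below (starAt v N)).card = 2 ^ N.card := by
  rw [← Finset.card_powerset]
  refine Finset.card_nbij' (fun G => nbr G v) (fun M => starAt v M) ?_ ?_ ?_ ?_
  · intro G hG
    simp only [Finset.mem_coe, mem_below, Finset.mem_powerset] at hG ⊢
    intro u hu
    have := hG (mem_nbr.1 hu)
    rw [starAt_adj] at this
    grind
  · intro M hM
    simp only [Finset.mem_coe, mem_below, Finset.mem_powerset] at hM ⊢
    intro a b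
    simp only [starAt_adj]
    grind
  · intro G hG
    simp only [Finset.mem_coe, mem_below] at hG
    ext a b
    simp only [starAt_adj, mem_nbr]
    constructor
    · rintro ⟨-, ⟨rfl, h⟩ | ⟨rfl, h⟩⟩
      · exact h
      · exact h.symm
    · intro hab
      rcases hG hab with ⟨h1, ⟨rfl, -⟩ | ⟨rfl, -⟩⟩
      · exact ⟨h1, Or.inl ⟨rfl, hab⟩⟩
      · exact ⟨h1, Or.inr ⟨rfl, hab.symm⟩⟩
  · intro M hM
    simp only [Finset.mem_coe, Finset.mem_powerset] at hM
    exact nbr_starAt fun h' => h (hM h')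

lemma card_below_cliqueOn (A : Finset V) :
    (below (cliqueOn A)).card = 2 ^ (A.card.choose 2) := by
  induction A using Finset.induction_on with
  | empty =>
    have : below (cliqueOn (∅ : Finset V)) = {⊥} := by
      ext G
      rw [mem_below, Finset.mem_singleton, ← le_bot_iff]
      have : cliqueOn (∅ : Finset V) = ⊥ := by
        ext a b
        simp [cliqueOn_adj]
      rw [this]
    rw [this]
    simp
  | insert v A hv ih =>
    have : cliqueOn (insert v A) = cliqueOn A ⊔ starAt v A := by
      ext a b
      simp only [sup_adj, cliqueOn_adj, starAt_adj, Finset.mem_insert]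
      grind
    rw [this, card_below_sup (disjoint_cliqueOn_starAt hv), ih, card_below_starAt hv,
      Finset.card_insert_of_notMem hv, ← pow_add, Nat.choose_succ_succ' A.card 1, Nat.choose_one_right,
      add_comm]

lemma card_below_compl (A : Finset V) :
    (below (cliqueOn A)ᶜ).card * 2 ^ (A.card.choose 2) = 2 ^ ((Fintype.card V).choose 2) := by
  rw [← card_below_cliqueOn, mul_comm, ← card_below_sup disjoint_compl_right, sup_compl_eq_top,
    ← cliqueOn_univ, card_below_cliqueOn, Finset.card_univ]

/-- Graphs are determined by their part inside `P` and their part outside `P`. -/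
lemma card_filter_inf (P : SimpleGraph V) (p : SimpleGraph V → Prop) :
    (Finset.univ.filter (fun G => p (G ⊓ P))).card =
      ((below P).filter p).card * (below Pᶜ).card := by
  rw [← Finset.card_product]
  refine Finset.card_nbij' (fun G => (G ⊓ P, G ⊓ Pᶜ)) (fun p => p.1 ⊔ p.2) ?_ ?_ ?_ ?_
  · intro G hG
    simpa [mem_below] using hG
  · rintro ⟨H, K⟩ hp
    simp only [Finset.coe_product, Set.mem_prod, Finset.mem_coe, mem_below, Finset.mem_filter,
      Finset.mem_univ, true_and] at hp ⊢
    obtain ⟨⟨h1, h2⟩, h3⟩ := hp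
    have h4 : K ⊓ P = ⊥ := (disjoint_compl_left.mono_left h3).eq_bot
    rwa [inf_sup_right, inf_eq_left.2 h1, h4, sup_bot_eq]
  · intro G _
    simp only [← inf_sup_left, sup_compl_eq_top, inf_top_eq]
  · rintro ⟨H, K⟩ hp
    simp only [Finset.coe_product, Set.mem_prod, Finset.mem_coe, mem_below, Finset.mem_filter] at hp
    obtain ⟨⟨h1, -⟩, h3⟩ := hp
    have h4 : K ⊓ P = ⊥ := (disjoint_compl_left.mono_left h3).eq_bot
    have h5 : H ⊓ Pᶜ = ⊥ := (disjoint_compl_right.mono_left h1).eq_bot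
    simp only [inf_sup_right, inf_eq_left.2 h1, inf_eq_left.2 h3, h4, h5, sup_bot_eq, bot_sup_eq]

lemma filter_below_isAcyclic (A : Finset V) :
    (below (cliqueOn A)).filter (fun G => G.IsAcyclic) = sepForests A ∅ := by
  ext G
  simp [mem_below, mem_sepForests, Sep]

variable [DecidableEq V]

/-- The number of graphs for which `S` is a blocker. -/
lemma card_blocked (S : Finset V) :
    (Finset.univ.filter (fun G : SimpleGraph V => IsBlocker G (S : Set V))).card =
      (sepForests Sᶜ ∅).card * (below (cliqueOn Sᶜ)ᶜ).card := by
  rw [← filter_below_isAcyclic, ← card_filter_inf]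
  congr 1
  ext G
  simp [isBlocker_iff]

/-- Graphs blocked by `S` in which `s ∈ S` has few neighbours in a set `W` disjoint from `S`. -/
lemma card_few (S W : Finset V) (s : V) (hs : s ∈ S) (hW : W ⊆ Sᶜ) (d : ℕ) :
    (Finset.univ.filter (fun G : SimpleGraph V =>
        IsBlocker G (S : Set V) ∧ (nbr G s ∩ W).card ≤ d)).card * 2 ^ W.card ≤
      (sepForests Sᶜ ∅).card * (below (cliqueOn Sᶜ)ᶜ).card *
        (W.powerset.filter (fun N => N.card ≤ d)).card := by
  set K := cliqueOn Sᶜ with hK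
  set T := starAt s W with hT
  have hsW : s ∉ W := fun h => by simpa [hs] using hW h
  have hdis : Disjoint K T := disjoint_cliqueOn_starAt (by simpa using hs)
  have hM : (below Kᶜ).card = (below (K ⊔ T)ᶜ).card * 2 ^ W.card := by
    rw [← card_below_starAt hsW, ← card_below_sup]
    · congr 2
      rw [compl_sup, sup_comm, sup_inf_left, sup_compl_eq_top, inf_top_eq]
      exact (sup_eq_right.2 (le_compl_iff_disjoint_left.2 hdis)).symm
    · exact (disjoint_compl_left.mono_right le_sup_right)
  have hinj : (Finset.univ.filter (fun G : SimpleGraph V =>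
        IsBlocker G (S : Set V) ∧ (nbr G s ∩ W).card ≤ d)).card ≤
      ((sepForests Sᶜ ∅ ×ˢ W.powerset.filter (fun N => N.card ≤ d)) ×ˢ below (K ⊔ T)ᶜ).card := by
    refine Finset.card_le_card_of_injOn
      (fun G => ((G ⊓ K, nbr G s ∩ W), G ⊓ (K ⊔ T)ᶜ)) ?_ ?_
    · intro G hG
      simp only [Finset.coe_filter, Finset.mem_univ, true_and, Set.mem_ofPred_eq,
        isBlocker_iff] at hG
      simp only [Finset.coe_product, Set.mem_prod, Finset.mem_coe, mem_below, Finset.mem_filter,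
        mem_sepForests, Finset.mem_powerset]
      exact ⟨⟨⟨inf_le_right, hG.1, by intro x hx; simp at hx⟩, Finset.inter_subset_right, hG.2⟩,
        inf_le_right⟩
    · intro G _ G' _ h
      simp only [Prod.mk.injEq] at h
      obtain ⟨⟨h1, h2⟩, h3⟩ := h
      have hrec : ∀ G : SimpleGraph V,
          G = (G ⊓ K) ⊔ starAt s (nbr G s ∩ W) ⊔ (G ⊓ (K ⊔ T)ᶜ) := by
        intro G
        have : starAt s (nbr G s ∩ W) = G ⊓ T := by
          ext a b
          simp only [starAt_adj, inf_adj, hT, Finset.mem_inter, mem_nbr]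
          constructor
          · rintro ⟨h, ⟨rfl, h1, h2⟩ | ⟨rfl, h1, h2⟩⟩
            · exact ⟨h1, h, Or.inl ⟨rfl, h2⟩⟩
            · exact ⟨h1.symm, h, Or.inr ⟨rfl, h2⟩⟩
          · rintro ⟨h, hne, ⟨rfl, hw⟩ | ⟨rfl, hw⟩⟩
            · exact ⟨hne, Or.inl ⟨rfl, h, hw⟩⟩
            · exact ⟨hne, Or.inr ⟨rfl, h.symm, hw⟩⟩
        rw [this, ← inf_sup_left, ← inf_sup_left, sup_compl_eq_top, inf_top_eq]
      rw [hrec G, hrec G', h1, h2, h3]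
  rw [Finset.card_product, Finset.card_product] at hinj
  calc _ ≤ _ := Nat.mul_le_mul_right _ hinj
    _ = _ := by rw [hM]; ring

/-- Graphs blocked by `S'` in which `s ∉ S'` has many neighbours in a set `W` disjoint from `S'`:
these neighbours lie in distinct components of the forest induced on `W`. -/
lemma card_many (S' W : Finset V) (s : V) (hs : s ∉ S') (hsW : s ∉ W) (hW : W ⊆ S'ᶜ) (d : ℕ) :
    (Finset.univ.filter (fun G : SimpleGraph V =>
        IsBlocker G (S' : Set V) ∧ d < (nbr G s ∩ W).card)).card ≤
      (∑ N ∈ W.powerset.filter (fun N => d < N.card), (sepForests W N).card) *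
        (below (cliqueOn W)ᶜ).card := by
  rw [← Finset.card_sigma, ← Finset.card_product]
  refine Finset.card_le_card_of_injOn
    (fun G => (⟨nbr G s ∩ W, G ⊓ cliqueOn W⟩, G ⊓ (cliqueOn W)ᶜ)) ?_ ?_
  · intro G hG
    simp only [Finset.coe_filter, Finset.mem_univ, true_and, Set.mem_ofPred_eq,
      isBlocker_iff] at hG
    obtain ⟨hac, hd⟩ := hG
    simp only [Finset.coe_product, Set.mem_prod, Finset.coe_sigma, Set.mem_sigma_iff,
      Finset.mem_coe, mem_below, Finset.mem_filter, mem_sepForests, Finset.mem_powerset]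
    refine ⟨⟨⟨Finset.inter_subset_right, hd⟩, inf_le_right, ?_⟩, inf_le_right⟩
    rw [← isAcyclic_sup_starAt_iff (v := s)]
    · refine hac.anti ?_
      refine sup_le (inf_le_inf_left _ (cliqueOn_mono hW)) ?_
      intro a b hab
      have hsS : s ∈ S'ᶜ := by simpa using hs
      rcases hab with ⟨h1, ⟨rfl, h2⟩ | ⟨rfl, h2⟩⟩
      · rw [Finset.mem_inter, mem_nbr] at h2
        exact ⟨h2.1, h1, hsS, hW h2.2⟩
      · rw [Finset.mem_inter, mem_nbr] at h2
        exact ⟨h2.1.symm, h1, hW h2.2, hsS⟩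
    · intro u hu
      exact hsW hu.2.2.1
    · simp [hsW]
  · intro G _ G' _ h
    simp only [Prod.mk.injEq, Sigma.mk.injEq, heq_eq_eq] at h
    have hrec : ∀ G : SimpleGraph V, (G ⊓ cliqueOn W) ⊔ (G ⊓ (cliqueOn W)ᶜ) = G := fun G => by
      rw [← inf_sup_left, sup_compl_eq_top, inf_top_eq]
    rw [← hrec G, ← hrec G', h.1.2, h.2]

end Counting

/-! ### The forest numbers as power series coefficients -/

section Numbers

open PowerSeries
open scoped Nat

/-- The coefficients of `exp (-X ^ 2 / 2)`. -/
noncomputable def gaussCoeff (i : ℕ) : ℝ :=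
  if Even i then (-1 / 2) ^ (i / 2) / ((i / 2)! : ℝ) else 0

/-- The power series `(1 - X) * exp (x * X - X ^ 2 / 2)`. -/
noncomputable def forestSeries (x : ℝ) : PowerSeries ℝ :=
  (1 - X) * (rescale x (PowerSeries.exp ℝ) * PowerSeries.mk gaussCoeff)

/-- The number of forests on `n` vertices in which `n - m` given vertices lie in distinct
components (for `m ≤ n`), as `m!` times a coefficient of `forestSeries (n + 1)`. -/
noncomputable def forestNum (n m : ℕ) : ℝ := (m ! : ℝ) * coeff m (forestSeries (n + 1))

lemma gaussCoeff_rec (i : ℕ) : gaussCoeff (i + 2) * (i + 2) = - gaussCoeff i := by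
  unfold gaussCoeff
  by_cases h : Even i
  · obtain ⟨q, rfl⟩ := h
    have e1 : (q + q + 2) / 2 = q + 1 := by omega
    have e2 : (q + q) / 2 = q := by omega
    have h1 : Even (q + q + 2) := ⟨q + 1, by omega⟩
    have h2 : Even (q + q) := ⟨q, rfl⟩
    rw [if_pos h1, if_pos h2, e1, e2, Nat.factorial_succ]
    push_cast
    have : (q ! : ℝ) ≠ 0 := by positivity
    field_simp
    ring
  · have h1 : ¬ Even (i + 2) := by rwa [Nat.even_add_one, Nat.even_add_one, not_not]
    rw [if_neg h1, if_neg h]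
    simp

lemma derivative_gauss :
    PowerSeries.derivative ℝ (PowerSeries.mk gaussCoeff) = - (X * PowerSeries.mk gaussCoeff) := by
  ext n
  rw [coeff_derivative, coeff_mk, map_neg]
  cases n with
  | zero => simp [gaussCoeff]
  | succ n =>
    rw [coeff_succ_X_mul, coeff_mk, ← gaussCoeff_rec]
    push_cast
    ring

lemma derivative_rescale_exp (x : ℝ) :
    PowerSeries.derivative ℝ (rescale x (PowerSeries.exp ℝ)) =
      PowerSeries.C x * rescale x (PowerSeries.exp ℝ) := by
  ext n
  rw [coeff_derivative, coeff_C_mul, coeff_rescale, coeff_rescale, coeff_exp, coeff_exp,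
    Nat.factorial_succ]
  have h1 : (n ! : ℝ) ≠ 0 := by positivity
  have h2 : ((n : ℝ) + 1) ≠ 0 := by positivity
  simp only [one_div, eq_ratCast]
  push_cast
  field_simp
  ring

/-- A forest on `n + 1` vertices is counted whether or not one vertex is declared a root. -/
lemma forestNum_diag (n : ℕ) : forestNum (n + 1) (n + 1) = forestNum (n + 1) n := by
  unfold forestNum forestSeries
  set h : PowerSeries ℝ := rescale (((n + 1 : ℕ) : ℝ) + 1) (PowerSeries.exp ℝ) *
    PowerSeries.mk gaussCoeff with hh
  have hd : PowerSeries.derivative ℝ h = PowerSeries.C (((n + 1 : ℕ) : ℝ) + 1) * h - X * h := by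
    rw [hh, Derivation.leibniz, derivative_gauss, derivative_rescale_exp]
    simp only [smul_eq_mul]
    ring
  have hc : coeff (n + 1) h * ((n : ℝ) + 1) =
      (((n + 1 : ℕ) : ℝ) + 1) * coeff n h - coeff n (X * h) := by
    rw [← coeff_derivative, hd, map_sub, coeff_C_mul]
  rw [sub_mul, one_mul, map_sub, map_sub, coeff_succ_X_mul, Nat.factorial_succ]
  push_cast at hc ⊢
  linear_combination (n ! : ℝ) * hc

/-- Summing over the set of neighbours of a deleted root. -/
lemma forestNum_rec (n m : ℕ) :
    forestNum (n + 1) m = ∑ j ∈ Finset.range (m + 1), (m.choose j : ℝ) * forestNum n (m - j) := by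
  have hs : forestSeries (((n + 1 : ℕ) : ℝ) + 1) = PowerSeries.exp ℝ * forestSeries (n + 1) := by
    unfold forestSeries
    have := exp_mul_exp_eq_exp_add (1 : ℝ) ((n : ℝ) + 1)
    rw [rescale_one, RingHom.id_apply] at this
    push_cast
    rw [add_comm ((n : ℝ) + 1) 1, ← this]
    ring
  unfold forestNum
  rw [hs, coeff_mul, Finset.Nat.sum_antidiagonal_eq_sum_range_succ_mk, Finset.mul_sum]
  refine Finset.sum_congr rfl fun j hj => ?_
  have hj' : j ≤ m := by simpa [Nat.lt_succ_iff] using hj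
  rw [coeff_exp, ← Nat.choose_mul_factorial_mul_factorial hj']
  have h1 : (j ! : ℝ) ≠ 0 := by positivity
  simp only [one_div, eq_ratCast]
  push_cast
  field_simp

lemma forestNum_zero_right (n : ℕ) : forestNum n 0 = 1 := by
  have h : coeff 0 (rescale ((n : ℝ) + 1) (PowerSeries.exp ℝ)) = 1 := by
    rw [coeff_rescale, coeff_exp]
    simp
  rw [coeff_zero_eq_constantCoeff_apply] at h
  simp [forestNum, forestSeries, gaussCoeff, h]

/-- The bound obtained from the recursion by the binomial theorem. -/
lemma forestNum_le (n m : ℕ) (hm : m ≤ n) : forestNum n m ≤ ((n : ℝ) + 1) ^ m := by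
  induction n generalizing m with
  | zero =>
    obtain rfl : m = 0 := by omega
    simp [forestNum_zero_right]
  | succ n ih =>
    have key : ∀ m ≤ n, forestNum (n + 1) m ≤ (((n + 1 : ℕ) : ℝ) + 1) ^ m := by
      intro m hm
      rw [forestNum_rec, add_comm (((n + 1 : ℕ) : ℝ)) 1, add_pow]
      refine Finset.sum_le_sum fun j _ => ?_
      have := ih (m - j) (by omega)
      push_cast
      rw [one_pow, one_mul, mul_comm]
      exact mul_le_mul_of_nonneg_right this (by positivity)
    rcases Nat.lt_or_ge n m with h | h
    · obtain rfl : m = n + 1 := by omega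
      rw [forestNum_diag]
      refine (key n le_rfl).trans (pow_le_pow_right₀ ?_ (by omega))
      have : (0 : ℝ) ≤ ((n + 1 : ℕ) : ℝ) := by positivity
      linarith
    · exact key m h

lemma coeff_one_sub_X_mul_exp (x : ℝ) (hx : x ≠ 0) (p : ℕ) :
    coeff p ((1 - X) * rescale x (PowerSeries.exp ℝ)) = x ^ p * (x - p) / ((p ! : ℝ) * x) := by
  rw [sub_mul, one_mul, map_sub, coeff_rescale, coeff_exp]
  cases p with
  | zero => simp [hx]
  | succ p =>
    rw [coeff_succ_X_mul, coeff_rescale, coeff_exp, Nat.factorial_succ]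
    have h1 : (p ! : ℝ) ≠ 0 := by positivity
    have h2 : ((p : ℝ) + 1) ≠ 0 := by positivity
    simp only [one_div, eq_ratCast]
    push_cast
    field_simp
    ring

lemma forestNum_explicit (m : ℕ) :
    forestNum (m + 1) m * ((m : ℝ) + 2) / ((m : ℝ) + 2) ^ m =
      ∑ i ∈ Finset.range (m + 1),
        gaussCoeff i * (2 + i) * ((m.descFactorial i : ℝ) / ((m : ℝ) + 2) ^ i) := by
  have hx : ((m : ℝ) + 2) ≠ 0 := by positivity
  have hs : forestSeries (((m + 1 : ℕ) : ℝ) + 1) =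
      PowerSeries.mk gaussCoeff * ((1 - X) * rescale ((m : ℝ) + 2) (PowerSeries.exp ℝ)) := by
    unfold forestSeries
    have : ((m + 1 : ℕ) : ℝ) + 1 = (m : ℝ) + 2 := by push_cast; ring
    rw [this]
    ring
  unfold forestNum
  rw [hs, coeff_mul, Finset.Nat.sum_antidiagonal_eq_sum_range_succ_mk, Finset.mul_sum,
    Finset.sum_mul, Finset.sum_div]
  refine Finset.sum_congr rfl fun i hi => ?_
  have hi' : i ≤ m := by simpa [Nat.lt_succ_iff] using hi
  rw [coeff_one_sub_X_mul_exp _ hx, coeff_mk, ← Nat.factorial_mul_descFactorial hi',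
    Nat.cast_sub hi']
  have h1 : ((m - i)! : ℝ) ≠ 0 := by positivity
  have h3 : ((m : ℝ) + 2) ^ m = ((m : ℝ) + 2) ^ (m - i) * ((m : ℝ) + 2) ^ i := by
    rw [← pow_add, Nat.sub_add_cancel hi']
  rw [h3]
  push_cast
  field_simp
  ring

lemma hasSum_gauss :
    HasSum (fun i : ℕ => gaussCoeff i * (2 + i)) (Real.exp (-1 / 2)) ∧
      Summable (fun i : ℕ => |gaussCoeff i| * (2 + i)) := by
  have hinj : Function.Injective (fun q : ℕ => 2 * q) := fun a b h => by simpa using h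
  have hval : ∀ q : ℕ, gaussCoeff (2 * q) = (-1 / 2) ^ q / (q ! : ℝ) := by
    intro q
    unfold gaussCoeff
    rw [if_pos (even_two_mul q), Nat.mul_div_cancel_left q two_pos]
  have hodd : ∀ i, i ∉ Set.range (fun q : ℕ => 2 * q) → gaussCoeff i = 0 := by
    intro i hi
    unfold gaussCoeff
    rw [if_neg]
    rintro ⟨q, rfl⟩
    exact hi ⟨q, by simp only; omega⟩
  have hexp : ∀ y : ℝ, HasSum (fun q : ℕ => y ^ q / (q ! : ℝ)) (Real.exp y) := by
    intro y
    rw [Real.exp_eq_exp_ℝ]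
    exact NormedSpace.expSeries_div_hasSum_exp y
  have hexp' : ∀ y : ℝ, HasSum (fun q : ℕ => y ^ q / (q ! : ℝ) * (2 + (2 * q : ℕ)))
      (Real.exp y * (2 + 2 * y)) := by
    intro y
    have h1 : HasSum (fun q : ℕ => y ^ q / (q ! : ℝ) * q) (Real.exp y * y) := by
      rw [← hasSum_nat_add_iff' 1]
      simp only [Finset.range_one, Finset.sum_singleton, Nat.cast_zero, mul_zero, sub_zero]
      refine ((hexp y).mul_right y).congr_fun ?_
      intro q
      rw [Nat.factorial_succ]
      have h1 : (q ! : ℝ) ≠ 0 := by positivity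
      have h2 : ((q : ℝ) + 1) ≠ 0 := by positivity
      push_cast
      field_simp
      ring
    have h2 := ((hexp y).mul_right 2).add (h1.mul_right 2)
    have h3 : Real.exp y * (2 + 2 * y) = Real.exp y * 2 + Real.exp y * y * 2 := by ring
    rw [h3]
    refine h2.congr_fun fun q => ?_
    push_cast
    ring
  constructor
  · rw [← hinj.hasSum_iff]
    · convert hexp' (-1 / 2) using 1
      · ext q
        simp only [Function.comp_apply, hval]
      · ring
    · intro i hi
      rw [hodd i hi, zero_mul]
  · rw [← hinj.summable_iff]
    · convert (hexp' (1 / 2)).summable using 1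
      ext q
      simp only [Function.comp_apply, hval, abs_div, abs_pow, Nat.abs_cast]
      norm_num [abs_of_pos]
    · intro i hi
      rw [hodd i hi, abs_zero, zero_mul]

/-- `forestNum (n + 1) (n + 1) = forestNum (n + 1) n` grows like `(n + 2) ^ (n - 1) / √e`. -/
lemma tendsto_forestNum :
    Tendsto (fun m : ℕ => forestNum (m + 1) m * ((m : ℝ) + 2) / ((m : ℝ) + 2) ^ m) atTop
      (nhds (Real.exp (-1 / 2))) := by
  have h1 : ∀ m : ℕ, forestNum (m + 1) m * ((m : ℝ) + 2) / ((m : ℝ) + 2) ^ m =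
      ∑' i : ℕ, gaussCoeff i * (2 + i) * ((m.descFactorial i : ℝ) / ((m : ℝ) + 2) ^ i) := by
    intro m
    rw [forestNum_explicit, tsum_eq_sum]
    intro i hi
    have : m < i := by simpa [Nat.lt_succ_iff] using hi
    rw [Nat.descFactorial_of_lt this]
    simp
  simp_rw [h1]
  rw [← hasSum_gauss.1.tsum_eq]
  refine tendsto_tsum_of_dominated_convergence hasSum_gauss.2 ?_ ?_
  · intro i
    have hlim : Tendsto (fun m : ℕ => (m.descFactorial i : ℝ) / ((m : ℝ) + 2) ^ i) atTop
        (nhds 1) := by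
      have hlow : Tendsto (fun m : ℕ => (1 - ((i : ℝ) + 1) / ((m : ℝ) + 2)) ^ i) atTop
          (nhds 1) := by
        have : Tendsto (fun m : ℕ => ((i : ℝ) + 1) / ((m : ℝ) + 2)) atTop (nhds 0) :=
          tendsto_const_nhds.div_atTop
            (tendsto_atTop_add_const_right _ _ tendsto_natCast_atTop_atTop)
        simpa using ((tendsto_const_nhds (x := (1 : ℝ))).sub this).pow i
      refine tendsto_of_tendsto_of_tendsto_of_le_of_le' hlow tendsto_const_nhds ?_ ?_
      · filter_upwards [eventually_ge_atTop i] with m hm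
        have hx : (0 : ℝ) < (m : ℝ) + 2 := by positivity
        have := Nat.pow_sub_le_descFactorial m i
        have h2 : ((m + 1 - i : ℕ) : ℝ) ^ i ≤ (m.descFactorial i : ℝ) := by exact_mod_cast this
        rw [Nat.cast_sub (by omega)] at h2
        rw [le_div_iff₀ (by positivity), ← mul_pow]
        refine le_trans (le_of_eq ?_) h2
        congr 1
        push_cast
        field_simp
        ring
      · refine Eventually.of_forall fun m => ?_
        rw [div_le_one (by positivity)]
        have : (m.descFactorial i : ℝ) ≤ (m : ℝ) ^ i := by
          exact_mod_cast Nat.descFactorial_le_pow m i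
        refine this.trans (pow_le_pow_left₀ (by positivity) (by linarith) i)
    simpa using hlim.const_mul (gaussCoeff i * (2 + i))
  · refine Eventually.of_forall fun m i => ?_
    rw [norm_mul, norm_mul, Real.norm_eq_abs, Real.norm_eq_abs, Real.norm_eq_abs]
    have h2 : |(2 : ℝ) + i| = 2 + i := abs_of_pos (by positivity)
    have h3 : |(m.descFactorial i : ℝ) / ((m : ℝ) + 2) ^ i| ≤ 1 := by
      rw [abs_of_nonneg (by positivity), div_le_one (by positivity)]
      have : (m.descFactorial i : ℝ) ≤ (m : ℝ) ^ i := by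
        exact_mod_cast Nat.descFactorial_le_pow m i
      refine this.trans (pow_le_pow_left₀ (by positivity) (by linarith) i)
    rw [h2]
    exact mul_le_of_le_one_right (by positivity) h3

end Numbers

/-! ### Labelled forests -/

section ForestCount

/-- The recursion for `sepForests` by deletion of a root is the one satisfied by `forestNum`. -/
lemma card_sepForests {V : Type*} [Fintype V] [DecidableEq V] (A R : Finset V) (hRA : R ⊆ A) :
    ((sepForests A R).card : ℝ) = forestNum A.card (A.card - R.card) := by
  induction hn : A.card generalizing A R with
  | zero =>
    obtain rfl : A = ∅ := Finset.card_eq_zero.1 hn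
    obtain rfl : R = ∅ := Finset.subset_empty.1 hRA
    rw [sepForests_empty]
    simp [forestNum_zero_right]
  | succ n ih =>
    have key : ∀ R ⊆ A, R.Nonempty →
        ((sepForests A R).card : ℝ) = forestNum (n + 1) (n + 1 - R.card) := by
      rintro R hRA ⟨v, hv⟩
      rw [card_sepForests_rec hRA hv, forestNum_rec]
      push_cast
      have hcR : 0 < R.card := Finset.card_pos.2 ⟨v, hv⟩
      have hcard : (A \ R).card = n + 1 - R.card := by rw [Finset.card_sdiff_of_subset hRA, hn]
      have : ∀ N ∈ (A \ R).powerset,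
          ((sepForests (A.erase v) (R.erase v ∪ N)).card : ℝ) =
            forestNum n (n + 1 - R.card - N.card) := by
        intro N hN
        rw [Finset.mem_powerset] at hN
        have hdis : Disjoint (R.erase v) N := by
          rw [Finset.disjoint_right]
          intro u hu hu'
          exact (Finset.mem_sdiff.1 (hN hu)).2 (Finset.mem_of_mem_erase hu')
        rw [ih]
        · congr 1
          rw [Finset.card_union_of_disjoint hdis, Finset.card_erase_of_mem hv]
          omega
        · refine Finset.union_subset (Finset.erase_subset_erase _ hRA) ?_
          intro u hu
          have := Finset.mem_sdiff.1 (hN hu)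
          exact Finset.mem_erase.2 ⟨fun e => this.2 (e ▸ hv), this.1⟩
        · rw [Finset.card_erase_of_mem (hRA hv), hn]
          rfl
      rw [Finset.sum_congr rfl this,
        Finset.sum_powerset_apply_card (fun j => forestNum n (n + 1 - R.card - j)), hcard]
      simp only [nsmul_eq_mul]
    rcases R.eq_empty_or_nonempty with rfl | hR
    · obtain ⟨v, hv⟩ : A.Nonempty := Finset.card_pos.1 (by omega)
      rw [← sepForests_singleton A v, key {v} (by simpa using hv) ⟨v, by simp⟩]
      simp only [Finset.card_singleton, Nat.add_sub_cancel, Finset.card_empty, Nat.sub_zero]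
      exact (forestNum_diag n).symm
    · exact key R hRA hR

lemma forestCount_eq (n : ℕ) : (forestCount n : ℝ) = forestNum n n := by
  have h := card_sepForests (Finset.univ : Finset (Fin n)) ∅ (by simp)
  rw [Finset.card_univ, Fintype.card_fin, Finset.card_empty, Nat.sub_zero] at h
  rw [← h]
  congr 1
  unfold forestCount
  rw [Nat.card_eq_fintype_card, Fintype.card_subtype]
  congr 1
  ext G
  simp [mem_sepForests, cliqueOn_univ, Sep]

lemma forestCount_pos (n : ℕ) : (0 : ℝ) < forestCount n := by
  have : 0 < forestCount n := by
    unfold forestCount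
    rw [Nat.card_pos_iff]
    exact ⟨⟨⟨⊥, isAcyclic_bot⟩⟩, inferInstance⟩
  exact_mod_cast this

lemma tendsto_forestCount :
    Tendsto (fun m : ℕ => (forestCount (m + 1) : ℝ) * ((m : ℝ) + 2) / ((m : ℝ) + 2) ^ m) atTop
      (nhds (Real.exp (-1 / 2))) := by
  refine tendsto_forestNum.congr fun m => ?_
  rw [forestCount_eq, forestNum_diag]

/-- Labelled forests have the smooth growth constant `e`. -/
lemma tendsto_forestCount_ratio :
    Tendsto (fun m : ℕ => ((m : ℝ) + 1) * forestCount m / forestCount (m + 1)) atTop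
      (nhds (Real.exp (-1))) := by
  rw [← tendsto_add_atTop_iff_nat 1]
  set g : ℕ → ℝ := fun m => (forestCount (m + 1) : ℝ) * ((m : ℝ) + 2) / ((m : ℝ) + 2) ^ m with hg
  have hlim : Tendsto g atTop (nhds (Real.exp (-1 / 2))) := tendsto_forestCount
  have hlim' : Tendsto (fun m => g (m + 1)) atTop (nhds (Real.exp (-1 / 2))) :=
    (tendsto_add_atTop_iff_nat 1).2 hlim
  have hq : Tendsto (fun m => g m / g (m + 1)) atTop (nhds 1) := by
    have := hlim.div hlim' (Real.exp_pos _).ne'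
    rwa [div_self (Real.exp_pos _).ne'] at this
  have he : Tendsto (fun m : ℕ => (1 + (-1 / ((m : ℝ) + 3))) ^ m) atTop
      (nhds (Real.exp (-1))) := by
    refine Real.tendsto_one_add_pow_exp_of_tendsto ?_
    have h0 : Tendsto (fun m : ℕ => (3 : ℝ) / ((m : ℝ) + 3)) atTop (nhds 0) :=
      tendsto_const_nhds.div_atTop
        (tendsto_atTop_add_const_right _ _ tendsto_natCast_atTop_atTop)
    have h1 : Tendsto (fun m : ℕ => -1 + (3 : ℝ) / ((m : ℝ) + 3)) atTop (nhds (-1)) := by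
      simpa using (tendsto_const_nhds (x := (-1 : ℝ))).add h0
    refine h1.congr fun m => ?_
    have : (m : ℝ) + 3 ≠ 0 := by positivity
    field_simp
    ring
  have := hq.mul he
  rw [one_mul] at this
  refine this.congr fun m => ?_
  have hf := (forestCount_pos (m + 1 + 1)).ne'
  have e1 : (1 + (-1 / ((m : ℝ) + 3))) = ((m : ℝ) + 2) / ((m : ℝ) + 3) := by
    have : (m : ℝ) + 3 ≠ 0 := by positivity
    field_simp
    ring
  have h2 : (m : ℝ) + 2 ≠ 0 := by positivity
  have h3 : (m : ℝ) + 3 ≠ 0 := by positivity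
  have e2 : ((m + 1 : ℕ) : ℝ) + 2 = (m : ℝ) + 3 := by push_cast; ring
  have e3 : ((m + 1 : ℕ) : ℝ) + 1 = (m : ℝ) + 2 := by push_cast; ring
  simp only [hg, e1, e2, e3, div_pow]
  rw [pow_succ ((m : ℝ) + 3) m]
  field_simp

lemma tendsto_descFactorial_mul_forestCount (k : ℕ) :
    Tendsto (fun m : ℕ => ((m + k).descFactorial k : ℝ) * forestCount m / forestCount (m + k))
      atTop (nhds (Real.exp (-1) ^ k)) := by
  induction k with
  | zero =>
    simp only [Nat.descFactorial_zero, Nat.cast_one, one_mul, add_zero, pow_zero]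
    refine tendsto_const_nhds.congr fun m => ?_
    rw [div_self (forestCount_pos m).ne']
  | succ k ih =>
    have h := ((tendsto_add_atTop_iff_nat k).2 tendsto_forestCount_ratio).mul ih
    rw [pow_succ, mul_comm (Real.exp (-1) ^ k)]
    refine h.congr fun m => ?_
    have h1 := (forestCount_pos (m + k)).ne'
    have h2 := (forestCount_pos (m + k + 1)).ne'
    rw [← add_assoc, Nat.succ_descFactorial_succ]
    push_cast
    field_simp

end ForestCount

/-! ### The number of blocked graphs -/

section Assembly

lemma choose_two_identity (m k : ℕ) :
    (m + k).choose 2 + k * (k + 1) / 2 = m.choose 2 + k * (m + k) := by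
  induction k with
  | zero => simp
  | succ k ih =>
    have h1 : (m + (k + 1)).choose 2 = (m + k) + (m + k).choose 2 := by
      rw [← add_assoc, Nat.choose_succ_succ' (m + k) 1, Nat.choose_one_right]
    have h2 : (k + 1) * (k + 1 + 1) / 2 = k * (k + 1) / 2 + (k + 1) := by
      rw [show (k + 1) * (k + 1 + 1) = k * (k + 1) + (k + 1) * 2 by ring,
        Nat.add_mul_div_right _ _ two_pos]
    rw [h1, h2]
    linarith

lemma card_below_compl' {n : ℕ} (A : Finset (Fin n)) (k : ℕ) (hA : A.card + k = n) :
    (below (cliqueOn A)ᶜ).card * 2 ^ (k * (k + 1) / 2) = 2 ^ (k * n) := by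
  have h := card_below_compl A
  rw [Fintype.card_fin] at h
  have h2 := choose_two_identity A.card k
  rw [hA] at h2
  have hpos : 0 < 2 ^ (A.card.choose 2) := by positivity
  refine Nat.eq_of_mul_eq_mul_right hpos ?_
  rw [mul_right_comm, h, ← pow_add, ← pow_add, h2, add_comm]

/-- The number of forests on the complement of a `k`-set. -/
lemma card_sepForests_compl {n k : ℕ} (S : Finset (Fin n)) (hS : S.card = k) :
    (sepForests Sᶜ ∅).card = forestCount (n - k) := by
  have h := card_sepForests Sᶜ ∅ (by simp)
  rw [Finset.card_compl, Fintype.card_fin, hS, Finset.card_empty, Nat.sub_zero,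
    ← forestCount_eq] at h
  exact_mod_cast h

lemma card_powerset_filter_le {α : Type*} (W : Finset α) (d : ℕ) :
    ((W.powerset.filter (fun N => N.card ≤ d)).card : ℝ) ≤ 4 ^ d * (5 / 4) ^ W.card := by
  have h := Finset.sum_pow_mul_eq_add_pow (1 / 4 : ℝ) 1 W
  have e : (1 / 4 + 1 : ℝ) = 5 / 4 := by norm_num
  rw [e] at h
  rw [← h, Finset.mul_sum, Finset.card_eq_sum_ones, Nat.cast_sum]
  refine (Finset.sum_le_sum fun N hN => ?_).trans
    (Finset.sum_le_sum_of_subset_of_nonneg (Finset.filter_subset _ _) fun _ _ _ => by positivity)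
  have hc := (Finset.mem_filter.1 hN).2
  rw [one_pow, mul_one, div_pow, one_pow, Nat.cast_one, mul_one_div, le_div_iff₀ (by positivity),
    one_mul]
  exact pow_le_pow_right₀ (by norm_num) hc

/-- Few graphs have two different blockers `S` and `S'`.  The two terms count the graphs in which
some `s ∈ S \ S'` has at most, respectively more than, `n / 8` neighbours outside `S ∪ S'`. -/
lemma card_two_blockers {n k : ℕ} (S S' : Finset (Fin n)) (hS : S.card = k) (hS' : S'.card = k)
    (hne : S ≠ S') :
    ((Finset.univ.filter (fun G : SimpleGraph (Fin n) =>
        IsBlocker G (S : Set (Fin n)) ∧ IsBlocker G (S' : Set (Fin n)))).card : ℝ) ≤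
      forestCount (n - k) * (below (cliqueOn Sᶜ)ᶜ).card * (4 ^ k * (3 / 4) ^ n) +
        2 ^ n * ((n : ℝ) + 1) ^ (n - n / 8) * 2 ^ (2 * k * n) := by
  obtain ⟨s, hs, hs'⟩ : ∃ s ∈ S, s ∉ S' := by
    by_contra! h
    exact hne (Finset.eq_of_subset_of_card_le h (by omega))
  set W := (S ∪ S')ᶜ with hW
  set d := n / 8 with hd
  have hWS : W ⊆ Sᶜ := Finset.compl_subset_compl.2 Finset.subset_union_left
  have hWS' : W ⊆ S'ᶜ := Finset.compl_subset_compl.2 Finset.subset_union_right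
  have hsW : s ∉ W := by simp [hW, hs]
  have hWcard : W.card + (S ∪ S').card = n := by
    rw [hW, Finset.card_compl_add_card, Fintype.card_fin]
  have hU : (S ∪ S').card ≤ 2 * k := (Finset.card_union_le _ _).trans (by omega)
  have hfew := card_few S W s hs hWS d
  have hmany := card_many S' W s hs' hsW hWS' d
  set few := (Finset.univ.filter (fun G : SimpleGraph (Fin n) =>
    IsBlocker G (S : Set (Fin n)) ∧ (nbr G s ∩ W).card ≤ d)).card with hfewdef
  set many := (Finset.univ.filter (fun G : SimpleGraph (Fin n) =>
    IsBlocker G (S' : Set (Fin n)) ∧ d < (nbr G s ∩ W).card)).card with hmanydef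
  rw [card_sepForests_compl S hS] at hfew
  set M := (below (cliqueOn Sᶜ)ᶜ).card with hM
  have hsplit : (Finset.univ.filter (fun G : SimpleGraph (Fin n) =>
        IsBlocker G (S : Set (Fin n)) ∧ IsBlocker G (S' : Set (Fin n)))).card ≤ few + many := by
    refine le_trans (Finset.card_le_card ?_) (Finset.card_union_le _ _)
    intro G hG
    simp only [Finset.mem_filter, Finset.mem_univ, true_and, Finset.mem_union] at hG ⊢
    rcases le_or_gt (nbr G s ∩ W).card d with h | h
    · exact Or.inl ⟨hG.1, h⟩
    · exact Or.inr ⟨hG.2, h⟩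
  have hfew' : (few : ℝ) ≤ forestCount (n - k) * M * (4 ^ k * (3 / 4) ^ n) := by
    have hB := card_powerset_filter_le W d
    have h1 : (few : ℝ) * 2 ^ W.card ≤ forestCount (n - k) * M * (3 / 2) ^ n := by
      have : (few : ℝ) * 2 ^ W.card ≤ (forestCount (n - k) : ℝ) * M *
          ((W.powerset.filter (fun N => N.card ≤ d)).card : ℝ) := by exact_mod_cast hfew
      refine this.trans (mul_le_mul_of_nonneg_left (hB.trans ?_) (by positivity))
      -- `4 ≤ (6 / 5) ^ 8` and `6 / 5 * (5 / 4) = 3 / 2`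
      have e1 : (4 : ℝ) ^ d ≤ (6 / 5) ^ n := by
        calc (4 : ℝ) ^ d ≤ ((6 / 5) ^ 8) ^ d := pow_le_pow_left₀ (by norm_num) (by norm_num) d
          _ = (6 / 5) ^ (8 * d) := by rw [pow_mul]
          _ ≤ (6 / 5) ^ n := pow_le_pow_right₀ (by norm_num) (by omega)
      have e2 : (5 / 4 : ℝ) ^ W.card ≤ (5 / 4) ^ n :=
        pow_le_pow_right₀ (by norm_num) (by omega)
      calc (4 : ℝ) ^ d * (5 / 4) ^ W.card ≤ (6 / 5) ^ n * (5 / 4) ^ n := by gcongr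
        _ = (3 / 2) ^ n := by rw [← mul_pow]; norm_num
    have h2 : (2 : ℝ) ^ n ≤ 2 ^ W.card * 4 ^ k := by
      rw [show (4 : ℝ) = 2 ^ 2 by norm_num, ← pow_mul, ← pow_add]
      exact pow_le_pow_right₀ (by norm_num) (by omega)
    have h3 : (few : ℝ) * 2 ^ n ≤ forestCount (n - k) * M * (4 ^ k * (3 / 4) ^ n) * 2 ^ n := by
      calc (few : ℝ) * 2 ^ n ≤ few * (2 ^ W.card * 4 ^ k) := by gcongr
        _ = few * 2 ^ W.card * 4 ^ k := by ring
        _ ≤ forestCount (n - k) * M * (3 / 2) ^ n * 4 ^ k := by gcongr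
        _ = forestCount (n - k) * M * (4 ^ k * (3 / 4) ^ n) * 2 ^ n := by
          rw [show (3 / 2 : ℝ) = 3 / 4 * 2 by norm_num, mul_pow]
          ring
    exact le_of_mul_le_mul_right h3 (by positivity)
  have hmany' : (many : ℝ) ≤ 2 ^ n * ((n : ℝ) + 1) ^ (n - d) * 2 ^ (2 * k * n) := by
    have h1 : (many : ℝ) ≤ (∑ N ∈ W.powerset.filter (fun N => d < N.card),
        ((sepForests W N).card : ℝ)) * ((below (cliqueOn W)ᶜ).card : ℝ) := by exact_mod_cast hmany
    refine h1.trans ?_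
    have h2 : (∑ N ∈ W.powerset.filter (fun N => d < N.card), ((sepForests W N).card : ℝ)) ≤
        2 ^ n * ((n : ℝ) + 1) ^ (n - d) := by
      have : ∀ N ∈ W.powerset.filter (fun N => d < N.card),
          ((sepForests W N).card : ℝ) ≤ ((n : ℝ) + 1) ^ (n - d) := by
        intro N hN
        rw [Finset.mem_filter, Finset.mem_powerset] at hN
        rw [card_sepForests W N hN.1]
        refine (forestNum_le _ _ (Nat.sub_le _ _)).trans ?_
        have hWn : (W.card : ℝ) ≤ n := by exact_mod_cast (by omega : W.card ≤ n)
        calc ((W.card : ℝ) + 1) ^ (W.card - N.card) ≤ ((n : ℝ) + 1) ^ (W.card - N.card) := by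
              gcongr
          _ ≤ ((n : ℝ) + 1) ^ (n - d) :=
              pow_le_pow_right₀ (by linarith [Nat.cast_nonneg (α := ℝ) n]) (by omega)
      refine (Finset.sum_le_card_nsmul _ _ _ this).trans ?_
      rw [nsmul_eq_mul]
      refine mul_le_mul_of_nonneg_right ?_ (by positivity)
      have hc : (W.powerset.filter (fun N => d < N.card)).card ≤ 2 ^ n :=
        (Finset.card_filter_le _ _).trans (by
          rw [Finset.card_powerset]
          exact Nat.pow_le_pow_right two_pos (by omega))
      exact_mod_cast hc
    have h3 : ((below (cliqueOn W)ᶜ).card : ℝ) ≤ 2 ^ (2 * k * n) := by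
      have := card_below_compl' W _ hWcard
      have h4 : (below (cliqueOn W)ᶜ).card ≤ 2 ^ ((S ∪ S').card * n) := by
        rw [← this]
        exact Nat.le_mul_of_pos_right _ (by positivity)
      have h5 : (below (cliqueOn W)ᶜ).card ≤ 2 ^ (2 * k * n) :=
        h4.trans (Nat.pow_le_pow_right two_pos (Nat.mul_le_mul_right _ hU))
      exact_mod_cast h5
    exact mul_le_mul h2 h3 (by positivity) (by positivity)
  calc _ ≤ ((few + many : ℕ) : ℝ) := by exact_mod_cast hsplit
    _ ≤ _ := by push_cast; exact add_le_add hfew' hmany'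

lemma apexCount_eq {n k : ℕ} (hk : k ≤ n) :
    apexCount n k = (Finset.univ.filter (fun G : SimpleGraph (Fin n) =>
      ∃ S ∈ (Finset.univ : Finset (Fin n)).powersetCard k,
        IsBlocker G (S : Set (Fin n)))).card := by
  unfold apexCount
  rw [Nat.card_eq_fintype_card, Fintype.card_subtype]
  congr 1
  ext G
  simp only [Finset.mem_filter, Finset.mem_univ, true_and, Finset.mem_powersetCard,
    Finset.subset_univ]
  constructor
  · rintro ⟨B, hB, hb⟩
    obtain ⟨S, hBS, hS⟩ := Finset.exists_superset_card_eq hB (by simpa using hk)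
    refine ⟨S, hS, ?_⟩
    rw [isBlocker_iff] at hb ⊢
    exact hb.anti (inf_le_inf_left _ (cliqueOn_mono (Finset.compl_subset_compl.2 hBS)))
  · rintro ⟨S, hS, hb⟩
    exact ⟨S, hS.le, hb⟩

/-- Pairs of a `k`-set and a graph that it blocks. -/
lemma sum_card_blocked {n k : ℕ} (hk : k ≤ n) :
    (∑ S ∈ (Finset.univ : Finset (Fin n)).powersetCard k,
      ((Finset.univ.filter (fun G : SimpleGraph (Fin n) =>
        IsBlocker G (S : Set (Fin n)))).card : ℝ)) * 2 ^ (k * (k + 1) / 2) =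
      (n.choose k : ℝ) * forestCount (n - k) * 2 ^ (k * n) := by
  have : ∀ S ∈ (Finset.univ : Finset (Fin n)).powersetCard k,
      ((Finset.univ.filter (fun G : SimpleGraph (Fin n) =>
        IsBlocker G (S : Set (Fin n)))).card : ℝ) * 2 ^ (k * (k + 1) / 2) =
        forestCount (n - k) * 2 ^ (k * n) := by
    intro S hS
    have hS' := (Finset.mem_powersetCard.1 hS).2
    have h1 := card_below_compl' Sᶜ k (by
      rw [Finset.card_compl, Fintype.card_fin, hS']; omega)
    rw [card_blocked, card_sepForests_compl S hS']
    have h2 : ((below (cliqueOn Sᶜ)ᶜ).card : ℝ) * 2 ^ (k * (k + 1) / 2) = 2 ^ (k * n) := by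
      exact_mod_cast h1
    push_cast
    rw [mul_assoc, h2]
  rw [Finset.sum_mul, Finset.sum_congr rfl this, Finset.sum_const, Finset.card_powersetCard,
    Finset.card_univ, Fintype.card_fin, nsmul_eq_mul, mul_assoc]

/-- The union bound over the blockers of size `k`. -/
lemma apexCount_le {n k : ℕ} (hk : k ≤ n) :
    (apexCount n k : ℝ) * 2 ^ (k * (k + 1) / 2) ≤
      (n.choose k : ℝ) * forestCount (n - k) * 2 ^ (k * n) := by
  rw [← sum_card_blocked hk, apexCount_eq hk]
  refine mul_le_mul_of_nonneg_right ?_ (by positivity)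
  have : (Finset.univ.filter (fun G : SimpleGraph (Fin n) =>
      ∃ S ∈ (Finset.univ : Finset (Fin n)).powersetCard k, IsBlocker G (S : Set (Fin n)))) ⊆
      ((Finset.univ : Finset (Fin n)).powersetCard k).biUnion (fun S =>
        Finset.univ.filter (fun G : SimpleGraph (Fin n) => IsBlocker G (S : Set (Fin n)))) := by
    intro G hG
    simpa using hG
  exact_mod_cast (Finset.card_le_card this).trans Finset.card_biUnion_le

/-- A Bonferroni inequality: a graph with `c ≥ 1` blockers of size `k` has `c ^ 2 - c ≥ c - 1`
ordered pairs of different ones. -/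
lemma bonferroni {n k : ℕ} (hk : k ≤ n) :
    ∑ S ∈ (Finset.univ : Finset (Fin n)).powersetCard k,
      (Finset.univ.filter (fun G : SimpleGraph (Fin n) => IsBlocker G (S : Set (Fin n)))).card ≤
    apexCount n k + ∑ p ∈ ((Finset.univ : Finset (Fin n)).powersetCard k).offDiag,
      (Finset.univ.filter (fun G : SimpleGraph (Fin n) =>
        IsBlocker G (p.1 : Set (Fin n)) ∧ IsBlocker G (p.2 : Set (Fin n)))).card := by
  rw [apexCount_eq hk]
  set P := (Finset.univ : Finset (Fin n)).powersetCard k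
  simp only [Finset.card_filter]
  rw [Finset.sum_comm, Finset.sum_comm (s := P.offDiag), ← Finset.sum_add_distrib]
  refine Finset.sum_le_sum fun G _ => ?_
  simp only [← Finset.card_filter]
  set B : Finset (Finset (Fin n)) :=
    P.filter (fun S : Finset (Fin n) => IsBlocker G (S : Set (Fin n))) with hB
  have hoff : (P.offDiag.filter (fun p => IsBlocker G (p.1 : Set (Fin n)) ∧
      IsBlocker G (p.2 : Set (Fin n)))) = B.offDiag := by
    ext p
    simp only [hB, Finset.mem_filter, Finset.mem_offDiag]
    tauto
  rw [hoff, Finset.offDiag_card]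
  by_cases h : ∃ S ∈ P, IsBlocker G (S : Set (Fin n))
  · rw [if_pos h]
    rcases Nat.lt_or_ge B.card 2 with h2 | h2
    · omega
    · have := Nat.mul_le_mul_right B.card h2
      omega
  · have : B = ∅ := by
      rw [hB, Finset.filter_eq_empty_iff]
      exact fun S hS hb => h ⟨S, hS, hb⟩
    simp [this]

/-- The Bonferroni lower bound, with pairs of blockers estimated by `card_two_blockers`. -/
lemma le_apexCount {n k : ℕ} (hk : k ≤ n) :
    (n.choose k : ℝ) * forestCount (n - k) * 2 ^ (k * n) *
        (1 - (n.choose k : ℝ) * (4 ^ k * (3 / 4) ^ n)) -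
      (n.choose k : ℝ) ^ 2 * 2 ^ (k * (k + 1) / 2) *
        (2 ^ n * ((n : ℝ) + 1) ^ (n - n / 8) * 2 ^ (2 * k * n)) ≤
      (apexCount n k : ℝ) * 2 ^ (k * (k + 1) / 2) := by
  have hb : (∑ S ∈ (Finset.univ : Finset (Fin n)).powersetCard k,
      ((Finset.univ.filter (fun G : SimpleGraph (Fin n) =>
        IsBlocker G (S : Set (Fin n)))).card : ℝ)) ≤
      apexCount n k + ∑ p ∈ ((Finset.univ : Finset (Fin n)).powersetCard k).offDiag,
      ((Finset.univ.filter (fun G : SimpleGraph (Fin n) =>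
        IsBlocker G (p.1 : Set (Fin n)) ∧ IsBlocker G (p.2 : Set (Fin n)))).card : ℝ) := by
    exact_mod_cast bonferroni hk
  have hsum := sum_card_blocked hk
  set X : ℝ := 2 ^ n * ((n : ℝ) + 1) ^ (n - n / 8) * 2 ^ (2 * k * n) with hX
  set q : ℝ := 2 ^ (k * (k + 1) / 2) with hq
  have hq0 : 0 < q := by positivity
  have hX0 : 0 ≤ X := by positivity
  have hpair : ∀ p ∈ ((Finset.univ : Finset (Fin n)).powersetCard k).offDiag,
      ((Finset.univ.filter (fun G : SimpleGraph (Fin n) =>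
        IsBlocker G (p.1 : Set (Fin n)) ∧ IsBlocker G (p.2 : Set (Fin n)))).card : ℝ) ≤
      forestCount (n - k) * 2 ^ (k * n) / q * (4 ^ k * (3 / 4) ^ n) + X := by
    rintro ⟨S, S'⟩ hp
    rw [Finset.mem_offDiag, Finset.mem_powersetCard, Finset.mem_powersetCard] at hp
    obtain ⟨⟨-, hS⟩, ⟨-, hS'⟩, hne⟩ := hp
    refine (card_two_blockers S S' hS hS' hne).trans (le_of_eq ?_)
    have h1 := card_below_compl' Sᶜ k (by
      rw [Finset.card_compl, Fintype.card_fin, hS]; omega)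
    have h2 : ((below (cliqueOn Sᶜ)ᶜ).card : ℝ) * q = 2 ^ (k * n) := by
      rw [hq]; exact_mod_cast h1
    rw [← h2, ← hX]
    field_simp
  have hoff := Finset.sum_le_card_nsmul _ _ _ hpair
  have hcard : (((Finset.univ : Finset (Fin n)).powersetCard k).offDiag.card : ℝ) ≤
      (n.choose k : ℝ) ^ 2 := by
    rw [Finset.offDiag_card, Finset.card_powersetCard, Finset.card_univ, Fintype.card_fin, sq]
    exact_mod_cast Nat.sub_le _ _
  rw [nsmul_eq_mul] at hoff
  have hoff' := hoff.trans (mul_le_mul_of_nonneg_right hcard (by positivity))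
  have h1 := mul_le_mul_of_nonneg_right (hb.trans (add_le_add_right hoff' _)) hq0.le
  rw [hsum] at h1
  have h2 : ((apexCount n k : ℝ) + (n.choose k : ℝ) ^ 2 *
      (forestCount (n - k) * 2 ^ (k * n) / q * (4 ^ k * (3 / 4) ^ n) + X)) * q =
      apexCount n k * q + ((n.choose k : ℝ) ^ 2 * (forestCount (n - k) * 2 ^ (k * n) *
        (4 ^ k * (3 / 4) ^ n)) + (n.choose k : ℝ) ^ 2 * q * X) := by
    field_simp
  rw [h2] at h1
  linarith

end Assembly

/-! ### Asymptotics -/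

section Asymptotics

/-- The main term: the number of pairs of a `k`-set and a graph that it blocks, divided by
`2 ^ (k * n)` times the number of forests. -/
lemma tendsto_main (k : ℕ) :
    Tendsto (fun n : ℕ => (n.choose k : ℝ) * forestCount (n - k) /
        (forestCount n * 2 ^ (k * (k + 1) / 2))) atTop
      (nhds ((2 ^ (k * (k + 1) / 2) * Real.exp 1 ^ k * (Nat.factorial k : ℝ))⁻¹)) := by
  rw [← tendsto_add_atTop_iff_nat k]
  have h := (tendsto_descFactorial_mul_forestCount k).mul_const
    ((2 ^ (k * (k + 1) / 2) * (Nat.factorial k : ℝ))⁻¹)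
  have e : Real.exp (-1) ^ k * (2 ^ (k * (k + 1) / 2) * (Nat.factorial k : ℝ))⁻¹ =
      (2 ^ (k * (k + 1) / 2) * Real.exp 1 ^ k * (Nat.factorial k : ℝ))⁻¹ := by
    rw [Real.exp_neg, inv_pow, ← mul_inv]
    congr 1
    ring
  rw [e] at h
  refine h.congr fun m => ?_
  have h1 := (forestCount_pos (m + k)).ne'
  have h2 : (Nat.factorial k : ℝ) ≠ 0 := by positivity
  rw [Nat.descFactorial_eq_factorial_mul_choose, Nat.add_sub_cancel]
  push_cast
  field_simp

lemma choose_le (n k : ℕ) : (n.choose k : ℝ) ≤ ((n : ℝ) + 1) ^ k := by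
  have h : n.choose k ≤ (n + 1) ^ k :=
    (Nat.choose_le_pow n k).trans (Nat.pow_le_pow_left (Nat.le_succ n) k)
  exact_mod_cast h

/-- Shifted form of the fact that an exponential beats a power. -/
lemma tendsto_succ_pow_mul_pow (j : ℕ) {r : ℝ} (h0 : 0 < r) (h1 : r < 1) :
    Tendsto (fun n : ℕ => ((n : ℝ) + 1) ^ j * r ^ n) atTop (nhds 0) := by
  have h := (tendsto_pow_const_mul_const_pow_of_abs_lt_one j
    (by rwa [abs_of_pos h0] : |r| < 1))
  have h' := ((tendsto_add_atTop_iff_nat 1).2 h).mul_const r⁻¹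
  rw [zero_mul] at h'
  refine h'.congr fun n => ?_
  rw [pow_succ]
  push_cast
  field_simp

/-- The first error term: the part of the pairs of blockers in which some blocking vertex has few
neighbours outside both blockers, relative to the main term. -/
lemma tendsto_few (k : ℕ) :
    Tendsto (fun n : ℕ => (n.choose k : ℝ) * (4 ^ k * (3 / 4) ^ n)) atTop (nhds 0) := by
  have h := (tendsto_succ_pow_mul_pow k (by norm_num : (0 : ℝ) < 3 / 4) (by norm_num)).const_mul
    ((4 : ℝ) ^ k)
  rw [mul_zero] at h
  refine squeeze_zero (fun n => by positivity) (fun n => ?_) h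
  calc (n.choose k : ℝ) * (4 ^ k * (3 / 4) ^ n) ≤ ((n : ℝ) + 1) ^ k * (4 ^ k * (3 / 4) ^ n) :=
        mul_le_mul_of_nonneg_right (choose_le n k) (by positivity)
    _ = _ := by ring

/-- The second error term: a vertex with more than `n / 8` neighbours in distinct components of a
forest costs a factor of about `n ^ (n / 8)`, against which exponentials are negligible. -/
lemma tendsto_many (k : ℕ) :
    Tendsto (fun n : ℕ => (n.choose k : ℝ) ^ 2 *
        (2 ^ n * ((n : ℝ) + 1) ^ (n - n / 8) * 2 ^ (2 * k * n)) /
        (2 ^ (k * n) * forestCount n)) atTop (nhds 0) := by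
  rw [← tendsto_add_atTop_iff_nat 1]
  set g : ℕ → ℝ := fun m => (forestCount (m + 1) : ℝ) * ((m : ℝ) + 2) / ((m : ℝ) + 2) ^ m with hg
  have hgpos : ∀ m, 0 < g m := fun m => by
    have := forestCount_pos (m + 1)
    positivity
  have hlim : Tendsto (fun m => (g m)⁻¹) atTop (nhds (Real.exp (-1 / 2))⁻¹) :=
    tendsto_forestCount.inv₀ (Real.exp_pos _).ne'
  have hexp := (tendsto_add_atTop_iff_nat 1).2
    (tendsto_succ_pow_mul_pow (2 * k + 2) (by norm_num : (0 : ℝ) < 1 / 2) (by norm_num))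
  have h := (hlim.mul hexp).mul_const ((2 : ℝ) ^ (7 * (k + 2)))
  rw [mul_zero, zero_mul] at h
  refine squeeze_zero' (Eventually.of_forall fun m => by positivity) ?_ h
  filter_upwards [eventually_ge_atTop (2 ^ (8 * (k + 2)))] with m hm
  set n := m + 1 with hn
  have hnm : (m : ℝ) = (n : ℝ) - 1 := by rw [hn]; push_cast; ring
  set x : ℝ := (n : ℝ) + 1 with hx
  have hx2 : (m : ℝ) + 2 = x := by rw [hx, hn]; push_cast; ring
  have hx0 : 0 < x := by positivity
  -- the number of forests in terms of the normalised sequence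
  have hf : (forestCount n : ℝ) = g m * x ^ n / x ^ 2 := by
    simp only [hg, hx2, ← hn]
    rw [hn, pow_succ]
    field_simp
  -- the factor gained from the `n / 8` additional roots
  have hgain : (2 : ℝ) ^ ((k + 2) * n) ≤ 2 ^ (7 * (k + 2)) * x ^ (n / 8) := by
    have hxbig : (2 : ℝ) ^ (8 * (k + 2)) ≤ x := by
      have : (2 : ℝ) ^ (8 * (k + 2)) ≤ m := by exact_mod_cast hm
      linarith
    calc (2 : ℝ) ^ ((k + 2) * n) ≤ 2 ^ (7 * (k + 2) + 8 * (k + 2) * (n / 8)) := by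
          refine pow_le_pow_right₀ (by norm_num) ?_
          have h8 : n ≤ 7 + 8 * (n / 8) := by omega
          calc (k + 2) * n ≤ (k + 2) * (7 + 8 * (n / 8)) := Nat.mul_le_mul_left _ h8
            _ = _ := by ring
      _ = 2 ^ (7 * (k + 2)) * (2 ^ (8 * (k + 2))) ^ (n / 8) := by
          rw [pow_add, ← pow_mul 2 (8 * (k + 2))]
      _ ≤ _ := by gcongr
  have hsplit : x ^ n = x ^ (n - n / 8) * x ^ (n / 8) := by
    rw [← pow_add, Nat.sub_add_cancel (Nat.div_le_self _ _)]
  have hc := choose_le n k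
  rw [← hx] at hc
  have hc2 : (n.choose k : ℝ) ^ 2 ≤ x ^ (2 * k) := by
    rw [mul_comm 2 k, pow_mul]
    exact pow_le_pow_left₀ (by positivity) hc 2
  rw [hf, hsplit]
  have hgm := hgpos m
  rw [div_le_iff₀ (by positivity)]
  have key : (2 : ℝ) ^ n * 2 ^ (2 * k * n) =
      2 ^ (k * n) * (2 ^ ((k + 2) * n) * (1 / 2) ^ n) := by
    rw [one_div, inv_pow]
    field_simp
    ring
  calc (n.choose k : ℝ) ^ 2 * (2 ^ n * x ^ (n - n / 8) * 2 ^ (2 * k * n))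
      = (n.choose k : ℝ) ^ 2 * (2 ^ n * 2 ^ (2 * k * n)) * x ^ (n - n / 8) := by ring
    _ = (n.choose k : ℝ) ^ 2 * (2 ^ (k * n) * (2 ^ ((k + 2) * n) * (1 / 2) ^ n)) *
          x ^ (n - n / 8) := by rw [key]
    _ ≤ x ^ (2 * k) * (2 ^ (k * n) * ((2 ^ (7 * (k + 2)) * x ^ (n / 8)) * (1 / 2) ^ n)) *
          x ^ (n - n / 8) := by gcongr
    _ = _ := by
      rw [pow_add x (2 * k) 2]
      field_simp

lemma tendsto_apexCount (k : ℕ) :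
    Tendsto (fun n : ℕ => (apexCount n k : ℝ) / (2 ^ (k * n) * (forestCount n : ℝ))) atTop
      (nhds ((2 ^ (k * (k + 1) / 2) * Real.exp 1 ^ k * (Nat.factorial k : ℝ))⁻¹)) := by
  have hmain := tendsto_main k
  have hlow := (hmain.mul ((tendsto_few k).const_sub 1)).sub (tendsto_many k)
  rw [sub_zero, sub_zero, mul_one] at hlow
  refine tendsto_of_tendsto_of_tendsto_of_le_of_le' hlow hmain ?_ ?_
  · filter_upwards [eventually_ge_atTop k] with n hn
    have h := le_apexCount hn
    have hf := forestCount_pos n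
    set q : ℝ := 2 ^ (k * (k + 1) / 2) with hq
    have hq0 : 0 < q := by positivity
    rw [le_div_iff₀ (by positivity)]
    refine le_of_mul_le_mul_right (le_trans (le_of_eq ?_) h) hq0
    field_simp
  · filter_upwards [eventually_ge_atTop k] with n hn
    have h := apexCount_le hn
    have hf := forestCount_pos n
    rw [div_le_div_iff₀ (by positivity) (by positivity)]
    nlinarith [mul_le_mul_of_nonneg_right h hf.le]

end Asymptotics

end ApexForest

/-- |(Apex^k F)_n| / (2^{kn} |F_n|) → c_k = (2^{k(k+1)/2} e^k k!)⁻¹. -/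
theorem stmt_1 (k : ℕ) (hk : 1 ≤ k) :
    Filter.Tendsto
      (fun n : ℕ => (apexCount n k : ℝ) / (2 ^ (k * n) * (forestCount n : ℝ)))
      Filter.atTop
      (nhds ((2 ^ (k * (k + 1) / 2) * Real.exp 1 ^ k * (Nat.factorial k : ℝ))⁻¹)) := by
  exact ApexForest.tendsto_apexCount k
end

section
/- For each fixed positive integer k, the class Ex (k+1)C has growth constant 2^k · e; that is, (|(Ex (k+1)C)_n| / n!)^{1/n} → 2^k e as n → ∞. -/
/-!
The class contains every graph that is a forest after deletion of some `k` vertices, and the number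
of all graphs in it exceeds the number of these by a factor of size `(1 + o(1)) ^ n` only. The count
is thus `2 ^ (k * n) * n ^ n` up to such factors, whence the growth constant `2 ^ k * e`.

*Lower bound.* Join `k` new vertices with arbitrary neighbourhoods to an arbitrary forest
(`count_lower`): every cycle uses one of the `k` vertices. Pitman's double counting of rooted
forests yields `n ^ (n - 1)` rooted labelled trees (`forests_ge`).

*Upper bound.* By the Erdős–Pósa theorem (`erdos_posa`) a bounded set `B` of `C` vertices meets all
cycles, so `F = V \ B` is a forest. For `b ∈ B` consider the subtrees of `F` with two neighbours of
`b`, each of which closes a cycle with `b`. By `colorful`, disjoint such subtrees can be chosen for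
all `b` in some `J ⊆ B`, while for the remaining `b` they are all met by a set `X` with
`#X ≤ #J`. There are no `k + 1` disjoint cycles, so `#J ≤ k`. Thus a vertex of `B` outside `J` has at
most one neighbour in each component of `F \ X`. If `F \ X` has few components, at most `ε * n`, then
these vertices have small degree and their neighbourhoods are cheap to record; only the `k` vertices
of `J` cost `2 ^ n` each. If there are many components, the parent function of the forest `F \ X`
has many roots, which saves a factor `(n + 1) ^ (ε * n)` and compensates for `k + C` arbitrary
neighbourhoods. This dichotomy is `ex_encode`, its count is `count_upper`.

*Erdős–Pósa.* The induction is on `k` and then on the size of the graph. Short cycles are removed,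
and vertices of degree at most two are deleted or suppressed. A graph of minimum degree three without
short cycles is exponentially large (`exp_growth`). A hitting set that is one vertex too large is
available by induction. If one of its vertices lies on many cycles that are otherwise disjoint, an
edge there can be deleted (`flower_reduce`). If not, few further deletions leave components attached
by single edges, and in a large graph one of these components is redundant (`ep_core`).

Cycles are handled through vertex sets of minimum degree at least two (`Thick`), which contain
cycles; forests and trees then reduce to counting edges with `dg` and `ee`.
-/

open SimpleGraph Filter Real

/-! ### Degrees, forests and connected sets -/

namespace Growth
open Finset
open scoped Classical

section Basics
variable {V : Type*}

/-- Number of neighbours of `x` inside the finite set `T`. -/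
noncomputable def dg (G : SimpleGraph V) (T : Finset V) (x : V) : ℕ :=
  #{y ∈ T | G.Adj x y}

/-- Number of ordered pairs in `S × T` that are adjacent; `ee G S S` is twice the number of
edges inside `S`. -/
noncomputable def ee (G : SimpleGraph V) (S T : Finset V) : ℕ := ∑ x ∈ S, dg G T x

/-- Nonempty set inducing minimum degree at least two. Such a set contains the vertices of a
cycle, and the vertex set of any cycle is thick. -/
def Thick (G : SimpleGraph V) (T : Finset V) : Prop :=
  T.Nonempty ∧ ∀ x ∈ T, 2 ≤ dg G T x

/-- `S` induces a forest, phrased without walks: no subset of `S` is thick. -/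
def Acyc (G : SimpleGraph V) (S : Finset V) : Prop := ∀ T ⊆ S, ¬ Thick G T

/-- `S` induces a nonempty connected graph, phrased by cuts: a nonempty subset that is closed
under taking neighbours inside `S` is all of `S`. -/
def Conn (G : SimpleGraph V) (S : Finset V) : Prop :=
  S.Nonempty ∧ ∀ A ⊆ S, A.Nonempty → (∀ a ∈ A, ∀ s ∈ S, G.Adj a s → s ∈ A) → A = S

variable {G : SimpleGraph V} {S T U : Finset V} {x y b : V}

lemma dg_mono (h : S ⊆ T) (x : V) : dg G S x ≤ dg G T x :=
  card_le_card (filter_subset_filter _ h)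

lemma dg_union (h : Disjoint S T) (x : V) : dg G (S ∪ T) x = dg G S x + dg G T x := by
  unfold dg
  rw [filter_union, card_union_of_disjoint (disjoint_filter_filter h)]

lemma dg_sum (T : Finset V) (x : V) : dg G T x = ∑ y ∈ T, if G.Adj x y then 1 else 0 := by
  unfold dg; rw [card_filter]

lemma dg_insert (h : y ∉ T) (x : V) :
    dg G (insert y T) x = dg G T x + if G.Adj x y then 1 else 0 := by
  rw [dg_sum, dg_sum, sum_insert h, add_comm]

lemma dg_erase (h : y ∈ T) (x : V) :
    dg G T x = dg G (T.erase y) x + if G.Adj x y then 1 else 0 := by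
  conv_lhs => rw [← insert_erase h]
  exact dg_insert (notMem_erase _ _) x

lemma dg_pos (hy : y ∈ T) (h : G.Adj x y) : 1 ≤ dg G T x :=
  card_pos.2 ⟨y, by simp [hy, h]⟩

lemma dg_two {z : V} (hy : y ∈ T) (hz : z ∈ T) (hyz : y ≠ z) (h : G.Adj x y) (h' : G.Adj x z) :
    2 ≤ dg G T x :=
  Finset.one_lt_card.2 ⟨y, by simp [hy, h], z, by simp [hz, h'], hyz⟩

lemma dg_le_card (T : Finset V) (x : V) : dg G T x ≤ #T := card_filter_le _ _

lemma dg_graph_mono {G' : SimpleGraph V} (h : G ≤ G') (T : Finset V) (x : V) :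
    dg G T x ≤ dg G' T x :=
  card_le_card (monotone_filter_right _ fun _ _ hy => h hy)

lemma Thick.graph_mono {G' : SimpleGraph V} (h : G ≤ G') (hT : Thick G T) : Thick G' T :=
  ⟨hT.1, fun x hx => (hT.2 x hx).trans (dg_graph_mono h T x)⟩

lemma ee_comm (S T : Finset V) : ee G S T = ee G T S := by
  simp only [ee, dg_sum]
  rw [sum_comm]
  simp only [G.adj_comm]

lemma ee_union_left (h : Disjoint S T) (U : Finset V) :
    ee G (S ∪ T) U = ee G S U + ee G T U := sum_union h

lemma ee_union_right (U : Finset V) (h : Disjoint S T) :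
    ee G U (S ∪ T) = ee G U S + ee G U T := by
  rw [ee_comm, ee_union_left h, ee_comm S, ee_comm T]

lemma ee_union (h : Disjoint S T) :
    ee G (S ∪ T) (S ∪ T) = ee G S S + 2 * ee G S T + ee G T T := by
  rw [ee_union_left h, ee_union_right _ h, ee_union_right _ h, ee_comm T S]; ring

lemma ee_singleton_left (x : V) (T : Finset V) : ee G {x} T = dg G T x := by simp [ee]

lemma dg_singleton_self (x : V) : dg G {x} x = 0 := by simp [dg]

lemma ee_insert (h : x ∉ S) : ee G (insert x S) (insert x S) = ee G S S + 2 * dg G S x := by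
  rw [insert_eq, ee_union (by simpa using h), ee_singleton_left, ee_singleton_left,
    dg_singleton_self]; ring

lemma dg_erase_self (x : V) (S : Finset V) : dg G (S.erase x) x = dg G S x := by
  by_cases h : x ∈ S
  · rw [dg_erase h x]; simp
  · rw [erase_eq_of_notMem h]

lemma ee_erase (h : x ∈ S) :
    ee G S S = ee G (S.erase x) (S.erase x) + 2 * dg G S x := by
  conv_lhs => rw [← insert_erase h]
  rw [ee_insert (notMem_erase _ _), dg_erase_self]

lemma ee_mono {S' T' : Finset V} (h : S ⊆ S') (h' : T ⊆ T') : ee G S T ≤ ee G S' T' :=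
  (sum_le_sum fun x _ => dg_mono h' x).trans (sum_le_sum_of_subset h)

lemma Acyc.mono (h : Acyc G S) (hT : T ⊆ S) : Acyc G T := fun U hU => h U (hU.trans hT)

lemma Acyc.exists_leaf (h : Acyc G S) (hS : S.Nonempty) : ∃ x ∈ S, dg G S x ≤ 1 := by
  have := h S subset_rfl
  unfold Thick at this
  push Not at this
  obtain ⟨x, hx, h⟩ := this hS
  exact ⟨x, hx, by omega⟩

/-- Leaf removal as an induction principle for forests. -/
lemma Acyc.induct {P : Finset V → Prop} (h0 : P ∅)
    (h1 : ∀ S x, Acyc G S → x ∈ S → dg G S x ≤ 1 → P (S.erase x) → P S)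
    (S : Finset V) (h : Acyc G S) : P S := by
  induction hn : #S generalizing S with
  | zero => rw [card_eq_zero.1 hn]; exact h0
  | succ n ih =>
    obtain ⟨x, hx, hd⟩ := h.exists_leaf (card_pos.1 (by omega))
    exact h1 S x h hx hd (ih _ (h.mono (erase_subset _ _)) (by rw [card_erase_of_mem hx]; omega))

/-- A forest has fewer edges than vertices (`ee` counts every edge twice). -/
lemma Acyc.ee_le (h : Acyc G S) (hS : S.Nonempty) : ee G S S + 2 ≤ 2 * #S := by
  revert hS
  refine Acyc.induct (G := G) (P := fun S => S.Nonempty → ee G S S + 2 ≤ 2 * #S) ?_ ?_ S h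
  · simp
  · intro S x _ hx hd ih _
    rw [ee_erase hx]
    have hc := card_erase_add_one hx
    rcases (S.erase x).eq_empty_or_nonempty with h0 | h0
    · have : S = {x} := by rw [← insert_erase hx, h0]; rfl
      subst this
      simp [ee, dg]
    · have := ih h0
      omega

/-- A finite set with too many edges contains a thick set. -/
lemma not_acyc_of_ee (hS : S.Nonempty) (h : 2 * #S < ee G S S + 2) : ¬ Acyc G S :=
  fun h' => by have := h'.ee_le hS; omega

lemma acyc_empty : Acyc G (∅ : Finset V) := by
  intro T hT h
  rw [subset_empty.1 hT] at h
  exact absurd h.1 (by simp)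

lemma conn_singleton (x : V) : Conn G {x} :=
  ⟨by simp, fun A hA hne _ => by
    rcases subset_singleton_iff.1 hA with h | h
    · simp [h] at hne
    · exact h⟩

/-- Connected sets with a common vertex have a connected union. -/
lemma Conn.union (hS : Conn G S) (hT : Conn G T) (h : (S ∩ T).Nonempty) : Conn G (S ∪ T) := by
  refine ⟨hS.1.mono subset_union_left, fun A hA hne hcl => ?_⟩
  obtain ⟨z, hz⟩ := h
  rw [mem_inter] at hz
  have hSA : (A ∩ S).Nonempty → S ⊆ A := fun h => by
    have := hS.2 (A ∩ S) inter_subset_right h (fun a ha s hs hadj =>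
      mem_inter.2 ⟨hcl a (mem_inter.1 ha).1 s (mem_union_left _ hs) hadj, hs⟩)
    exact inter_eq_right.1 this
  have hTA : (A ∩ T).Nonempty → T ⊆ A := fun h => by
    have := hT.2 (A ∩ T) inter_subset_right h (fun a ha s hs hadj =>
      mem_inter.2 ⟨hcl a (mem_inter.1 ha).1 s (mem_union_right _ hs) hadj, hs⟩)
    exact inter_eq_right.1 this
  obtain ⟨a, ha⟩ := hne
  refine hA.antisymm (union_subset_iff.2 ?_)
  rcases mem_union.1 (hA ha) with h | h
  · have h1 := hSA ⟨a, mem_inter.2 ⟨ha, h⟩⟩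
    exact ⟨h1, hTA ⟨z, mem_inter.2 ⟨h1 hz.1, hz.2⟩⟩⟩
  · have h1 := hTA ⟨a, mem_inter.2 ⟨ha, h⟩⟩
    exact ⟨hSA ⟨z, mem_inter.2 ⟨h1 hz.2, hz.1⟩⟩, h1⟩

lemma conn_pair (h : G.Adj x y) : Conn G {x, y} := by
  refine ⟨by simp, fun A hA hne hcl => hA.antisymm ?_⟩
  obtain ⟨a, ha⟩ := hne
  have := hA ha
  simp only [mem_insert, mem_singleton] at this
  rcases this with rfl | rfl
  · have := hcl a ha y (by simp) h
    intro z; simp only [mem_insert, mem_singleton]; rintro (rfl | rfl) <;> assumption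
  · have := hcl a ha x (by simp) h.symm
    intro z; simp only [mem_insert, mem_singleton]; rintro (rfl | rfl) <;> assumption

lemma Conn.insert (hS : Conn G S) (hy : y ∈ S) (h : G.Adj x y) : Conn G (insert x S) := by
  have : Insert.insert x S = {x, y} ∪ S := by
    ext z; simp only [mem_insert, mem_union, mem_singleton]
    constructor
    · tauto
    · rintro ((h | rfl) | h) <;> tauto
  rw [this]
  exact (conn_pair h).union hS ⟨y, by simp [hy]⟩

lemma Conn.leaf_nbr (hS : Conn G S) (hx : x ∈ S) (hne : S ≠ {x}) : ∃ p ∈ S, G.Adj x p := by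
  by_contra! hcon
  exact hne (hS.2 {x} (by simpa using hx) (by simp) (fun a ha s hs hadj => by
    rw [mem_singleton.1 ha] at hadj
    exact absurd hadj (hcon s hs))).symm

lemma dg_le_one_unique (hd : dg G S x ≤ 1) {p q : V} (hp : p ∈ S) (hq : q ∈ S)
    (hxp : G.Adj x p) (hxq : G.Adj x q) : p = q := by
  by_contra hne
  have := dg_two hp hq hne hxp hxq
  omega

lemma Conn.erase_leaf (hS : Conn G S) (hx : x ∈ S) (hd : dg G S x ≤ 1) (hne : S ≠ {x}) :
    Conn G (S.erase x) := by
  obtain ⟨p, hp, hxp⟩ := hS.leaf_nbr hx hne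
  refine ⟨⟨p, mem_erase.2 ⟨hxp.ne', hp⟩⟩, fun A hA hAne hcl => ?_⟩
  have hxA : x ∉ A := fun h => (mem_erase.1 (hA h)).1 rfl
  by_cases hpA : p ∈ A
  · have := hS.2 (Insert.insert x A)
      (insert_subset hx (hA.trans (erase_subset _ _))) (by simp) (fun a ha s hs hadj => by
        rcases eq_or_ne s x with rfl | hsx
        · simp
        rcases mem_insert.1 ha with rfl | ha
        · rw [← dg_le_one_unique hd hp hs hxp hadj]; simp [hpA]
        · exact mem_insert_of_mem (hcl a ha s (mem_erase.2 ⟨hsx, hs⟩) hadj))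
    rw [← this, erase_insert hxA]
  · have := hS.2 A (hA.trans (erase_subset _ _)) hAne (fun a ha s hs hadj => by
        rcases eq_or_ne s x with rfl | hsx
        · have haS := mem_of_mem_erase (hA ha)
          rw [dg_le_one_unique hd hp haS hxp hadj.symm] at hpA
          exact absurd ha hpA
        · exact hcl a ha s (mem_erase.2 ⟨hsx, hs⟩) hadj)
    exact absurd (this ▸ hx) hxA

/-- A tree on `s` vertices has at least `s - 1` edges. -/
lemma Conn.ee_ge (hS : Conn G S) (h : Acyc G S) : 2 * #S ≤ ee G S S + 2 := by
  revert hS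
  refine Acyc.induct (G := G) (P := fun S => Conn G S → 2 * #S ≤ ee G S S + 2) ?_ ?_ S h
  · simp
  · intro S x _ hx hd ih hS
    by_cases hne : S = {x}
    · subst hne; simp
    · have := ih (hS.erase_leaf hx hd hne)
      obtain ⟨p, hp, hxp⟩ := hS.leaf_nbr hx hne
      have := dg_pos hp hxp
      rw [ee_erase hx]
      have hc := card_erase_add_one hx
      omega

/-- A vertex with two neighbours in a connected set closes a cycle, so in a forest it has at most
one. -/
lemma Conn.dg_le_one (hS : Conn G S) (hb : b ∉ S) (h : Acyc G (Insert.insert b S)) :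
    dg G S b ≤ 1 := by
  have h1 := hS.ee_ge (h.mono (subset_insert _ _))
  have h2 := h.ee_le (by simp)
  rw [ee_insert hb, card_insert_of_notMem hb] at h2
  omega

/-- Connected component of `y` in the graph induced on `Y`. -/
noncomputable def comp (G : SimpleGraph V) (Y : Finset V) (y : V) : Finset V :=
  {z ∈ Y | ∀ A ⊆ Y, (∀ a ∈ A, ∀ s ∈ Y, G.Adj a s → s ∈ A) → y ∈ A → z ∈ A}

lemma comp_subset (Y : Finset V) (y : V) : comp G Y y ⊆ Y := filter_subset _ _

lemma mem_comp_self {Y : Finset V} (hy : y ∈ Y) : y ∈ comp G Y y := by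
  simp only [comp, mem_filter]; exact ⟨hy, fun A _ _ h => h⟩

lemma comp_closed {Y : Finset V} : ∀ a ∈ comp G Y y, ∀ s ∈ Y, G.Adj a s → s ∈ comp G Y y := by
  intro a ha s hs hadj
  simp only [comp, mem_filter] at ha ⊢
  exact ⟨hs, fun A hA hcl hyA => hcl a (ha.2 A hA hcl hyA) s hs hadj⟩

lemma conn_comp {Y : Finset V} (hy : y ∈ Y) : Conn G (comp G Y y) := by
  refine ⟨⟨y, mem_comp_self hy⟩, fun A hA hne hcl => ?_⟩
  have hclY : ∀ a ∈ A, ∀ s ∈ Y, G.Adj a s → s ∈ A := fun a ha s hs hadj =>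
    hcl a ha s (comp_closed a (hA ha) s hs hadj) hadj
  by_cases hyA : y ∈ A
  · refine hA.antisymm fun z hz => ?_
    exact (mem_filter.1 hz).2 A (hA.trans (comp_subset _ _)) hclY hyA
  · exfalso
    obtain ⟨a, ha⟩ := hne
    have := (mem_filter.1 (hA ha)).2 (comp G Y y \ A)
      (sdiff_subset.trans (comp_subset _ _)) (fun c hc s hs hadj => by
        rw [Finset.mem_sdiff] at hc ⊢
        exact ⟨comp_closed c hc.1 s hs hadj, fun hsA =>
          hc.2 (hclY s hsA c (comp_subset _ _ hc.1) hadj.symm)⟩)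
      (Finset.mem_sdiff.2 ⟨mem_comp_self hy, hyA⟩)
    exact (Finset.mem_sdiff.1 this).2 ha

lemma comp_eq_of_mem {Y : Finset V} {z : V} (hz : z ∈ comp G Y y) (hy : y ∈ Y) :
    comp G Y z = comp G Y y := by
  have hzY := comp_subset _ _ hz
  refine (conn_comp hy).2 _ (fun w hw => ?_) ⟨z, mem_comp_self hzY⟩
    (fun a ha s hs hadj => comp_closed a ha s (comp_subset _ _ hs) hadj)
  exact (mem_filter.1 hw).2 _ (comp_subset _ _) comp_closed hz

/-- A subset sending at most one edge to the rest of a thick set cannot be a forest. -/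
lemma thick_part (hT : Thick G T) (hS : S ⊆ T) (hne : S.Nonempty) (h : ee G S (T \ S) ≤ 1) :
    ¬ Acyc G S := by
  refine not_acyc_of_ee hne ?_
  have h1 : 2 * #S ≤ ee G S T := by
    rw [mul_comm, ← smul_eq_mul]
    exact card_nsmul_le_sum _ _ _ fun x hx => hT.2 x (hS hx)
  have h2 : ee G S T = ee G S S + ee G S (T \ S) := by
    rw [← ee_union_right _ disjoint_sdiff, union_sdiff_of_subset hS]
  omega

/-- Adding to a forest a vertex with at most one neighbour in each connected set keeps it a
forest. -/
lemma acyc_insert {Y : Finset V} (hY : Acyc G Y)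
    (h : ∀ S ⊆ Y, Conn G S → dg G S b ≤ 1) : Acyc G (Insert.insert b Y) := by
  intro T hT hth
  have hbT : b ∈ T := by
    by_contra hbT
    exact hY T (fun x hx => (mem_insert.1 (hT hx)).resolve_left (fun e => hbT (e ▸ hx))) hth
  have hZ : T.erase b ⊆ Y := fun x hx =>
    (mem_insert.1 (hT (mem_of_mem_erase hx))).resolve_left (ne_of_mem_erase hx)
  obtain ⟨y, hy⟩ : ({y ∈ T | G.Adj b y}).Nonempty := card_pos.1 (by
    have := hth.2 b hbT; unfold dg at this; omega)
  rw [mem_filter] at hy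
  have hyZ : y ∈ T.erase b := mem_erase.2 ⟨hy.2.ne', hy.1⟩
  set K := comp G (T.erase b) y with hK
  have hKZ : K ⊆ T.erase b := comp_subset _ _
  refine thick_part hth (hKZ.trans (erase_subset _ _)) ⟨y, mem_comp_self hyZ⟩ ?_
    (hY.mono (hKZ.trans hZ))
  have h1 : ee G K (T \ K) ≤ ee G K {b} := by
    refine sum_le_sum fun x hx => card_le_card fun z hz => ?_
    simp only [mem_filter, Finset.mem_sdiff, mem_singleton] at hz ⊢
    refine ⟨?_, hz.2⟩
    by_contra hzb
    exact hz.1.2 (comp_closed x hx z (mem_erase.2 ⟨hzb, hz.1.1⟩) hz.2)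
  rw [ee_comm K {b}, ee_singleton_left] at h1
  exact h1.trans (h K (hKZ.trans hZ) (conn_comp hyZ))

end Basics
end Growth

/-! ### Packing and covering subtrees of a forest -/

namespace Growth
open Finset
open scoped Classical

section Forests
variable {V : Type*} {G : SimpleGraph V} {S T U : Finset V} {x y b : V}

/-- Packing and covering for several families of subtrees of one forest. Each family either
contributes a member to a disjoint system of representatives or is hit by a set `X` that is no
larger than that system. The representatives are found greedily while leaves are removed. -/
lemma colorful {ι : Type*} (Y : Finset V) (hY : Acyc G Y) :
    ∀ (I : Finset ι) (F : ι → Finset V → Prop),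
      (∀ i ∈ I, ∀ S, F i S → S ⊆ Y ∧ Conn G S) →
      ∃ J ⊆ I, ∃ X ⊆ Y, #X ≤ #J ∧ ∃ R : ι → Finset V, (∀ i ∈ J, F i (R i)) ∧
        (∀ i ∈ J, ∀ j ∈ J, i ≠ j → Disjoint (R i) (R j)) ∧
        ∀ i ∈ I, i ∉ J → ∀ T, F i T → ¬ Disjoint T X := by
  refine Acyc.induct (G := G) (P := fun Y => ∀ (I : Finset ι) (F : ι → Finset V → Prop),
      (∀ i ∈ I, ∀ S, F i S → S ⊆ Y ∧ Conn G S) →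
      ∃ J ⊆ I, ∃ X ⊆ Y, #X ≤ #J ∧ ∃ R : ι → Finset V, (∀ i ∈ J, F i (R i)) ∧
        (∀ i ∈ J, ∀ j ∈ J, i ≠ j → Disjoint (R i) (R j)) ∧
        ∀ i ∈ I, i ∉ J → ∀ T, F i T → ¬ Disjoint T X) ?_ ?_ Y hY
  · intro I F hF
    refine ⟨∅, by simp, ∅, by simp, by simp, fun _ => ∅, by simp, by simp, ?_⟩
    intro i hi _ T hT
    obtain ⟨h1, h2⟩ := hF i hi T hT
    exact absurd h2.1 (by simp [subset_empty.1 h1])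
  · intro Y x hY hx hd ih I F hF
    -- a family containing `{x}` is served by `{x}`, and `x` is added to the hitting set;
    -- if there is none, the leaf `x` may be cut off from all members
    by_cases hsing : ∃ i₀ ∈ I, F i₀ {x}
    · obtain ⟨i₀, hi₀, hFi₀⟩ := hsing
      obtain ⟨J, hJ, X, hX, hc, R, hR1, hR2, hR3⟩ := ih (I.erase i₀) (fun i S => F i S ∧ x ∉ S)
        (fun i hi S hS => ⟨fun z hz => mem_erase.2 ⟨fun e => hS.2 (e ▸ hz),
          (hF i (mem_of_mem_erase hi) S hS.1).1 hz⟩, (hF i (mem_of_mem_erase hi) S hS.1).2⟩)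
      have hi₀J : i₀ ∉ J := fun h => (mem_erase.1 (hJ h)).1 rfl
      have hxX : x ∉ X := fun h => (mem_erase.1 (hX h)).1 rfl
      refine ⟨insert i₀ J, insert_subset hi₀ (hJ.trans (erase_subset _ _)), insert x X,
        insert_subset hx (hX.trans (erase_subset _ _)), ?_, Function.update R i₀ {x}, ?_, ?_, ?_⟩
      · rw [card_insert_of_notMem hi₀J, card_insert_of_notMem hxX]; omega
      · intro i hi
        rcases eq_or_ne i i₀ with rfl | hne
        · simpa using hFi₀
        · rw [Function.update_of_ne hne]
          exact (hR1 i ((mem_insert.1 hi).resolve_left hne)).1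
      · intro i hi j hj hij
        rcases eq_or_ne i i₀ with rfl | hne
        · rw [Function.update_self, Function.update_of_ne hij.symm, disjoint_singleton_left]
          exact (hR1 j ((mem_insert.1 hj).resolve_left hij.symm)).2
        · rcases eq_or_ne j i₀ with rfl | hne'
          · rw [Function.update_self, Function.update_of_ne hij, disjoint_singleton_right]
            exact (hR1 i ((mem_insert.1 hi).resolve_left hne)).2
          · rw [Function.update_of_ne hne, Function.update_of_ne hne']
            exact hR2 i ((mem_insert.1 hi).resolve_left hne) j
              ((mem_insert.1 hj).resolve_left hne') hij
      · intro i hi hiJ T hT hdis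
        rw [mem_insert, not_or] at hiJ
        rw [disjoint_insert_right] at hdis
        exact hR3 i (mem_erase.2 ⟨hiJ.1, hi⟩) hiJ.2 T ⟨hT, hdis.1⟩ hdis.2
    · push Not at hsing
      obtain ⟨J, hJ, X, hX, hc, R, hR1, hR2, hR3⟩ := ih I
        (fun i S => ∃ S', F i S' ∧ S = S'.erase x) (by
          rintro i hi S ⟨S', hS', rfl⟩
          obtain ⟨h1, h2⟩ := hF i hi S' hS'
          refine ⟨erase_subset_erase _ h1, ?_⟩
          by_cases hxS : x ∈ S'
          · exact h2.erase_leaf hxS ((dg_mono h1 x).trans hd) (fun e => hsing i hi (e ▸ hS'))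
          · rwa [erase_eq_of_notMem hxS])
      choose! R' hR'1 hR'2 using hR1
      refine ⟨J, hJ, X, hX.trans (erase_subset _ _), hc, R', hR'1, ?_, ?_⟩
      · intro i hi j hj hij
        have hdis := hR2 i hi j hj hij
        rw [hR'2 i hi, hR'2 j hj] at hdis
        obtain ⟨hi1, hi2⟩ := hF i (hJ hi) _ (hR'1 i hi)
        obtain ⟨hj1, hj2⟩ := hF j (hJ hj) _ (hR'1 j hj)
        rw [Finset.disjoint_left] at hdis ⊢
        intro z hzi hzj
        -- two members through the removed leaf both contain its only neighbour
        rcases eq_or_ne z x with rfl | hzx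
        · obtain ⟨p, hp, hzp⟩ := hi2.leaf_nbr hzi (fun e => hsing i (hJ hi) (e ▸ hR'1 i hi))
          obtain ⟨q, hq, hzq⟩ := hj2.leaf_nbr hzj (fun e => hsing j (hJ hj) (e ▸ hR'1 j hj))
          have := dg_le_one_unique hd (hi1 hp) (hj1 hq) hzp hzq
          subst this
          exact hdis (mem_erase.2 ⟨hzp.ne', hp⟩) (mem_erase.2 ⟨hzp.ne', hq⟩)
        · exact hdis (mem_erase.2 ⟨hzx, hzi⟩) (mem_erase.2 ⟨hzx, hzj⟩)
      · intro i hi hiJ T hT hdis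
        exact hR3 i hi hiJ _ ⟨T, hT, rfl⟩ (hdis.mono_left (erase_subset _ _))

/-- If a set `X` meets every connected subset of a forest `Y` with two neighbours of `b`, then
`b` together with `Y \ X` is a forest. -/
lemma acyc_of_hit {Y X : Finset V} (hY : Acyc G Y)
    (h : ∀ T, (T ⊆ Y ∧ Conn G T ∧ 2 ≤ dg G T b) → ¬ Disjoint T X) :
    Acyc G (insert b (Y \ X)) := by
  refine acyc_insert (hY.mono sdiff_subset) (fun S hS hcon => ?_)
  by_contra hlt
  refine h S ⟨hS.trans sdiff_subset, hcon, by omega⟩ ?_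
  exact Finset.disjoint_of_subset_left hS sdiff_disjoint

/-- Either `b` carries `t` cycles that pairwise share only `b`, all inside the forest `Y` apart
from `b`, or at most `t` vertices of `Y` meet all such cycles. -/
lemma flower {Y : Finset V} (hY : Acyc G Y) (t : ℕ) :
    (∃ R : Fin t → Finset V, (∀ i, R i ⊆ Y ∧ Conn G (R i) ∧ 2 ≤ dg G (R i) b) ∧
      ∀ i j, i ≠ j → Disjoint (R i) (R j)) ∨
    ∃ X ⊆ Y, #X ≤ t ∧ Acyc G (insert b (Y \ X)) := by
  obtain ⟨J, -, X, hX, hc, R, hR1, hR2, hR3⟩ := colorful Y hY (univ : Finset (Fin t))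
    (fun _ T => T ⊆ Y ∧ Conn G T ∧ 2 ≤ dg G T b) (fun _ _ S hS => ⟨hS.1, hS.2.1⟩)
  by_cases hJ : J = univ
  · subst hJ
    exact Or.inl ⟨R, fun i => hR1 i (mem_univ _), fun i j => hR2 i (mem_univ _) j (mem_univ _)⟩
  · right
    obtain ⟨i, hi⟩ : ∃ i, i ∉ J := by
      by_contra! h; exact hJ (eq_univ_iff_forall.2 h)
    refine ⟨X, hX, hc.trans ((card_le_univ J).trans (by simp)), ?_⟩
    exact acyc_of_hit hY (hR3 i (mem_univ _) hi)

/-- A nonempty set of minimum degree at least three without thick subsets of size at most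
`2 * r + 2` has at least `2 ^ r` vertices: each vertex reached by a path of length `i < r` leads
to two new ones, and these are all distinct. -/
lemma exp_growth (hS : S.Nonempty) (hdeg : ∀ x ∈ S, 3 ≤ dg G S x) (r : ℕ)
    (hno : ∀ T ⊆ S, #T ≤ 2 * r + 2 → ¬ Thick G T) : 2 ^ r ≤ #S := by
  have hac : ∀ T ⊆ S, #T ≤ 2 * r + 2 → Acyc G T := fun T hT hc U hU =>
    hno U (hU.trans hT) ((card_le_card hU).trans hc)
  obtain ⟨v, hv⟩ := hS
  have main : ∀ i ≤ r, ∃ L ⊆ S, ∃ P : V → Finset V, 2 ^ i ≤ #L ∧ ∀ y ∈ L,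
      v ∈ P y ∧ y ∈ P y ∧ P y ⊆ S ∧ Conn G (P y) ∧ #(P y) ≤ i + 1 ∧ dg G (P y) y ≤ 1 := by
    intro i
    induction i with
    | zero =>
      intro _
      refine ⟨{v}, by simpa using hv, fun _ => {v}, by simp, ?_⟩
      intro y hy
      rw [mem_singleton] at hy
      subst hy
      exact ⟨by simp, by simp, by simpa using hv, conn_singleton _, by simp,
        by simp [dg_singleton_self]⟩
    | succ i ih =>
      intro hir
      obtain ⟨L, hL, P, hcard, hP⟩ := ih (by omega)
      let N : V → Finset V := fun y => {z ∈ S | G.Adj y z ∧ z ∉ P y}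
      have hNcard : ∀ y ∈ L, 2 ≤ #(N y) := by
        intro y hy
        obtain ⟨-, -, hPS, -, -, hd⟩ := hP y hy
        have h3 := hdeg y (hL hy)
        have : dg G S y = dg G (P y) y + dg G (S \ P y) y := by
          rw [← dg_union disjoint_sdiff, union_sdiff_of_subset hPS]
        have h4 : dg G (S \ P y) y = #(N y) := by
          unfold dg
          congr 1
          ext z
          simp only [mem_filter, Finset.mem_sdiff, N]
          tauto
        omega
      -- a vertex extending two different paths closes a cycle of length at most `2 * i + 2`
      have hNdis : ∀ y₁ ∈ L, ∀ y₂ ∈ L, y₁ ≠ y₂ → Disjoint (N y₁) (N y₂) := by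
        intro y₁ h₁ y₂ h₂ hne
        rw [Finset.disjoint_left]
        intro z hz₁ hz₂
        simp only [mem_filter, N] at hz₁ hz₂
        obtain ⟨hv₁, hy₁, hPS₁, hc₁, hn₁, -⟩ := hP y₁ h₁
        obtain ⟨hv₂, hy₂, hPS₂, hc₂, hn₂, -⟩ := hP y₂ h₂
        have hcon := hc₁.union hc₂ ⟨v, mem_inter.2 ⟨hv₁, hv₂⟩⟩
        have hle := hcon.dg_le_one (b := z) (by simp [hz₁.2.2, hz₂.2.2])
          (hac _ (insert_subset hz₁.1 (union_subset hPS₁ hPS₂)) (by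
            have := card_insert_le z (P y₁ ∪ P y₂)
            have := card_union_le (P y₁) (P y₂)
            omega))
        have := dg_two (mem_union_left (P y₂) hy₁) (mem_union_right (P y₁) hy₂) hne
          hz₁.2.1.symm hz₂.2.1.symm
        omega
      have hex : ∀ z ∈ L.biUnion N, ∃ y ∈ L, z ∈ N y := fun z hz => by simpa using hz
      choose! q hq1 hq2 using hex
      refine ⟨L.biUnion N, ?_, fun z => insert z (P (q z)), ?_, ?_⟩
      · intro z hz
        exact (mem_filter.1 (hq2 z hz)).1
      · rw [card_biUnion hNdis]
        have := card_nsmul_le_sum L (fun y => #(N y)) 2 hNcard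
        rw [smul_eq_mul] at this
        rw [pow_succ]
        omega
      · intro z hz
        have hz' := hq2 z hz
        simp only [mem_filter, N] at hz'
        obtain ⟨hv₁, hy₁, hPS₁, hc₁, hn₁, -⟩ := hP _ (hq1 z hz)
        have hcard' := card_insert_le z (P (q z))
        have hsub : insert z (P (q z)) ⊆ S := insert_subset hz'.1 hPS₁
        refine ⟨mem_insert_of_mem hv₁, mem_insert_self _ _, hsub,
          hc₁.insert hy₁ hz'.2.1.symm, hcard'.trans (by omega), ?_⟩
        rw [← dg_erase_self, erase_insert hz'.2.2]
        exact hc₁.dg_le_one hz'.2.2 (hac _ hsub (by omega))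
  obtain ⟨L, hL, -, hcard, -⟩ := main r le_rfl
  exact hcard.trans (card_le_card hL)

/-- Two disjoint trees both attached to `a` and `a'` close a cycle. -/
lemma pair_cycle {K₁ K₂ : Finset V} {a a' : V} (hne : a ≠ a') (hK : Disjoint K₁ K₂)
    (h₁ : Conn G K₁) (h₂ : Conn G K₂) (ha : a ∉ K₁ ∪ K₂) (ha' : a' ∉ K₁ ∪ K₂)
    (d₁ : 1 ≤ dg G K₁ a) (d₂ : 1 ≤ dg G K₂ a) (d₁' : 1 ≤ dg G K₁ a') (d₂' : 1 ≤ dg G K₂ a') :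
    ¬ Acyc G (insert a (insert a' (K₁ ∪ K₂))) := by
  intro hac
  have hacK : Acyc G (K₁ ∪ K₂) := hac.mono ((subset_insert _ _).trans (subset_insert _ _))
  have e₁ := h₁.ee_ge (hacK.mono subset_union_left)
  have e₂ := h₂.ee_ge (hacK.mono subset_union_right)
  have haa : a ∉ insert a' (K₁ ∪ K₂) := by simp only [mem_insert, not_or]; exact ⟨hne, ha⟩
  have h := hac.ee_le (by simp)
  rw [ee_insert haa, ee_insert ha', ee_union hK, card_insert_of_notMem haa,
    card_insert_of_notMem ha', card_union_of_disjoint hK] at h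
  have m := dg_mono (G := G) (subset_insert a' (K₁ ∪ K₂)) a
  rw [dg_union hK] at m
  rw [dg_union hK] at h
  omega

lemma comp_disjoint {Y : Finset V} {y z : V} (hy : y ∈ Y) (hz : z ∈ Y)
    (h : comp G Y y ≠ comp G Y z) : Disjoint (comp G Y y) (comp G Y z) := by
  rw [Finset.disjoint_left]
  intro w hw hw'
  exact h ((comp_eq_of_mem hw hy).symm.trans (comp_eq_of_mem hw' hz))

/-- A component of the forest `Y` in a set `A ∪ Y` of minimum degree at least three is no larger
than `A`, provided each vertex of `A` sends at most one edge to it. -/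
lemma comp_card {A Y : Finset V} (hdis : Disjoint A Y) (hY : Acyc G Y)
    (hdeg : ∀ x ∈ Y, 3 ≤ dg G (A ∪ Y) x) (hy : y ∈ Y)
    (hone : ∀ a ∈ A, dg G (comp G Y y) a ≤ 1) : #(comp G Y y) ≤ #A := by
  set K := comp G Y y with hK
  have hKY : K ⊆ Y := comp_subset _ _
  have h1 : 3 * #K ≤ ee G K (A ∪ Y) := by
    rw [mul_comm, ← smul_eq_mul]
    exact card_nsmul_le_sum _ _ _ fun x hx => hdeg x (hKY hx)
  have h2 : ee G K Y = ee G K K := by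
    refine sum_congr rfl fun x hx => ?_
    unfold dg
    congr 1
    ext z
    simp only [mem_filter]
    exact ⟨fun h => ⟨comp_closed x hx z h.1 h.2, h.2⟩, fun h => ⟨hKY h.1, h.2⟩⟩
  have h3 : ee G K A ≤ #A := by
    rw [ee_comm]
    have := sum_le_card_nsmul A (fun a => dg G K a) 1 hone
    simpa [ee] using this
  have h4 := (hY.mono hKY).ee_le ⟨y, mem_comp_self hy⟩
  rw [ee_union_right _ hdis, h2] at h1
  omega

/-- A component of `Y` that has at most one edge to the surviving vertices outside `Y` can be
put back without creating cycles. -/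
lemma reattach {A Y B : Finset V} (hY : Acyc G Y)
    (hB : Acyc G (((A ∪ Y) \ comp G Y y) \ B)) (hone : ∀ a ∈ A, dg G (comp G Y y) a ≤ 1)
    (hpair : ∀ a ∈ A, ∀ a' ∈ A, a ≠ a' → 1 ≤ dg G (comp G Y y) a → 1 ≤ dg G (comp G Y y) a' →
      a ∈ B ∨ a' ∈ B) :
    Acyc G ((A ∪ Y) \ B) := by
  set K := comp G Y y with hK
  have hKY : K ⊆ Y := comp_subset _ _
  intro T hT hth
  rcases (T ∩ K).eq_empty_or_nonempty with h0 | h0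
  · refine hB T (fun x hx => ?_) hth
    have hx' := Finset.mem_sdiff.1 (hT hx)
    refine Finset.mem_sdiff.2 ⟨Finset.mem_sdiff.2 ⟨hx'.1, fun hxK => ?_⟩, hx'.2⟩
    have : x ∈ T ∩ K := mem_inter.2 ⟨hx, hxK⟩
    simp [h0] at this
  refine thick_part hth inter_subset_left h0 ?_ (hY.mono (inter_subset_right.trans hKY))
  have h1 : ee G (T ∩ K) (T \ (T ∩ K)) ≤ ee G K (T ∩ A) := by
    refine (sum_le_sum_of_subset inter_subset_right).trans
      (sum_le_sum fun x hx => card_le_card fun z hz => ?_)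
    rw [mem_filter, Finset.mem_sdiff, mem_inter] at hz
    rw [mem_filter, mem_inter]
    refine ⟨⟨hz.1.1, ?_⟩, hz.2⟩
    rcases mem_union.1 (Finset.mem_sdiff.1 (hT hz.1.1)).1 with h | h
    · exact h
    · exact absurd ⟨hz.1.1, comp_closed x hx z h hz.2⟩ hz.1.2
  refine h1.trans ?_
  rw [ee_comm]
  by_contra hgt
  have h2 : ee G (T ∩ A) K ≤ #{a ∈ T ∩ A | 1 ≤ dg G K a} := by
    rw [card_filter]
    refine sum_le_sum fun a ha => ?_
    have := hone a (mem_inter.1 ha).2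
    split_ifs <;> omega
  obtain ⟨a, ha, a', ha', hne⟩ := Finset.one_lt_card.1 (by omega : 1 < #{a ∈ T ∩ A | 1 ≤ dg G K a})
  simp only [mem_filter, mem_inter] at ha ha'
  rcases hpair a ha.1.2 a' ha'.1.2 hne ha.2 ha'.2 with h | h
  · exact (Finset.mem_sdiff.1 (hT ha.1.1)).2 h
  · exact (Finset.mem_sdiff.1 (hT ha'.1.1)).2 h

end Forests
end Growth

/-! ### Reductions for the Erdős–Pósa theorem -/

namespace Growth
open Finset
open scoped Classical

section ErdosPosa
variable {V : Type*} {G : SimpleGraph V} {S T U : Finset V} {x y b : V}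

/-- `S` contains `m` pairwise disjoint thick sets, equivalently `m` disjoint cycles. -/
def Pack (G : SimpleGraph V) (S : Finset V) (m : ℕ) : Prop :=
  ∃ T : Fin m → Finset V, (∀ i, T i ⊆ S ∧ Thick G (T i)) ∧ ∀ i j, i ≠ j → Disjoint (T i) (T j)

/-- `S` has a hitting set for its cycles with at most `f` vertices. -/
def Hit (G : SimpleGraph V) (S : Finset V) (f : ℕ) : Prop :=
  ∃ B : Finset V, #B ≤ f ∧ Acyc G (S \ B)

lemma Pack.mono {m : ℕ} (h : Pack G S m) (hST : S ⊆ T) : Pack G T m := by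
  obtain ⟨P, h1, h2⟩ := h
  exact ⟨P, fun i => ⟨(h1 i).1.trans hST, (h1 i).2⟩, h2⟩

lemma Pack.cons {m : ℕ} (hT : T ⊆ S) (hth : Thick G T) (h : Pack G (S \ T) m) :
    Pack G S (m + 1) := by
  obtain ⟨P, h1, h2⟩ := h
  have hd : ∀ i, Disjoint T (P i) := fun i =>
    (Finset.disjoint_of_subset_left (h1 i).1 sdiff_disjoint).symm
  refine ⟨Fin.cons T P, fun i => ?_, fun i j hij => ?_⟩
  · refine Fin.cases ?_ (fun i => ?_) i
    · simpa using ⟨hT, hth⟩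
    · simpa using ⟨(h1 i).1.trans sdiff_subset, (h1 i).2⟩
  · revert hij
    refine Fin.cases ?_ (fun i => ?_) i <;> refine Fin.cases ?_ (fun j => ?_) j <;> intro hij
    · exact absurd rfl hij
    · simpa using hd j
    · simpa using (hd i).symm
    · simpa using h2 i j (fun e => hij (by rw [e]))

lemma Thick.congr {G' : SimpleGraph V} (h : ∀ x ∈ T, ∀ z ∈ T, G.Adj x z → G'.Adj x z)
    (hT : Thick G T) : Thick G' T := by
  refine ⟨hT.1, fun x hx => (hT.2 x hx).trans (card_le_card fun z hz => ?_)⟩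
  rw [mem_filter] at hz ⊢
  exact ⟨hz.1, h x hx z hz.1 hz.2⟩

lemma dg_edge_le (a b : V) (T : Finset V) (y : V) :
    dg (G ⊔ edge a b) T y ≤ dg G T y + (if y = a then 1 else 0) + (if y = b then 1 else 0) := by
  unfold dg
  refine (card_le_card (t := {z ∈ T | G.Adj y z} ∪
      ((if y = a then {b} else ∅) ∪ (if y = b then {a} else ∅))) fun z hz => ?_).trans
      ((card_union_le _ _).trans ?_)
  · simp only [mem_filter, sup_adj, edge_adj] at hz
    simp only [mem_union, mem_filter]
    rcases hz.2 with h | ⟨⟨rfl, rfl⟩ | ⟨rfl, rfl⟩, -⟩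
    · exact Or.inl ⟨hz.1, h⟩
    · simp
    · simp
  have := card_union_le (if y = a then {b} else (∅ : Finset V)) (if y = b then {a} else ∅)
  have h1 : #(if y = a then {b} else (∅ : Finset V)) = if y = a then 1 else 0 := by
    split_ifs <;> simp
  have h2 : #(if y = b then {a} else (∅ : Finset V)) = if y = b then 1 else 0 := by
    split_ifs <;> simp
  omega

lemma dg_edge_ge {a b : V} (hab : a ≠ b) (hn : ¬ G.Adj a b) (hb : b ∈ T) :
    dg G T a + 1 ≤ dg (G ⊔ edge a b) T a := by
  unfold dg
  rw [← card_insert_of_notMem (s := {z ∈ T | G.Adj a z}) (a := b) (by simp [hn])]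
  refine card_le_card fun z hz => ?_
  simp only [mem_insert, mem_filter] at hz ⊢
  rcases hz with rfl | hz
  · exact ⟨hb, by simp [sup_adj, edge_adj, hab]⟩
  · exact ⟨hz.1, Or.inl hz.2⟩

/-- Suppressing a vertex `x` of degree two whose neighbours `a`, `b` are not adjacent: disjoint
cycles and hitting sets of the smaller graph carry over, and the number of edges does not grow. -/
lemma suppress {a b : V} (hx : x ∈ S) (hab : a ≠ b) (hn : ¬ G.Adj a b)
    (hnb : {z ∈ S | G.Adj x z} = {a, b}) :
    (∀ m, Pack (G ⊔ edge a b) (S.erase x) m → Pack G S m) ∧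
    (∀ f, Hit (G ⊔ edge a b) (S.erase x) f → Hit G S f) ∧
    ee (G ⊔ edge a b) (S.erase x) (S.erase x) ≤ ee G S S := by
  have ha : a ∈ S ∧ G.Adj x a := by
    have : a ∈ ({z ∈ S | G.Adj x z} : Finset V) := by rw [hnb]; simp
    simpa using this
  have hb : b ∈ S ∧ G.Adj x b := by
    have : b ∈ ({z ∈ S | G.Adj x z} : Finset V) := by rw [hnb]; simp
    simpa using this
  refine ⟨?_, ?_, ?_⟩
  · rintro m ⟨P, hP1, hP2⟩
    have hxP : ∀ i, x ∉ P i := fun i h => (mem_erase.1 ((hP1 i).1 h)).1 rfl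
    refine ⟨fun i => if a ∈ P i ∧ b ∈ P i then insert x (P i) else P i, fun i => ?_, ?_⟩
    · have hPS : P i ⊆ S := (hP1 i).1.trans (erase_subset _ _)
      by_cases hi : a ∈ P i ∧ b ∈ P i
      · simp only [hi, and_self, if_true]
        refine ⟨insert_subset hx hPS, by simp, fun y hy => ?_⟩
        rcases mem_insert.1 hy with rfl | hy'
        · exact dg_two (mem_insert_of_mem hi.1) (mem_insert_of_mem hi.2) hab ha.2 hb.2
        · have h1 := (hP1 i).2.2 y hy'
          have h2 := dg_edge_le (G := G) a b (P i) y
          rw [dg_insert (hxP i)]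
          by_cases hya : y = a
          · have hyb : y ≠ b := fun e => hab (hya.symm.trans e)
            have : G.Adj y x := hya ▸ ha.2.symm
            simp only [hya, hab, if_true, if_false] at h1 h2
            rw [if_pos this, hya]; omega
          · by_cases hyb : y = b
            · have : G.Adj y x := hyb ▸ hb.2.symm
              simp only [hyb, hab.symm, if_true, if_false] at h1 h2
              rw [if_pos this, hyb]; omega
            · simp only [hya, hyb, if_false] at h2
              omega
      · simp only [hi, if_false]
        refine ⟨hPS, (hP1 i).2.congr fun y hy z hz hadj => ?_⟩
        simp only [sup_adj, edge_adj] at hadj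
        rcases hadj with h | ⟨⟨rfl, rfl⟩ | ⟨rfl, rfl⟩, -⟩
        · exact h
        · exact absurd ⟨hy, hz⟩ hi
        · exact absurd ⟨hz, hy⟩ hi
    · intro i j hij
      have hd := hP2 i j hij
      have hnot : ¬ ((a ∈ P i ∧ b ∈ P i) ∧ (a ∈ P j ∧ b ∈ P j)) := fun h =>
        Finset.disjoint_left.1 hd h.1.1 h.2.1
      by_cases hi : a ∈ P i ∧ b ∈ P i
      · have hj : ¬ (a ∈ P j ∧ b ∈ P j) := fun h => hnot ⟨hi, h⟩
        simp only [hi, hj, and_self, if_true, if_false]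
        exact disjoint_insert_left.2 ⟨hxP j, hd⟩
      · simp only [hi, if_false]
        split_ifs
        · exact disjoint_insert_right.2 ⟨hxP i, hd⟩
        · exact hd
  · rintro f ⟨B, hB, hac⟩
    refine ⟨B, hB, fun T hT hth => ?_⟩
    by_cases hxT : x ∈ T
    · have hTS : T ⊆ S := hT.trans sdiff_subset
      have hfil : {z ∈ T | G.Adj x z} = {a, b} := by
        refine eq_of_subset_of_card_le ?_ ?_
        · rw [← hnb]; exact filter_subset_filter _ hTS
        · rw [card_pair hab]; exact hth.2 x hxT
      have haT : a ∈ T := by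
        have : a ∈ ({z ∈ T | G.Adj x z} : Finset V) := by rw [hfil]; simp
        exact (mem_filter.1 this).1
      have hbT : b ∈ T := by
        have : b ∈ ({z ∈ T | G.Adj x z} : Finset V) := by rw [hfil]; simp
        exact (mem_filter.1 this).1
      have haT' : a ∈ T.erase x := mem_erase.2 ⟨ha.2.ne', haT⟩
      have hbT' : b ∈ T.erase x := mem_erase.2 ⟨hb.2.ne', hbT⟩
      refine hac (T.erase x) ?_ ⟨⟨a, haT'⟩, fun y hy => ?_⟩
      · intro z hz
        have := Finset.mem_sdiff.1 (hT (mem_of_mem_erase hz))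
        exact Finset.mem_sdiff.2 ⟨mem_erase.2 ⟨ne_of_mem_erase hz, this.1⟩, this.2⟩
      · have h1 := hth.2 y (mem_of_mem_erase hy)
        rw [dg_erase hxT] at h1
        have h2 := dg_graph_mono (le_sup_left : G ≤ G ⊔ edge a b) (T.erase x) y
        by_cases hyx : G.Adj y x
        · rw [if_pos hyx] at h1
          have : y ∈ ({z ∈ T | G.Adj x z} : Finset V) :=
            mem_filter.2 ⟨mem_of_mem_erase hy, hyx.symm⟩
          rw [hfil, mem_insert, mem_singleton] at this
          rcases this with rfl | rfl
          · have := dg_edge_ge hab hn hbT'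
            omega
          · have := dg_edge_ge hab.symm (fun h => hn h.symm) haT'
            rw [edge_comm] at this
            omega
        · rw [if_neg hyx] at h1
          omega
    · refine hac T (fun z hz => ?_) (hth.graph_mono le_sup_left)
      have := Finset.mem_sdiff.1 (hT hz)
      exact Finset.mem_sdiff.2 ⟨mem_erase.2 ⟨fun e => hxT (e ▸ hz), this.1⟩, this.2⟩
  · have hd : dg G S x = 2 := by unfold dg; rw [hnb, card_pair hab]
    rw [ee_erase hx, hd]
    calc ee (G ⊔ edge a b) (S.erase x) (S.erase x)
        ≤ ∑ y ∈ S.erase x, (dg G (S.erase x) y + (if y = a then 1 else 0) +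
            (if y = b then 1 else 0)) := sum_le_sum fun y _ => dg_edge_le a b _ y
      _ ≤ _ := by
        rw [sum_add_distrib, sum_add_distrib, sum_ite_eq', sum_ite_eq']
        unfold ee
        split_ifs <;> omega

lemma dg_lt {G' : SimpleGraph V} (h : G' ≤ G) (hy : y ∈ T) (h1 : G.Adj b y)
    (h2 : ¬ G'.Adj b y) : dg G' T b < dg G T b := by
  unfold dg
  refine card_lt_card ((Finset.ssubset_iff_of_subset fun z hz => ?_).2
    ⟨y, by simp [hy, h1], by simp [h2]⟩)
  rw [mem_filter] at hz ⊢
  exact ⟨hz.1, h hz.2⟩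

lemma Hit.of_erase_leaf {f : ℕ} (hd : dg G S x ≤ 1) (h : Hit G (S.erase x) f) : Hit G S f := by
  obtain ⟨B, hB, hac⟩ := h
  refine ⟨B, hB, fun T hT hth => ?_⟩
  by_cases hxT : x ∈ T
  · have := hth.2 x hxT
    have := dg_mono (G := G) (hT.trans sdiff_subset) x
    omega
  · refine hac T (fun z hz => ?_) hth
    have := Finset.mem_sdiff.1 (hT hz)
    exact Finset.mem_sdiff.2 ⟨mem_erase.2 ⟨fun e => hxT (e ▸ hz), this.1⟩, this.2⟩

/-- If `b` carries `f + 2` cycles that are disjoint outside `b`, then every hitting set of size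
`f` that works after deletion of one suitable edge `b y` contains `b`, since `B` and `y` together
miss one of the cycles otherwise. Hence it works for the whole graph. -/
lemma flower_reduce {f : ℕ} (hb : b ∈ S) (R : Fin (f + 2) → Finset V)
    (hR : ∀ i, R i ⊆ S ∧ b ∉ R i ∧ Conn G (R i) ∧ 2 ≤ dg G (R i) b)
    (hdis : ∀ i j, i ≠ j → Disjoint (R i) (R j)) :
    ∃ G' ≤ G, ee G' S S < ee G S S ∧ (Hit G' S f → Hit G S f) := by
  obtain ⟨y, hy⟩ : ({y ∈ R 0 | G.Adj b y}).Nonempty := card_pos.1 (by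
    have := (hR 0).2.2.2; unfold dg at this; omega)
  rw [mem_filter] at hy
  have hyS : y ∈ S := (hR 0).1 hy.1
  refine ⟨G.deleteEdges {s(b, y)}, deleteEdges_le _, ?_, ?_⟩
  · refine sum_lt_sum (fun x _ => dg_graph_mono (deleteEdges_le _) S x) ⟨b, hb, ?_⟩
    exact dg_lt (deleteEdges_le _) hyS hy.2 (by simp)
  · rintro ⟨B, hB, hac⟩
    have agree : ∀ T, (b ∉ T ∨ y ∉ T) → Thick G T → Thick (G.deleteEdges {s(b, y)}) T := by
      intro T hT hth
      refine hth.congr fun u hu v hv hadj => ?_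
      simp only [deleteEdges_adj, Set.mem_singleton_iff, Sym2.eq_iff]
      refine ⟨hadj, ?_⟩
      rintro (⟨rfl, rfl⟩ | ⟨rfl, rfl⟩)
      · exact hT.elim (fun h => h hu) (fun h => h hv)
      · exact hT.elim (fun h => h hv) (fun h => h hu)
    by_cases hbB : b ∈ B
    · refine ⟨B, hB, fun T hT hth => hac T hT (agree T (Or.inl fun h => ?_) hth)⟩
      exact (Finset.mem_sdiff.1 (hT h)).2 hbB
    · exfalso
      have hmeet : ∀ i, ∃ z ∈ R i, z ∈ insert y B := by
        intro i
        by_contra! hcon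
        obtain ⟨hRS, hbR, hcR, hd⟩ := hR i
        have hnac : ¬ Acyc G (insert b (R i)) := fun h => by
          have := hcR.dg_le_one hbR h; omega
        unfold Acyc at hnac
        push Not at hnac
        obtain ⟨T, hT, hth⟩ := hnac
        refine hac T (fun z hz => ?_) (agree T (Or.inr fun h => ?_) hth)
        · rcases mem_insert.1 (hT hz) with rfl | h
          · exact Finset.mem_sdiff.2 ⟨hb, hbB⟩
          · exact Finset.mem_sdiff.2 ⟨hRS h, fun h' => hcon z h (mem_insert_of_mem h')⟩
        · rcases mem_insert.1 (hT h) with h' | h'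
          · exact hy.2.ne h'.symm
          · exact hcon y h' (mem_insert_self _ _)
      choose z hz1 hz2 using hmeet
      have hinj : Function.Injective z := fun i j hij => by
        by_contra hne
        exact Finset.disjoint_left.1 (hdis i j hne) (hz1 i) (hij ▸ hz1 j)
      have hc := card_le_card_of_injOn (s := (univ : Finset (Fin (f + 2)))) (t := insert y B) z
        (fun i _ => hz2 i) hinj.injOn
      have := card_insert_le y B
      rw [card_univ, Fintype.card_fin] at hc
      omega

end ErdosPosa
end Growth

/-! ### The Erdős–Pósa theorem -/

namespace Growth
open Finset
open scoped Classical

section ErdosPosaStep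
variable {V : Type*} {G : SimpleGraph V} {S T U : Finset V} {x y b : V}

/-- If a hitting set `B` of `f + 1` vertices is known, no vertex of `B` carries a large flower,
and `S` is large with minimum degree three, then some component of what is left after deleting few
vertices is redundant, so a hitting set of size `f` for the rest of `S` works for `S`. -/
lemma ep_core {f : ℕ} {B : Finset V} (hBS : B ⊆ S) (hBc : #B ≤ f + 1) (hF : Acyc G (S \ B))
    (hdeg : ∀ x ∈ S, 3 ≤ dg G S x)
    (hX : ∀ b ∈ B, ∃ X ⊆ S \ B, #X ≤ f + 2 ∧ Acyc G (insert b ((S \ B) \ X)))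
    (hlarge : (f + 2) ^ 8 < #S) (hK : ∀ K ⊆ S, K.Nonempty → Hit G (S \ K) f) : Hit G S f := by
  choose! X hX1 hX2 hX3 using hX
  -- after deletion of `A`, every component of the rest sends at most one edge to each vertex of `A`
  set A := B ∪ B.biUnion X with hA
  have hAS : A ⊆ S := by
    refine union_subset hBS (biUnion_subset.2 fun b hb => (hX1 b hb).trans sdiff_subset)
  have hAc : #A ≤ (f + 2) ^ 2 := by
    have h1 : #(B.biUnion X) ≤ #B * (f + 2) := card_biUnion_le_card_mul _ _ _ hX2
    have h2 : #A ≤ #B + #(B.biUnion X) := card_union_le _ _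
    nlinarith
  set Y := S \ A with hY
  have hdis : Disjoint A Y := disjoint_sdiff
  have hAY : A ∪ Y = S := union_sdiff_of_subset hAS
  have hYF : Y ⊆ S \ B := sdiff_subset_sdiff le_rfl subset_union_left
  have hYac : Acyc G Y := hF.mono hYF
  have hnA : ∀ a ∈ A, ∀ y, a ∉ comp G Y y := fun a ha y h =>
    Finset.disjoint_left.1 hdis ha (comp_subset Y y h)
  have hone : ∀ y ∈ Y, ∀ a ∈ A, dg G (comp G Y y) a ≤ 1 := by
    intro y hy a ha
    refine (conn_comp hy).dg_le_one (hnA a ha y) ?_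
    rcases mem_union.1 ha with h | h
    · refine (hX3 a h).mono (insert_subset_insert _ fun z hz => ?_)
      have hz := comp_subset Y y hz
      refine Finset.mem_sdiff.2 ⟨hYF hz, fun hzX => (Finset.mem_sdiff.1 hz).2 ?_⟩
      exact mem_union_right _ (mem_biUnion.2 ⟨a, h, hzX⟩)
    · obtain ⟨b, hb, hab⟩ := mem_biUnion.1 h
      exact hF.mono (insert_subset (hX1 b hb hab) ((comp_subset Y y).trans hYF))
  set L : V × V → Finset (Finset V) := fun p =>
    {K ∈ Y.image (comp G Y) | 1 ≤ dg G K p.1 ∧ 1 ≤ dg G K p.2} with hL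
  -- `L (a, a')` lists the components of `Y` attached to both `a` and `a'`. A component that shares
  -- every such pair with `f + 2` others is redundant: a set of size `f` that avoids `a` and `a'`
  -- misses two of these others, which form a cycle with `a` and `a'`.
  by_cases h : ∃ y ∈ Y, ∀ a ∈ A, ∀ a' ∈ A, a ≠ a' → 1 ≤ dg G (comp G Y y) a →
      1 ≤ dg G (comp G Y y) a' → f + 3 ≤ #(L (a, a'))
  · obtain ⟨y, hy, hheavy⟩ := h
    obtain ⟨B', hB'c, hB'⟩ := hK (comp G Y y) ((comp_subset Y y).trans sdiff_subset)
      ⟨y, mem_comp_self hy⟩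
    refine ⟨B', hB'c, ?_⟩
    rw [← hAY] at hB' ⊢
    refine reattach hYac hB' (hone y hy) fun a ha a' ha' hne h1 h2 => ?_
    by_contra! hcon
    have hcard : 1 < #((L (a, a') \ B'.image (comp G Y)).erase (comp G Y y)) := by
      have e1 := hheavy a ha a' ha' hne h1 h2
      have e2 : #(B'.image (comp G Y)) ≤ #B' := card_image_le
      have e3 := le_card_sdiff (B'.image (comp G Y)) (L (a, a'))
      have e4 := pred_card_le_card_erase (s := L (a, a') \ B'.image (comp G Y))
        (a := comp G Y y)
      omega
    obtain ⟨K₁, hK₁, K₂, hK₂, hK₁₂⟩ := one_lt_card.1 hcard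
    have key : ∀ K ∈ (L (a, a') \ B'.image (comp G Y)).erase (comp G Y y),
        ∃ z ∈ Y, comp G Y z = K ∧ K ⊆ ((A ∪ Y) \ comp G Y y) \ B' ∧ 1 ≤ dg G K a ∧
          1 ≤ dg G K a' := by
      intro K hK
      rw [mem_erase, Finset.mem_sdiff, hL, mem_filter, mem_image] at hK
      obtain ⟨hne', ⟨⟨z, hz, rfl⟩, hd1, hd2⟩, hnB⟩ := hK
      refine ⟨z, hz, rfl, fun w hw => ?_, hd1, hd2⟩
      refine Finset.mem_sdiff.2 ⟨Finset.mem_sdiff.2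
        ⟨mem_union_right _ (comp_subset _ _ hw), fun hw' => ?_⟩, fun hw' => ?_⟩
      · exact Finset.disjoint_left.1 (comp_disjoint hz hy hne') hw hw'
      · exact hnB (mem_image.2 ⟨w, hw', comp_eq_of_mem hw hz⟩)
    obtain ⟨z₁, hz₁, rfl, s₁, d₁, d₁'⟩ := key K₁ hK₁
    obtain ⟨z₂, hz₂, rfl, s₂, d₂, d₂'⟩ := key K₂ hK₂
    refine pair_cycle hne (comp_disjoint hz₁ hz₂ hK₁₂) (conn_comp hz₁) (conn_comp hz₂) ?_ ?_
      d₁ d₂ d₁' d₂' (hB'.mono ?_)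
    · simp [hnA a ha]
    · simp [hnA a' ha']
    · have hin : ∀ c ∈ A, c ∉ B' → c ∈ ((A ∪ Y) \ comp G Y y) \ B' := fun c hc hc' =>
        Finset.mem_sdiff.2 ⟨Finset.mem_sdiff.2 ⟨mem_union_left _ hc, hnA c hc y⟩, hc'⟩
      exact insert_subset (hin a ha hcon.1) (insert_subset (hin a' ha' hcon.2)
        (union_subset s₁ s₂))
  · exfalso
    push Not at h
    -- each component is charged to a pair with few components, so `Y` and hence `S` is small
    have hcov : Y.image (comp G Y) ⊆ ((A ×ˢ A).filter fun p => #(L p) ≤ f + 2).biUnion L := by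
      intro K hK
      obtain ⟨y, hy, rfl⟩ := mem_image.1 hK
      obtain ⟨a, ha, a', ha', -, h1, h2, h3⟩ := h y hy
      refine mem_biUnion.2 ⟨(a, a'), mem_filter.2 ⟨mk_mem_product ha ha', by omega⟩, ?_⟩
      exact mem_filter.2 ⟨hK, h1, h2⟩
    have c1 : #(Y.image (comp G Y)) ≤ (#A * #A) * (f + 2) := by
      refine (card_le_card hcov).trans ((card_biUnion_le_card_mul _ _ (f + 2) fun p hp =>
        (mem_filter.1 hp).2).trans (Nat.mul_le_mul_right _ ?_))
      rw [← card_product]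
      exact card_filter_le _ _
    have c2 : #Y ≤ #(Y.image (comp G Y)) * #A := by
      have hsub : Y ⊆ (Y.image (comp G Y)).biUnion id := fun y hy =>
        mem_biUnion.2 ⟨_, mem_image_of_mem _ hy, mem_comp_self hy⟩
      refine (card_le_card hsub).trans (card_biUnion_le_card_mul _ _ _ fun K hK => ?_)
      obtain ⟨y, hy, rfl⟩ := mem_image.1 hK
      exact comp_card hdis hYac (fun x hx => hAY.symm ▸ hdeg x (sdiff_subset hx)) hy (hone y hy)
    have c3 : #S = #A + #Y := by rw [← hAY, card_union_of_disjoint hdis]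
    have c4 : #Y ≤ ((f + 2) ^ 2 * (f + 2) ^ 2) * (f + 2) * (f + 2) ^ 2 :=
      c2.trans (Nat.mul_le_mul (c1.trans (Nat.mul_le_mul_right _ (Nat.mul_le_mul hAc hAc))) hAc)
    have c5 : ((f + 2) ^ 2 * (f + 2) ^ 2) * (f + 2) * (f + 2) ^ 2 = (f + 2) ^ 7 := by ring
    have c6 : (f + 2) ^ 2 ≤ (f + 2) ^ 7 := Nat.pow_le_pow_right (by omega) (by omega)
    have c7 : (f + 2) ^ 8 = (f + 2) ^ 7 * (f + 2) := by ring
    have c8 : 2 * (f + 2) ^ 7 ≤ (f + 2) ^ 7 * (f + 2) := by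
      rw [mul_comm 2]; exact Nat.mul_le_mul_left _ (by omega)
    omega

lemma Pack.graph_mono {m : ℕ} {G' : SimpleGraph V} (h : G' ≤ G) (hP : Pack G' S m) :
    Pack G S m := by
  obtain ⟨P, h1, h2⟩ := hP
  exact ⟨P, fun i => ⟨(h1 i).1, (h1 i).2.graph_mono h⟩, h2⟩

/-- The step from `k` to `k + 1` disjoint cycles, by induction on the number of vertices and edges.
The bound `f` has to absorb a short thick set on top of `f0`, while `2 ^ r` outgrows the bound on
`#S` in `ep_core`. -/
lemma ep_step {k f r f0 : ℕ} (h0 : ∀ (G : SimpleGraph V) S, ¬ Pack G S k → Hit G S f0)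
    (hf : f0 + 2 * r + 2 ≤ f) (hr : 1 ≤ r) (hbig : (f + 2) ^ 8 < 2 ^ r) :
    ∀ n (G : SimpleGraph V) S, #S + ee G S S = n → ¬ Pack G S (k + 1) → Hit G S f := by
  intro n
  induction n using Nat.strong_induction_on with
  | _ n ih =>
  intro G S hn hP
  rcases S.eq_empty_or_nonempty with rfl | hS
  · exact ⟨∅, by simp, by simpa using acyc_empty⟩
  have ih' : ∀ S' ⊂ S, Hit G S' f := fun S' hS' => by
    refine ih _ ?_ G S' rfl fun h => hP (h.mono hS'.1)
    have h1 := card_lt_card hS'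
    have h2 := ee_mono (G := G) hS'.1 hS'.1
    omega
  -- a short cycle goes into the hitting set as a whole
  by_cases hshort : ∃ T ⊆ S, #T ≤ 2 * r + 2 ∧ Thick G T
  · obtain ⟨T, hTS, hTc, hth⟩ := hshort
    obtain ⟨B0, hB0, hac⟩ := h0 G (S \ T) fun h => hP (Pack.cons hTS hth h)
    refine ⟨T ∪ B0, (card_union_le _ _).trans (by omega), ?_⟩
    refine hac.mono fun z hz => ?_
    simp only [Finset.mem_sdiff, mem_union] at hz ⊢
    tauto
  push Not at hshort
  by_cases hlow : ∃ x ∈ S, dg G S x ≤ 1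
  · obtain ⟨x, hx, hd⟩ := hlow
    exact Hit.of_erase_leaf hd (ih' _ (erase_ssubset hx))
  push Not at hlow
  by_cases htwo : ∃ x ∈ S, dg G S x = 2
  · obtain ⟨x, hx, hd⟩ := htwo
    obtain ⟨a, c, hac, hnb⟩ := card_eq_two.1 hd
    have ha : a ∈ S ∧ G.Adj x a := by
      rw [← mem_filter (s := S) (p := fun z => G.Adj x z), hnb]; simp
    have hc : c ∈ S ∧ G.Adj x c := by
      rw [← mem_filter (s := S) (p := fun z => G.Adj x z), hnb]; simp
    -- adjacent neighbours of `x` would give a triangle, which is short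
    by_cases hadj : G.Adj a c
    · exfalso
      refine hshort {x, a, c} ?_ ?_ ⟨by simp, ?_⟩
      · intro z hz
        simp only [mem_insert, mem_singleton] at hz
        rcases hz with rfl | rfl | rfl
        exacts [hx, ha.1, hc.1]
      · exact card_le_three.trans (by omega)
      · intro z hz
        simp only [mem_insert, mem_singleton] at hz
        rcases hz with rfl | rfl | rfl
        · exact dg_two (y := a) (z := c) (by simp) (by simp) hac ha.2 hc.2
        · exact dg_two (y := x) (z := c) (by simp) (by simp) hc.2.ne ha.2.symm hadj
        · exact dg_two (y := x) (z := a) (by simp) (by simp) ha.2.ne hc.2.symm hadj.symm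
    · obtain ⟨s1, s2, s3⟩ := suppress hx hac hadj hnb
      refine s2 f (ih _ ?_ _ _ rfl fun h => hP (s1 _ h))
      have := card_lt_card (erase_ssubset hx)
      omega
  push Not at htwo
  have hdeg : ∀ x ∈ S, 3 ≤ dg G S x := fun x hx => by
    have := hlow x hx; have := htwo x hx; omega
  have hSbig := exp_growth hS hdeg r hshort
  obtain ⟨x, hx⟩ := hS
  obtain ⟨B0, hB0, hac0⟩ := ih' _ (erase_ssubset hx)
  set B := insert x (B0 ∩ S) with hB
  have hBS : B ⊆ S := insert_subset hx inter_subset_right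
  have hF : Acyc G (S \ B) := by
    refine hac0.mono fun z hz => ?_
    simp only [hB, Finset.mem_sdiff, mem_insert, mem_inter, mem_erase] at hz ⊢
    tauto
  -- `B` is one vertex too large; a vertex of `B` with a large flower allows deletion of an edge
  by_cases hfl : ∃ b ∈ B, ∃ R : Fin (f + 2) → Finset V,
      (∀ i, R i ⊆ S \ B ∧ Conn G (R i) ∧ 2 ≤ dg G (R i) b) ∧
      ∀ i j, i ≠ j → Disjoint (R i) (R j)
  · obtain ⟨b, hb, R, hR, hRd⟩ := hfl
    obtain ⟨G', hle, hlt, himp⟩ := flower_reduce (hBS hb) R (fun i =>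
      ⟨(hR i).1.trans sdiff_subset, fun h => (Finset.mem_sdiff.1 ((hR i).1 h)).2 hb, (hR i).2⟩)
      hRd
    exact himp (ih _ (by omega) G' S rfl fun h => hP (h.graph_mono hle))
  push Not at hfl
  refine ep_core hBS ?_ hF hdeg (fun b hb => ?_) (hbig.trans_le hSbig) fun K hKS hK => ?_
  · refine (card_insert_le _ _).trans (Nat.succ_le_succ ?_)
    exact (card_le_card inter_subset_left).trans hB0
  · refine (flower hF (f + 2)).resolve_left ?_
    rintro ⟨R, hR, hRd⟩
    obtain ⟨i, j, hij, hnd⟩ := hfl b hb R hR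
    exact hnd (hRd i j hij)
  · exact ih' _ (sdiff_ssubset hKS hK)

end ErdosPosaStep

lemma exists_pow_lt (c : ℕ) : ∃ r, 1 ≤ r ∧ (c + 2 * r) ^ 8 < 2 ^ r := by
  have h := tendsto_pow_const_div_const_pow_of_one_lt 8 (one_lt_two : (1 : ℝ) < 2)
  have h3 : (0 : ℝ) < ((3 : ℝ) ^ 8)⁻¹ := by positivity
  obtain ⟨r, hr, hr'⟩ := ((h.eventually (gt_mem_nhds h3)).and
    (eventually_ge_atTop (c + 1))).exists
  refine ⟨r, by omega, ?_⟩
  rw [div_lt_iff₀ (by positivity), ← div_eq_inv_mul, lt_div_iff₀ (by positivity)] at hr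
  have : (r * 3) ^ 8 < 2 ^ r := by
    rw [mul_pow]; exact_mod_cast hr
  exact (Nat.pow_le_pow_left (by omega) 8).trans_lt this

/-- Erdős–Pósa: without `k` disjoint cycles, boundedly many vertices meet all cycles. -/
theorem erdos_posa : ∀ k, ∃ f, ∀ (V : Type) (G : SimpleGraph V) (S : Finset V),
    ¬ Pack G S k → Hit G S f
  | 0 => ⟨0, fun V G S h => absurd ⟨fun i => i.elim0, fun i => i.elim0, fun i => i.elim0⟩ h⟩
  | k + 1 => by
    obtain ⟨f0, h0⟩ := erdos_posa k
    obtain ⟨r, hr, hbig⟩ := exists_pow_lt (f0 + 4)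
    refine ⟨f0 + 2 * r + 2, fun V G S => ep_step (h0 V) le_rfl hr ?_ _ G S rfl⟩
    rwa [show f0 + 2 * r + 2 + 2 = f0 + 4 + 2 * r by omega]

end Growth

/-! ### Cycles and thick sets -/

namespace Growth
open Finset
open scoped Classical

section Bridge
variable {V : Type*} {G : SimpleGraph V} {S T U : Finset V} {x y b : V}

/-- In a finite acyclic graph paths could be prolonged forever if all degrees were at least two. -/
lemma Thick.not_isAcyclic (hT : Thick G T) : ¬ (G.induce (T : Set V)).IsAcyclic := by
  intro hac
  obtain ⟨u, hu⟩ := hT.1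
  have nb : ∀ (v : (T : Set V)) (q : (T : Set V)), ∃ w : (T : Set V),
      (G.induce (T : Set V)).Adj v w ∧ w ≠ q := by
    intro v q
    have h := hT.2 v v.2
    obtain ⟨w, hw, hne⟩ := exists_mem_ne (show 1 < #{z ∈ T | G.Adj v z} from h) q
    rw [mem_filter] at hw
    exact ⟨⟨w, hw.1⟩, hw.2, fun e => hne (congrArg Subtype.val e)⟩
  have long : ∀ n : ℕ, ∃ (v : (T : Set V)) (p : (G.induce (T : Set V)).Walk ⟨u, hu⟩ v),
      p.IsPath ∧ p.length = n := by
    intro n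
    induction n with
    | zero => exact ⟨_, Walk.nil, by simp, rfl⟩
    | succ n ih =>
      obtain ⟨v, p, hp, hl⟩ := ih
      obtain ⟨w, hw, hne⟩ := nb v p.penultimate
      refine ⟨w, p.concat hw, hp.concat (fun h => hne ?_) hw, by simp [hl]⟩
      exact hac.eq_penultimate_of_adj_end hp hw h
  obtain ⟨v, p, hp, hl⟩ := long (Fintype.card (T : Set V))
  exact absurd hp.length_lt (by omega)

lemma Thick.exists_cycle (hT : Thick G T) :
    ∃ c : Σ v : V, G.Walk v v, c.2.IsCycle ∧ ∀ v ∈ c.2.support, v ∈ T := by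
  have h := hT.not_isAcyclic
  unfold IsAcyclic at h
  push Not at h
  obtain ⟨v, c, hc⟩ := h
  let φ : G.induce (T : Set V) →g G := (Embedding.induce (T : Set V)).toHom
  refine ⟨⟨φ v, c.map φ⟩, hc.map Subtype.val_injective, fun w hw => ?_⟩
  simp only [Walk.support_map, List.mem_map] at hw
  obtain ⟨w', -, rfl⟩ := hw
  exact w'.2

lemma Pack.hasDisjointCycles {m : ℕ} (h : Pack G S m) : HasDisjointCycles G m := by
  obtain ⟨P, h1, h2⟩ := h
  choose c hc hcs using fun i => (h1 i).2.exists_cycle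
  exact ⟨c, hc, fun i j hij v hv hv' =>
    Finset.disjoint_left.1 (h2 i j hij) (hcs i v hv) (hcs j v hv')⟩

lemma thick_of_isCycle {v : V} {c : G.Walk v v} (hc : c.IsCycle) : Thick G c.support.toFinset := by
  refine ⟨⟨v, by simp⟩, fun x hx => ?_⟩
  have hx' : x ∈ c.support := by simpa using hx
  rw [← hc.ncard_neighborSet_toSubgraph_eq_two hx']
  unfold dg
  rw [← Set.ncard_coe_finset]
  refine Set.ncard_le_ncard (fun z hz => ?_) (Finset.finite_toSet _)
  have hz' : c.toSubgraph.Adj x z := hz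
  simp only [coe_filter, List.mem_toFinset, Set.mem_setOf_eq]
  exact ⟨c.mem_verts_toSubgraph.1 hz'.snd_mem, hz'.adj_sub⟩

lemma pack_of_hasDisjointCycles [Fintype V] {m : ℕ} (h : HasDisjointCycles G m) :
    Pack G univ m := by
  obtain ⟨c, h1, h2⟩ := h
  refine ⟨fun i => (c i).2.support.toFinset, fun i => ⟨subset_univ _, thick_of_isCycle (h1 i)⟩,
    fun i j hij => ?_⟩
  rw [Finset.disjoint_left]
  intro v hv hv'
  exact h2 i j hij v (by simpa using hv) (by simpa using hv')

lemma hasDisjointCycles_iff [Fintype V] {m : ℕ} : HasDisjointCycles G m ↔ Pack G univ m :=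
  ⟨pack_of_hasDisjointCycles, Pack.hasDisjointCycles⟩

end Bridge
end Growth

/-! ### Encoding graphs without `k + 1` disjoint cycles -/

namespace Growth
open Finset
open scoped Classical

section Encoding
variable {V : Type*} {G : SimpleGraph V} {S T U : Finset V} {x y b : V}

lemma pack_of_family {ι : Type*} {m : ℕ} (J : Finset ι) (hm : m ≤ #J) (P : ι → Finset V)
    (h1 : ∀ i ∈ J, P i ⊆ S ∧ Thick G (P i))
    (h2 : ∀ i ∈ J, ∀ j ∈ J, i ≠ j → Disjoint (P i) (P j)) : Pack G S m := by
  obtain ⟨J', hJ', hc⟩ := exists_subset_card_eq hm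
  let e : Fin m ≃ J' := (finCongr hc.symm).trans J'.equivFin.symm
  refine ⟨fun i => P (e i), fun i => h1 _ (hJ' (e i).2), fun i j hij =>
    h2 _ (hJ' (e i).2) _ (hJ' (e j).2) fun h => hij (e.injective (Subtype.ext h))⟩

/-- Every forest is given by a parent function, whose roots account for the components: the
number of edges is at least the number of vertices that have a parent. -/
lemma forest_parent (Y : Finset V) (hY : Acyc G Y) : ∃ p : V → Option V,
    (∀ x y, p x = some y → x ∈ Y ∧ y ∈ Y ∧ G.Adj x y) ∧
    (∀ x ∈ Y, ∀ y ∈ Y, G.Adj x y → p x = some y ∨ p y = some x) ∧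
    2 * #Y ≤ ee G Y Y + 2 * #{x ∈ Y | p x = none} := by
  revert hY
  refine fun hY => Acyc.induct (G := G) (P := fun Y => ∃ p : V → Option V,
    (∀ x y, p x = some y → x ∈ Y ∧ y ∈ Y ∧ G.Adj x y) ∧
    (∀ x ∈ Y, ∀ y ∈ Y, G.Adj x y → p x = some y ∨ p y = some x) ∧
    2 * #Y ≤ ee G Y Y + 2 * #{x ∈ Y | p x = none}) ⟨fun _ => none, by simp⟩ ?_ Y hY
  rintro S x - hx hd ⟨p, h1, h2, h3⟩
  have hc := card_erase_add_one hx
  have he := ee_erase (G := G) hx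
  have hpx : p x = none := by
    by_contra h
    obtain ⟨y, hy⟩ := Option.ne_none_iff_exists'.1 h
    exact (mem_erase.1 (h1 x y hy).1).1 rfl
  by_cases hz : ∃ z ∈ S, G.Adj x z
  · obtain ⟨z, hzS, hxz⟩ := hz
    have hd1 : dg G S x = 1 := le_antisymm hd (dg_pos hzS hxz)
    refine ⟨Function.update p x (some z), fun u v huv => ?_, fun u hu v hv huv => ?_, ?_⟩
    · by_cases hux : u = x
      · subst hux
        simp only [Function.update_self, Option.some.injEq] at huv
        subst huv
        exact ⟨hx, hzS, hxz⟩
      · rw [Function.update_of_ne hux] at huv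
        obtain ⟨a1, a2, a3⟩ := h1 u v huv
        exact ⟨mem_of_mem_erase a1, mem_of_mem_erase a2, a3⟩
    · by_cases hux : u = x
      · subst hux
        left
        rw [Function.update_self, dg_le_one_unique hd hzS hv hxz huv]
      · by_cases hvx : v = x
        · subst hvx
          right
          rw [Function.update_self, dg_le_one_unique hd hzS hu hxz huv.symm]
        · rw [Function.update_of_ne hux, Function.update_of_ne hvx]
          exact h2 u (mem_erase.2 ⟨hux, hu⟩) v (mem_erase.2 ⟨hvx, hv⟩) huv
    · have : #{u ∈ S.erase x | p u = none} ≤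
          #{u ∈ S | Function.update p x (some z) u = none} := by
        refine card_le_card fun u hu => ?_
        rw [mem_filter, mem_erase] at hu
        rw [mem_filter, Function.update_of_ne hu.1.1]
        exact ⟨hu.1.2, hu.2⟩
      omega
  · push Not at hz
    refine ⟨p, fun u v huv => ?_, fun u hu v hv huv => ?_, ?_⟩
    · obtain ⟨a1, a2, a3⟩ := h1 u v huv
      exact ⟨mem_of_mem_erase a1, mem_of_mem_erase a2, a3⟩
    · have hux : u ≠ x := fun e => hz v hv (e ▸ huv)
      have hvx : v ≠ x := fun e => hz u hu (e ▸ huv.symm)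
      exact h2 u (mem_erase.2 ⟨hux, hu⟩) v (mem_erase.2 ⟨hvx, hv⟩) huv
    · have : #{u ∈ S.erase x | p u = none} + 1 ≤ #{u ∈ S | p u = none} := by
        rw [← card_insert_of_notMem (s := {u ∈ S.erase x | p u = none}) (a := x) (by simp)]
        refine card_le_card fun u hu => ?_
        simp only [mem_insert, mem_filter, mem_erase] at hu ⊢
        rcases hu with rfl | hu
        · exact ⟨hx, hpx⟩
        · exact ⟨hu.1.2, hu.2⟩
      omega

/-- The graph with parent function `p` on a forest and neighbourhoods `N i` at vertices `v i`. -/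
def dec {ι : Type*} (v : ι → V) (N : ι → Finset V) (p : V → Option V) : SimpleGraph V :=
  fromRel fun x y => (∃ i, v i = x ∧ y ∈ N i) ∨ p x = some y

lemma dec_eq {ι : Type*} {v : ι → V} {N : ι → Finset V} {p : V → Option V} (A : Finset V)
    (h1 : ∀ x ∈ A, ∃ i, v i = x ∧ ∀ y, G.Adj x y → y ∈ N i)
    (h2 : ∀ i, ∀ y ∈ N i, G.Adj (v i) y) (h3 : ∀ x y, p x = some y → G.Adj x y)
    (h4 : ∀ x y, x ∉ A → y ∉ A → G.Adj x y → p x = some y ∨ p y = some x) : dec v N p = G := by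
  ext x y
  simp only [dec, fromRel_adj]
  constructor
  · rintro ⟨-, (⟨i, rfl, h⟩ | h) | (⟨i, rfl, h⟩ | h)⟩
    exacts [h2 i y h, h3 x y h, (h2 i x h).symm, (h3 y x h).symm]
  · intro h
    refine ⟨h.ne, ?_⟩
    by_cases hx : x ∈ A
    · obtain ⟨i, hi, hN⟩ := h1 x hx
      exact Or.inl (Or.inl ⟨i, hi, hN y h⟩)
    by_cases hy : y ∈ A
    · obtain ⟨i, hi, hN⟩ := h1 y hy
      exact Or.inr (Or.inl ⟨i, hi, hN x h.symm⟩)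
    rcases h4 x y hx hy h with h | h
    · exact Or.inl (Or.inr h)
    · exact Or.inr (Or.inr h)

lemma exists_enum [Nonempty V] (S : Finset V) {q : ℕ} (h : #S ≤ q) :
    ∃ v : Fin q → V, ∀ x ∈ S, ∃ i, v i = x := by
  let e := S.equivFin
  refine ⟨fun i => if hi : i.1 < #S then (e.symm ⟨i, hi⟩).1 else Classical.arbitrary V,
    fun x hx => ⟨⟨e ⟨x, hx⟩, (e ⟨x, hx⟩).2.trans_le h⟩, by simp⟩⟩

/-- A graph without `k + 1` disjoint cycles and with a hitting set of size `C` is a forest plus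
`k` vertices with arbitrary neighbourhoods plus `C` vertices with neighbourhoods of size at most
`m + k + C`, or else it is given by a parent function with at least `m` roots (vertices outside the
forest included) plus `k + C` vertices with arbitrary neighbourhoods. -/
lemma ex_encode [Fintype V] [Nonempty V] (G : SimpleGraph V) (k C m : ℕ)
    (hP : ¬ Pack G univ (k + 1)) (hH : Hit G univ C) :
    ∃ (v : Fin k ⊕ Fin C → V) (N : Fin k ⊕ Fin C → Finset V) (p : V → Option V),
      dec v N p = G ∧
      ((∀ i, #(N (Sum.inr i)) ≤ m + k + C) ∨ m ≤ #{x | p x = none}) := by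
  obtain ⟨B, hBc, hF⟩ := hH
  set F := univ \ B with hFdef
  have hFB : ∀ x ∈ F, x ∉ B := fun x hx => (Finset.mem_sdiff.1 hx).2
  obtain ⟨J, hJB, X, hXF, hXJ, R, hR1, hR2, hhit⟩ := colorful F hF B
    (fun b T => T ⊆ F ∧ Conn G T ∧ 2 ≤ dg G T b) (fun b _ T h => ⟨h.1, h.2.1⟩)
  -- every `b ∈ J` closes a cycle with its tree `R b`, and these cycles are disjoint
  have hJc : #J ≤ k := by
    by_contra! hlt
    have hex : ∀ b ∈ J, ∃ T ⊆ insert b (R b), Thick G T := by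
      intro b hb
      have hnac : ¬ Acyc G (insert b (R b)) := fun h => by
        have h1 := (hR1 b hb).2.1.dg_le_one (fun h' => hFB b ((hR1 b hb).1 h') (hJB hb)) h
        have h2 := (hR1 b hb).2.2
        omega
      unfold Acyc at hnac
      push Not at hnac
      exact hnac
    choose! P hP1 hP2 using hex
    refine hP (pack_of_family J hlt P (fun b hb => ⟨subset_univ _, hP2 b hb⟩) ?_)
    intro b hb b' hb' hne
    refine disjoint_of_subset_left (hP1 b hb) (disjoint_of_subset_right (hP1 b' hb') ?_)
    rw [disjoint_insert_left, disjoint_insert_right, mem_insert]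
    refine ⟨fun h => h.elim hne fun h => hFB b ((hR1 b' hb').1 h) (hJB hb),
      fun h => hFB b' ((hR1 b hb).1 h) (hJB hb'), hR2 b hb b' hb' hne⟩
  set Y := F \ X with hY
  have hYac : Acyc G Y := hF.mono sdiff_subset
  obtain ⟨p, hp1, hp2, hp3⟩ := forest_parent Y hYac
  obtain ⟨v₂, hv₂⟩ := exists_enum B hBc
  -- With few roots, `Y` has few components, and each vertex of `B` outside `J` sends at most one
  -- edge to each of them.
  by_cases hm : m ≤ #{x | p x = none}
  · obtain ⟨v₁, hv₁⟩ := exists_enum X (hXJ.trans hJc)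
    refine ⟨Sum.elim v₁ v₂, fun i => univ.filter (G.Adj (Sum.elim v₁ v₂ i)), p,
      dec_eq (X ∪ B) (fun x hx => ?_) (fun i y hy => (mem_filter.1 hy).2)
        (fun x y h => (hp1 x y h).2.2) (fun x y hx hy h => ?_), Or.inr hm⟩
    · rcases mem_union.1 hx with h | h
      · obtain ⟨i, rfl⟩ := hv₁ x h
        exact ⟨Sum.inl i, rfl, fun y hy => mem_filter.2 ⟨mem_univ _, hy⟩⟩
      · obtain ⟨i, rfl⟩ := hv₂ x h
        exact ⟨Sum.inr i, rfl, fun y hy => mem_filter.2 ⟨mem_univ _, hy⟩⟩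
    · have hin : ∀ z, z ∉ X ∪ B → z ∈ Y := fun z hz => by
        rw [mem_union] at hz
        simp only [hY, hFdef, Finset.mem_sdiff, mem_univ, true_and]
        tauto
      exact hp2 x (hin x hx) y (hin y hy) h
  · obtain ⟨v₁, hv₁⟩ := exists_enum J hJc
    obtain ⟨p', hp1', hp2', -⟩ := forest_parent F hF
    refine ⟨Sum.elim v₁ v₂, Sum.elim (fun i => univ.filter (G.Adj (v₁ i)))
      (fun i => if v₂ i ∈ B ∧ v₂ i ∉ J then univ.filter (G.Adj (v₂ i)) else ∅), p',
      dec_eq B (fun x hx => ?_) (fun i y hy => ?_)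
        (fun x y h => (hp1' x y h).2.2) (fun x y hx hy h => ?_), Or.inl fun i => ?_⟩
    · by_cases hxJ : x ∈ J
      · obtain ⟨i, rfl⟩ := hv₁ x hxJ
        exact ⟨Sum.inl i, rfl, fun y hy => mem_filter.2 ⟨mem_univ _, hy⟩⟩
      · obtain ⟨i, rfl⟩ := hv₂ x hx
        refine ⟨Sum.inr i, rfl, fun y hy => ?_⟩
        simp only [Sum.elim_inr, hx, hxJ, not_false_eq_true, and_self, if_true]
        exact mem_filter.2 ⟨mem_univ _, hy⟩
    · rcases i with i | i
      · simpa using hy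
      · by_cases h : v₂ i ∈ B ∧ v₂ i ∉ J
        · simpa [h] using hy
        · simp [h] at hy
    · exact hp2' x (by simp [hFdef, hx]) y (by simp [hFdef, hy]) h
    · simp only [Sum.elim_inr]
      split_ifs with h
      · have hbY : v₂ i ∉ Y := fun h' => hFB _ (sdiff_subset h') h.1
        have hac : Acyc G (insert (v₂ i) Y) := acyc_of_hit hF (hhit _ h.1 h.2)
        have e1 := hac.ee_le ⟨v₂ i, mem_insert_self _ _⟩
        rw [ee_insert hbY, card_insert_of_notMem hbY] at e1
        have e2 : #{x ∈ Y | p x = none} ≤ #{x | p x = none} :=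
          card_le_card (filter_subset_filter _ (subset_univ _))
        have e3 : univ.filter (G.Adj (v₂ i)) ⊆ {y ∈ Y | G.Adj (v₂ i) y} ∪ (B ∪ X) := by
          intro y hy
          simp only [hY, hFdef, mem_union, mem_filter, Finset.mem_sdiff, mem_univ, true_and]
            at hy ⊢
          tauto
        have e4 := (card_le_card e3).trans (card_union_le _ _)
        have e5 := card_union_le B X
        change _ ≤ dg G Y (v₂ i) + _ at e4
        omega
      · simp

end Encoding

section Counting

/-- The number of subsets of an `n`-set with at most `s` elements. -/
noncomputable def smallSets (n s : ℕ) : ℕ := #{N : Finset (Fin n) | #N ≤ s}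

lemma card_many_none (n m : ℕ) :
    #{p : Fin n → Option (Fin n) | m ≤ #{x | p x = none}} ≤ 2 ^ n * (n + 1) ^ (n - m) := by
  have hcov : ({p : Fin n → Option (Fin n) | m ≤ #{x | p x = none}} : Finset _) ⊆
      (powersetCard m univ).biUnion fun Z =>
        Fintype.piFinset fun x => if x ∈ Z then {none} else univ := by
    intro p hp
    obtain ⟨Z, hZ, hZc⟩ := exists_subset_card_eq (mem_filter.1 hp).2
    refine mem_biUnion.2 ⟨Z, mem_powersetCard.2 ⟨subset_univ _, hZc⟩, ?_⟩
    rw [Fintype.mem_piFinset]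
    intro x
    split_ifs with h
    · simpa using hZ h
    · simp
  refine (card_le_card hcov).trans ((card_biUnion_le_card_mul _ _ ((n + 1) ^ (n - m))
    fun Z hZ => ?_).trans (Nat.mul_le_mul_right _ ?_))
  · rw [Fintype.card_piFinset]
    have : ∀ x, #(if x ∈ Z then {none} else (univ : Finset (Option (Fin n)))) =
        if x ∈ Z then 1 else n + 1 := fun x => by split_ifs <;> simp
    simp_rw [this]
    rw [prod_ite, prod_const_one, one_mul, prod_const]
    refine le_of_eq (congrArg _ ?_)
    rw [filter_not, card_sdiff_of_subset (filter_subset _ _)]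
    simp [(mem_powersetCard.1 hZ).2]
  · rw [card_powersetCard, card_univ, Fintype.card_fin]
    exact Nat.choose_le_two_pow n m

/-- Counting the codes of `ex_encode`; `hEP` is the Erdős–Pósa property. The two summands belong to
the two alternatives there, and in both the last factor counts parent functions. -/
theorem count_upper {k C n : ℕ} (m : ℕ) (hn : 1 ≤ n)
    (hEP : ∀ (G : SimpleGraph (Fin n)) S, ¬ Pack G S (k + 1) → Hit G S C) :
    exCount n (k + 1) ≤ n ^ (k + C) * ((2 ^ n) ^ k * smallSets n (m + k + C) ^ C) * (n + 1) ^ n +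
      n ^ (k + C) * (2 ^ n) ^ (k + C) * (2 ^ n * (n + 1) ^ (n - m)) := by
  have : Nonempty (Fin n) := ⟨⟨0, hn⟩⟩
  let NN : Finset (Fin k ⊕ Fin C → Finset (Fin n)) := Fintype.piFinset
    (Sum.elim (fun _ => univ) (fun _ => univ.filter fun N : Finset (Fin n) => #N ≤ m + k + C))
  let PP : Finset (Fin n → Option (Fin n)) := {p | m ≤ #{x | p x = none}}
  let U : Finset ((Fin k ⊕ Fin C → Fin n) × (Fin k ⊕ Fin C → Finset (Fin n)) ×
    (Fin n → Option (Fin n))) := univ ×ˢ (NN ×ˢ univ) ∪ univ ×ˢ (univ ×ˢ PP)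
  have hsub : (univ.filter fun G : SimpleGraph (Fin n) => ¬ HasDisjointCycles G (k + 1)) ⊆
      U.image fun c => dec c.1 c.2.1 c.2.2 := by
    intro G hG
    have hP : ¬ Pack G univ (k + 1) := by
      rw [← hasDisjointCycles_iff]; exact (mem_filter.1 hG).2
    obtain ⟨v, N, p, hdec, h⟩ := ex_encode G k C m hP (hEP G univ hP)
    refine mem_image.2 ⟨(v, N, p), ?_, hdec⟩
    simp only [U, mem_union, mem_product, mem_univ, true_and, and_true]
    rcases h with h | h
    · left
      rw [Fintype.mem_piFinset]
      rintro (i | i)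
      · simp
      · simpa using h i
    · right
      simpa [PP] using h
  have hcount : exCount n (k + 1) ≤ #U := by
    unfold exCount
    rw [Nat.card_eq_fintype_card, Fintype.card_subtype]
    convert (card_le_card hsub).trans card_image_le
  refine hcount.trans ((card_union_le _ _).trans ?_)
  have hhN : #NN = (2 ^ n) ^ k * smallSets n (m + k + C) ^ C := by
    simp [NN, Fintype.card_piFinset, smallSets]
  have hhP : #PP ≤ 2 ^ n * (n + 1) ^ (n - m) := card_many_none n m
  simp only [card_product, hhN, card_univ, Fintype.card_fun, Fintype.card_fin,
    Fintype.card_sum, Fintype.card_option, Fintype.card_finset]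
  refine Nat.add_le_add (le_of_eq (by ring)) ?_
  rw [← mul_assoc]
  exact Nat.mul_le_mul_left _ hhP

/-- Each set `N` is weighted by `x ^ #N`; the total weight of all sets is `(1 + x) ^ n`. -/
lemma smallSets_le (n s : ℕ) {x : ℝ} (h0 : 0 < x) (h1 : x ≤ 1) :
    (smallSets n s : ℝ) * x ^ s ≤ (1 + x) ^ n := by
  have h := Fintype.sum_pow_mul_eq_add_pow (Fin n) x 1
  rw [Fintype.card_fin, add_comm] at h
  rw [← h, smallSets, ← nsmul_eq_mul]
  refine (card_nsmul_le_sum _ (fun N : Finset (Fin n) => x ^ #N) _ fun N hN => ?_).trans ?_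
  · exact pow_le_pow_of_le_one h0.le h1 (mem_filter.1 hN).2
  · simp only [one_pow, mul_one]
    exact sum_le_sum_of_subset_of_nonneg (subset_univ _) fun _ _ _ => by positivity

end Counting
end Growth

/-! ### Counting labelled trees and the lower bound -/

namespace Growth
open Finset
open scoped Classical

section Trees
variable {V : Type*}

/-- Parent functions of rooted forests; the rank `h` excludes directed cycles. -/
def Ranked (p : V → Option V) : Prop := ∃ h : V → ℕ, ∀ x y, p x = some y → h y < h x

/-- `b` is an ancestor of `a`, or `a` itself. -/
def Reach (p : V → Option V) : V → V → Prop := Relation.ReflTransGen fun a b => p a = some b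

lemma reach_unique {p : V → Option V} {v r r' : V} (hr : p r = none) (hr' : p r' = none)
    (h : Reach p v r) (h' : Reach p v r') : r = r' := by
  have root : ∀ {a b}, p a = none → Reach p a b → a = b := fun {a b} ha hab => by
    rcases Relation.ReflTransGen.cases_head hab with e | ⟨c, hc, -⟩
    · exact e
    · rw [ha] at hc; cases hc
  have U : Relator.RightUnique fun a b => p a = some b := fun a b c hb hc =>
    Option.some.inj (hb.symm.trans hc)
  rcases Relation.ReflTransGen.total_of_right_unique U h h' with e | e
  · exact root hr e
  · exact (root hr' e).symm

/-- Hanging the tree with root `r` below a vertex `v` of another tree gives a rooted forest. -/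
lemma Ranked.update [DecidableEq V] {p : V → Option V} (hp : Ranked p) {r v : V} (hr : p r = none)
    (hv : ¬ Reach p v r) : Ranked (Function.update p r (some v)) := by
  obtain ⟨h, hh⟩ := hp
  refine ⟨fun x => if Reach p x r then h x + h v + 1 else h x, fun x y hxy => ?_⟩
  by_cases hx : x = r
  · subst hx
    rw [Function.update_self, Option.some.injEq] at hxy
    subst hxy
    have : Reach p x x := Relation.ReflTransGen.refl
    simp only [hv, this, if_true, if_false]
    omega
  · rw [Function.update_of_ne hx] at hxy
    have hlt := hh x y hxy
    have hiff : Reach p x r ↔ Reach p y r := by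
      refine ⟨fun hxr => ?_, fun hyr => Relation.ReflTransGen.head hxy hyr⟩
      rcases Relation.ReflTransGen.cases_head hxr with e | ⟨c, hc, hcr⟩
      · exact absurd e hx
      · rw [hxy, Option.some.injEq] at hc
        exact hc ▸ hcr
    by_cases hyr : Reach p y r
    · simp only [hiff, hyr, if_true]; omega
    · simp only [hiff, hyr, if_false]; exact hlt

/-- The graph of a parent function. -/
def pgraph (p : V → Option V) : SimpleGraph V := fromRel fun x y => p x = some y

lemma Ranked.acyc {p : V → Option V} (hp : Ranked p) (S : Finset V) : Acyc (pgraph p) S := by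
  obtain ⟨h, hh⟩ := hp
  intro T _ hT
  obtain ⟨x, hx, hmax⟩ := exists_max_image T h hT.1
  obtain ⟨y, z, hy, hz, hyz⟩ := one_lt_card_iff.1 (show 1 < #{y ∈ T | (pgraph p).Adj x y} from
    hT.2 x hx)
  have key : ∀ w, w ∈ ({y ∈ T | (pgraph p).Adj x y} : Finset V) → p x = some w := by
    intro w hw
    rw [mem_filter] at hw
    obtain ⟨hwT, hadj⟩ := hw
    simp only [pgraph, fromRel_adj] at hadj
    rcases hadj.2 with h1 | h1
    · exact h1
    · exact absurd (hh w x h1) (not_lt.2 (hmax w hwT))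
  have := (key y hy).symm.trans (key z hz)
  exact hyz (Option.some.inj this)

/-- A tree together with its root determines the parent function. -/
lemma pgraph_inj {p q : V → Option V} (hp : Ranked p) (hg : pgraph p = pgraph q)
    (hr : ∀ x, p x = none ↔ q x = none) : p = q := by
  obtain ⟨h, hh⟩ := hp
  have key : ∀ n x, h x = n → p x = q x := by
    intro n
    induction n using Nat.strong_induction_on with
    | _ n ih =>
    intro x hx
    cases hpx : p x with
    | none => exact ((hr x).1 hpx).symm
    | some y =>
      have hlt := hh x y hpx
      have hne : x ≠ y := fun e => by rw [e] at hlt; exact lt_irrefl _ hlt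
      have hadj : (pgraph q).Adj x y := by
        rw [← hg]
        exact ⟨hne, Or.inl hpx⟩
      rcases hadj.2 with h1 | h1
      · exact h1.symm
      · have h2 := ih (h y) (hx ▸ hlt) y rfl
        rw [h1] at h2
        exact absurd (hh y x h2) (by omega)
  exact funext fun x => key _ x rfl

/-- Rooted forests on `Fin n` in which exactly `j` vertices have a parent. -/
noncomputable def rooted (n j : ℕ) : Finset (Fin n → Option (Fin n)) :=
  {p | Ranked p ∧ #{x | p x ≠ none} = j}

/-- Pitman's double counting of pairs of rooted forests that differ by one edge: to a forest with
`j` edges an edge is added by choosing any vertex `v` and the root `r` of another tree. -/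
lemma rooted_succ (n j : ℕ) :
    #(rooted n j) * (n * (n - 1 - j)) ≤ #(rooted n (j + 1)) * (j + 1) := by
  let U : Finset (Σ _ : Fin n → Option (Fin n), Σ _ : Fin n, Fin n) :=
    (rooted n j).sigma fun p => univ.sigma fun v =>
      univ.filter fun r => p r = none ∧ ¬ Reach p v r
  let W : Finset (Σ _ : Fin n → Option (Fin n), Fin n) :=
    (rooted n (j + 1)).sigma fun p => univ.filter fun r => p r ≠ none
  have hW : #W = #(rooted n (j + 1)) * (j + 1) := by
    rw [card_sigma, sum_const_nat]
    intro p hp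
    exact (mem_filter.1 hp).2.2
  have hU : #(rooted n j) * (n * (n - 1 - j)) ≤ #U := by
    rw [card_sigma, ← smul_eq_mul]
    refine card_nsmul_le_sum _ _ _ fun p hp => ?_
    rw [card_sigma]
    have : n * (n - 1 - j) = #(univ : Finset (Fin n)) • (n - 1 - j) := by simp
    rw [this]
    refine card_nsmul_le_sum _ _ _ fun v _ => ?_
    have h1 := card_filter_add_card_filter_not (s := (univ : Finset (Fin n)))
      (fun x => p x ≠ none)
    rw [(mem_filter.1 hp).2.2, card_univ, Fintype.card_fin] at h1
    simp only [not_not] at h1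
    have h2 : #{x | p x = none} ≤ #{r | p r = none ∧ ¬ Reach p v r} + 1 := by
      have h3 : #{x | p x = none} ≤
          #(univ.filter (fun r => p r = none ∧ ¬ Reach p v r) ∪
            univ.filter fun r => p r = none ∧ Reach p v r) := by
        refine card_le_card fun x hx => ?_
        simp only [mem_union, mem_filter, mem_univ, true_and] at hx ⊢
        tauto
      -- the excluded root is that of the tree containing `v`
      have h4 : #({r | p r = none ∧ Reach p v r} : Finset (Fin n)) ≤ 1 := by
        refine card_le_one.2 fun r hr r' hr' => ?_
        simp only [mem_filter, mem_univ, true_and] at hr hr'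
        exact reach_unique hr.1 hr'.1 hr.2 hr'.2
      have := card_union_le ({r | p r = none ∧ ¬ Reach p v r} : Finset (Fin n))
        {r | p r = none ∧ Reach p v r}
      omega
    omega
  rw [← hW]
  refine hU.trans (card_le_card_of_injOn
    (fun c => ⟨Function.update c.1 c.2.2 (some c.2.1), c.2.2⟩) ?_ ?_)
  · rintro ⟨p, v, r⟩ hc
    simp only [U, W, rooted, coe_sigma, Set.mem_sigma_iff, mem_coe, mem_filter,
      mem_univ, true_and] at hc ⊢
    obtain ⟨⟨hp, hcard⟩, hr, hv⟩ := hc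
    refine ⟨⟨hp.update hr hv, ?_⟩, by simp⟩
    rw [← hcard, ← card_insert_of_notMem (s := {x | p x ≠ none}) (a := r) (by simp [hr])]
    congr 1
    ext x
    by_cases hx : x = r
    · subst hx; simp
    · simp [hx]
  · rintro ⟨p, v, r⟩ hc ⟨p', v', r'⟩ hc' heq
    simp only [U, rooted, coe_sigma, Set.mem_sigma_iff, mem_coe, mem_filter,
      mem_univ, true_and] at hc hc'
    simp only [Sigma.mk.injEq, heq_eq_eq] at heq
    obtain ⟨h1, rfl⟩ := heq
    have hv : v = v' := by simpa using congrFun h1 r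
    have hpp : p = p' := by
      funext x
      by_cases hx : x = r
      · rw [hx, hc.2.1, hc'.2.1]
      · simpa [hx] using congrFun h1 x
    rw [hv, hpp]

lemma rooted_card (n j : ℕ) : n ^ j * (n - 1).descFactorial j ≤ #(rooted n j) * j.factorial := by
  induction j with
  | zero =>
    simp only [pow_zero, Nat.descFactorial_zero, mul_one, Nat.factorial_zero]
    refine card_pos.2 ⟨fun _ => none, ?_⟩
    simp only [rooted, mem_filter, mem_univ, true_and]
    exact ⟨⟨fun _ => 0, by simp⟩, by simp⟩
  | succ j ih =>
    have h := rooted_succ n j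
    rw [Nat.descFactorial_succ, Nat.factorial_succ]
    calc n ^ (j + 1) * ((n - 1 - j) * (n - 1).descFactorial j)
        = (n ^ j * (n - 1).descFactorial j) * (n * (n - 1 - j)) := by ring
      _ ≤ (#(rooted n j) * j.factorial) * (n * (n - 1 - j)) := Nat.mul_le_mul_right _ ih
      _ = (#(rooted n j) * (n * (n - 1 - j))) * j.factorial := by ring
      _ ≤ (#(rooted n (j + 1)) * (j + 1)) * j.factorial := Nat.mul_le_mul_right _ h
      _ = _ := by ring

/-- The number of labelled forests. -/
noncomputable def forests (n : ℕ) : ℕ := #{G : SimpleGraph (Fin n) | Acyc G univ}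

/-- There are at least `n ^ (n - 1)` rooted labelled trees. -/
lemma forests_ge (n : ℕ) (hn : 1 ≤ n) : n ^ (n - 1) ≤ forests n * n := by
  have h1 := rooted_card n (n - 1)
  rw [Nat.descFactorial_self] at h1
  refine (Nat.le_of_mul_le_mul_right h1 (Nat.factorial_pos _)).trans ?_
  have hroot : ∀ p ∈ rooted n (n - 1), ∃ r, ∀ x, p x = none ↔ x = r := by
    intro p hp
    have h2 := card_filter_add_card_filter_not (s := (univ : Finset (Fin n)))
      (fun x => p x ≠ none)
    rw [(mem_filter.1 hp).2.2, card_univ, Fintype.card_fin] at h2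
    simp only [not_not] at h2
    obtain ⟨r, hr⟩ := card_eq_one.1 (show #{x | p x = none} = 1 by omega)
    refine ⟨r, fun x => ?_⟩
    rw [← mem_filter_univ (p := fun x => p x = none) x, hr, mem_singleton]
  have : Nonempty (Fin n) := ⟨⟨0, hn⟩⟩
  choose! r hr using hroot
  have h3 := card_le_card_of_injOn (s := rooted n (n - 1))
    (t := (univ.filter fun G : SimpleGraph (Fin n) => Acyc G univ) ×ˢ (univ : Finset (Fin n)))
    (fun p => (pgraph p, r p)) (fun p hp => ?_) (fun p hp q hq h => ?_)
  · rw [card_product, card_univ, Fintype.card_fin] at h3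
    exact h3
  · simp only [coe_product, Set.mem_prod, mem_coe, mem_filter, mem_univ, true_and, and_true]
    exact (mem_filter.1 hp).2.1.acyc _
  · simp only [Prod.mk.injEq] at h
    exact pgraph_inj (mem_filter.1 hp).2.1 h.1 fun x => by
      rw [hr p hp, hr q hq, h.2]

end Trees

section Apex

/-- The graph `H` with `k` further independent vertices, the `i`-th of them joined to `N i`. -/
def joinG {m k : ℕ} (H : SimpleGraph (Fin m)) (N : Fin k → Finset (Fin m)) :
    SimpleGraph (Fin m ⊕ Fin k) where
  Adj a b := match a, b with
    | Sum.inl x, Sum.inl y => H.Adj x y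
    | Sum.inl x, Sum.inr i => x ∈ N i
    | Sum.inr i, Sum.inl x => x ∈ N i
    | Sum.inr _, Sum.inr _ => False
  symm := ⟨by rintro (x | x) (y | y) h <;> first | exact h.symm | exact h⟩
  loopless := ⟨by rintro (x | x) h <;> first | exact H.loopless.irrefl x h | exact h⟩

lemma joinG_not_pack {m k n : ℕ} {H : SimpleGraph (Fin m)} (hH : Acyc H univ)
    (N : Fin k → Finset (Fin m)) (e : Fin n ≃ Fin m ⊕ Fin k) :
    ¬ Pack ((joinG H N).comap e) univ (k + 1) := by
  rintro ⟨T, h1, h2⟩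
  have key : ∀ i, ∃ j : Fin k, e.symm (Sum.inr j) ∈ T i := by
    intro i
    by_contra! hcon
    have hall : ∀ z ∈ T i, ∃ x, z = e.symm (Sum.inl x) := by
      intro z hz
      rcases hez : e z with x | j
      · exact ⟨x, by rw [← hez, e.symm_apply_apply]⟩
      · refine absurd ?_ (hcon j)
        rwa [← hez, e.symm_apply_apply]
    let S : Finset (Fin m) := {x | e.symm (Sum.inl x) ∈ T i}
    refine hH S (subset_univ _) ⟨?_, fun x hx => ?_⟩
    · obtain ⟨z, hz⟩ := (h1 i).2.1
      obtain ⟨x, rfl⟩ := hall z hz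
      exact ⟨x, by simpa [S] using hz⟩
    · have hx' : e.symm (Sum.inl x) ∈ T i := by simpa [S] using hx
      refine ((h1 i).2.2 _ hx').trans ?_
      unfold dg
      refine (card_le_card (t := ({y ∈ S | H.Adj x y}).image fun y => e.symm (Sum.inl y))
        fun z hz => ?_).trans card_image_le
      rw [mem_filter] at hz
      obtain ⟨y, rfl⟩ := hall z hz.1
      refine mem_image.2 ⟨y, mem_filter.2 ⟨by simpa [S] using hz.1, ?_⟩, rfl⟩
      have := hz.2
      rw [comap_adj, e.apply_symm_apply, e.apply_symm_apply] at this
      exact this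
  choose j hj using key
  have hinj : Function.Injective j := fun a b hab => by
    by_contra hne
    exact Finset.disjoint_left.1 (h2 a b hne) (hj a) (hab ▸ hj b)
  have := Fintype.card_le_of_injective j hinj
  simp at this

/-- Joining `k` arbitrary vertices to a forest does not create `k + 1` disjoint cycles. -/
theorem count_lower (k m : ℕ) : forests m * (2 ^ m) ^ k ≤ exCount (m + k) (k + 1) := by
  unfold exCount
  rw [Nat.card_eq_fintype_card, Fintype.card_subtype]
  have h := card_le_card_of_injOn
    (s := (univ.filter fun G : SimpleGraph (Fin m) => Acyc G univ) ×ˢ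
      (univ : Finset (Fin k → Finset (Fin m))))
    (t := univ.filter fun G : SimpleGraph (Fin (m + k)) => ¬ HasDisjointCycles G (k + 1))
    (fun c => (joinG c.1 c.2).comap finSumFinEquiv.symm) (fun c hc => ?_)
    (fun c _ c' _ h => ?_)
  · rw [card_product, card_univ, Fintype.card_fun, Fintype.card_finset, Fintype.card_fin,
      Fintype.card_fin] at h
    exact h
  · simp only [coe_product, Set.mem_prod, mem_coe, mem_filter, mem_univ, true_and, and_true]
      at hc ⊢
    rw [hasDisjointCycles_iff]
    exact joinG_not_pack hc _ _
  · have hadj : ∀ a b, (joinG c.1 c.2).Adj a b ↔ (joinG c'.1 c'.2).Adj a b := fun a b => by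
      have := congrArg (fun G : SimpleGraph (Fin (m + k)) =>
        G.Adj (finSumFinEquiv a) (finSumFinEquiv b)) h
      simpa using this
    refine Prod.ext ?_ ?_
    · ext x y
      exact hadj (Sum.inl x) (Sum.inl y)
    · funext i
      ext x
      exact hadj (Sum.inl x) (Sum.inr i)

end Apex
end Growth

/-! ### Asymptotics -/

namespace Growth
open scoped Topology

section Asymptotics

lemma poly_mul_pow_lt (c : ℝ) (q : ℕ) {M u : ℝ} (hM : 0 ≤ M) (hMu : M < u) :
    ∀ᶠ n : ℕ in atTop, c * (n : ℝ) ^ q * M ^ n < u ^ n := by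
  have hu : 0 < u := hM.trans_lt hMu
  have h := (tendsto_pow_const_mul_const_pow_of_lt_one q (div_nonneg hM hu.le)
    ((div_lt_one hu).2 hMu)).const_mul c
  rw [mul_zero] at h
  filter_upwards [h.eventually (gt_mem_nhds zero_lt_one)] with n hn
  rw [div_pow, ← mul_assoc, ← mul_div_assoc, div_lt_one (pow_pos hu n)] at hn
  exact hn

lemma root_lt {a u : ℝ} {n : ℕ} (hn : 1 ≤ n) (ha : 0 ≤ a) (hu : 0 ≤ u) (h : a < u ^ n) :
    a ^ ((n : ℝ)⁻¹) < u := by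
  have h1 := Real.rpow_lt_rpow ha h (z := (n : ℝ)⁻¹) (by positivity)
  rwa [Real.pow_rpow_inv_natCast hu (by omega)] at h1

lemma lt_root {a l : ℝ} {n : ℕ} (hn : 1 ≤ n) (hl : 0 ≤ l) (h : l ^ n < a) :
    l < a ^ ((n : ℝ)⁻¹) := by
  have h1 := Real.rpow_lt_rpow (by positivity) h (z := (n : ℝ)⁻¹) (by positivity)
  rwa [Real.pow_rpow_inv_natCast hl (by omega)] at h1

/-- One term of the exponential series at `n + 1`. -/
lemma pow_self_le (n : ℕ) : ((n : ℝ) + 1) ^ n ≤ n.factorial * (exp 1 * exp 1 ^ n) := by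
  have h := Real.pow_div_factorial_le_exp ((n : ℝ) + 1) (by positivity) n
  rw [div_le_iff₀ (by positivity)] at h
  have e : exp ((n : ℝ) + 1) = exp 1 * exp 1 ^ n := by
    rw [← Real.exp_nat_mul, ← Real.exp_add]; ring_nf
  rw [e] at h
  linarith

/-- A crude form of Stirling's upper bound. -/
lemma factorial_le (n : ℕ) (hn : 1 ≤ n) :
    (n.factorial : ℝ) * exp 1 ^ n ≤ exp 1 * (n : ℝ) ^ (n + 1) := by
  induction n, hn using Nat.le_induction with
  | base => simp
  | succ n hn ih =>
    have hn0 : (0 : ℝ) < n := by exact_mod_cast hn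
    -- `(n / (n + 1)) ^ (n + 1) ≤ 1 / e`
    have key : exp 1 * (n : ℝ) ^ (n + 1) ≤ ((n : ℝ) + 1) ^ (n + 1) := by
      have h1 := Real.one_sub_le_exp_neg (((n : ℝ) + 1)⁻¹)
      have h2 : 1 - ((n : ℝ) + 1)⁻¹ = n / (n + 1) := by field_simp; ring
      rw [h2] at h1
      have h3 := pow_le_pow_left₀ (by positivity) h1 (n + 1)
      rw [← Real.exp_nat_mul, div_pow, div_le_iff₀ (by positivity)] at h3
      have h4 : ((n + 1 : ℕ) : ℝ) * -((n : ℝ) + 1)⁻¹ = -1 := by push_cast; field_simp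
      rw [h4] at h3
      calc exp 1 * (n : ℝ) ^ (n + 1) ≤ exp 1 * (exp (-1) * ((n : ℝ) + 1) ^ (n + 1)) := by gcongr
        _ = _ := by rw [← mul_assoc, ← Real.exp_add]; simp
    calc ((n + 1).factorial : ℝ) * exp 1 ^ (n + 1)
        = ((n : ℝ) + 1) * exp 1 * (n.factorial * exp 1 ^ n) := by
          rw [Nat.factorial_succ]; push_cast; ring
      _ ≤ ((n : ℝ) + 1) * exp 1 * (exp 1 * (n : ℝ) ^ (n + 1)) := by gcongr
      _ ≤ ((n : ℝ) + 1) * exp 1 * ((n : ℝ) + 1) ^ (n + 1) := by gcongr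
      _ = _ := by push_cast; ring

/-- `count_lower` and `forests_ge` combined, with all polynomial losses collected. -/
lemma lower_bound (k m : ℕ) (hm : 1 ≤ m) :
    (2 ^ k * exp 1) ^ (m + k) * ((m + k).factorial : ℝ) ≤
      ((2 ^ k * exp 1) ^ k * exp 1) * ((m + k : ℕ) : ℝ) ^ (k + 3) * exCount (m + k) (k + 1) := by
  have h1 : (m : ℝ) ^ m ≤ forests m * (m : ℝ) ^ 2 := by
    have h : m ^ m ≤ forests m * m ^ 2 := by
      calc m ^ m = m ^ (m - 1) * m := by rw [← pow_succ, Nat.sub_add_cancel hm]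
        _ ≤ forests m * m * m := Nat.mul_le_mul_right _ (forests_ge m hm)
        _ = _ := by ring
    exact_mod_cast h
  have h2 : ((m + k).factorial : ℝ) ≤ m.factorial * ((m + k : ℕ) : ℝ) ^ k := by
    rw [← Nat.factorial_mul_ascFactorial]
    exact_mod_cast Nat.mul_le_mul_left _ (Nat.ascFactorial_le_pow_add m k)
  have h3 := factorial_le m hm
  have h4 : (forests m : ℝ) * (2 ^ m) ^ k ≤ exCount (m + k) (k + 1) := by
    exact_mod_cast count_lower k m
  have hmn : (m : ℝ) ≤ ((m + k : ℕ) : ℝ) := by push_cast; linarith [Nat.cast_nonneg (α := ℝ) k]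
  set N : ℝ := ((m + k : ℕ) : ℝ) with hN
  have hN0 : 0 ≤ N := Nat.cast_nonneg _
  set E := exp 1 with hE
  have hE0 : 0 < E := exp_pos 1
  calc (2 ^ k * E) ^ (m + k) * ((m + k).factorial : ℝ)
      ≤ (2 ^ k * E) ^ (m + k) * (m.factorial * N ^ k) := by gcongr
    _ = (2 ^ k * E) ^ k * (2 ^ k) ^ m * (m.factorial * E ^ m) * N ^ k := by
        rw [pow_add, mul_pow (2 ^ k) E m]; ring
    _ ≤ (2 ^ k * E) ^ k * (2 ^ k) ^ m * (E * (m : ℝ) ^ (m + 1)) * N ^ k := by gcongr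
    _ = (2 ^ k * E) ^ k * E * (2 ^ m) ^ k * (m : ℝ) * (m : ℝ) ^ m * N ^ k := by ring
    _ ≤ (2 ^ k * E) ^ k * E * (2 ^ m) ^ k * (m : ℝ) * (forests m * (m : ℝ) ^ 2) * N ^ k := by
        gcongr
    _ = (2 ^ k * E) ^ k * E * (m : ℝ) ^ 3 * N ^ k * (forests m * (2 ^ m) ^ k) := by ring
    _ ≤ (2 ^ k * E) ^ k * E * N ^ 3 * N ^ k * exCount (m + k) (k + 1) := by gcongr
    _ = _ := by ring

lemma eventually_lower (k : ℕ) {l : ℝ} (hl : l < 2 ^ k * exp 1) :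
    ∀ᶠ n : ℕ in atTop, l < ((exCount n (k + 1) : ℝ) / n.factorial) ^ ((n : ℝ)⁻¹) := by
  have hL : (0 : ℝ) < 2 ^ k * exp 1 := by positivity
  have hl' : max l 0 < 2 ^ k * exp 1 := max_lt hl hL
  filter_upwards [poly_mul_pow_lt ((2 ^ k * exp 1) ^ k * exp 1) (k + 3) (le_max_right l 0) hl',
    eventually_ge_atTop (k + 1)] with n hn hnk
  refine (le_max_left l 0).trans_lt (lt_root (by omega) (le_max_right l 0) ?_)
  obtain ⟨m, rfl⟩ : ∃ m, n = m + k := ⟨n - k, by omega⟩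
  have h := lower_bound k m (by omega)
  have hf : (0 : ℝ) < (m + k).factorial := by positivity
  have hmk : 0 < m + k := by omega
  have hc : (0 : ℝ) < ((2 ^ k * exp 1) ^ k * exp 1) * ((m + k : ℕ) : ℝ) ^ (k + 3) := by
    have : (0 : ℝ) < ((m + k : ℕ) : ℝ) := by exact_mod_cast hmk
    positivity
  rw [lt_div_iff₀ hf]
  refine lt_of_mul_lt_mul_left (lt_of_lt_of_le ?_ h) hc.le
  rw [← mul_assoc]
  exact mul_lt_mul_of_pos_right hn hf

/-- Uses `count_upper` with `m = ⌈ε * n⌉`: neighbourhoods of size about `m` then cost a factor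
close to one per vertex, and parent functions with `m` roots are superexponentially rare. -/
lemma eventually_upper (k : ℕ) {u : ℝ} (hu : 2 ^ k * exp 1 < u) :
    ∀ᶠ n : ℕ in atTop, ((exCount n (k + 1) : ℝ) / n.factorial) ^ ((n : ℝ)⁻¹) < u := by
  obtain ⟨C, hC⟩ := erdos_posa (k + 1)
  have hL : (0 : ℝ) < 2 ^ k * exp 1 := by positivity
  have hu0 : 0 < u := hL.trans hu
  -- There are at most `((1 + x) / x ^ ε) ^ n` sets of size `ε * n`, up to a constant; this base is
  -- made close to one by choosing `x` first and then `ε`.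
  obtain ⟨x, hx, hx0, hx1⟩ : ∃ x : ℝ, 2 ^ k * exp 1 * (1 + x) ^ C < u ∧ 0 < x ∧ x < 1 := by
    have hc : ContinuousAt (fun x : ℝ => 2 ^ k * exp 1 * (1 + x) ^ C) 0 := by fun_prop
    have h1 := (hc.tendsto.eventually (gt_mem_nhds (by simpa using hu))).filter_mono
      (nhdsWithin_le_nhds (s := Set.Ioi 0))
    obtain ⟨x, h, h'⟩ := (h1.and (Ioo_mem_nhdsGT zero_lt_one)).exists
    exact ⟨x, h, h'.1, h'.2⟩
  obtain ⟨ε, hε, hε0, hε1⟩ : ∃ ε : ℝ, 2 ^ k * exp 1 * ((1 + x) / x ^ ε) ^ C < u ∧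
      0 < ε ∧ ε < 1 := by
    have hc : ContinuousAt (fun ε : ℝ => 2 ^ k * exp 1 * ((1 + x) / x ^ ε) ^ C) 0 := by
      have h2 : ContinuousAt (fun ε : ℝ => x ^ ε) 0 :=
        Real.continuousAt_const_rpow hx0.ne'
      exact ((continuousAt_const.div h2 (by simp)).pow C).const_mul _
    have h1 := (hc.tendsto.eventually (gt_mem_nhds (by simpa using hx))).filter_mono
      (nhdsWithin_le_nhds (s := Set.Ioi 0))
    obtain ⟨ε, h, h'⟩ := (h1.and (Ioo_mem_nhdsGT zero_lt_one)).exists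
    exact ⟨ε, h, h'.1, h'.2⟩
  set s : ℝ := (1 + x) / x ^ ε with hs
  have hxε : 0 < x ^ ε := Real.rpow_pos_of_pos hx0 ε
  have hs0 : 0 < s := by positivity
  set q := k + C with hq
  set d : ℝ := (x ^ (1 + q))⁻¹ with hd
  have hd0 : 0 < d := by positivity
  have hu2 : exp 1 < u := by
    have : (1 : ℝ) ≤ 2 ^ k := one_le_pow₀ one_le_two
    nlinarith [exp_pos 1]
  have hgrow : ∀ᶠ n : ℕ in atTop, (2 : ℝ) ^ (q + 1) ≤ ((n : ℝ) + 1) ^ ε :=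
    ((tendsto_rpow_atTop hε0).comp (tendsto_atTop_add_const_right _ 1
      tendsto_natCast_atTop_atTop)).eventually_ge_atTop _
  filter_upwards [poly_mul_pow_lt (2 * (exp 1 * d ^ C)) q (by positivity) hε,
    poly_mul_pow_lt (2 * exp 1) q (exp_pos 1).le hu2, hgrow, eventually_ge_atTop 1]
    with n h1 h2 hg hn
  refine root_lt hn (by positivity) hu0.le ?_
  set m := ⌈ε * n⌉₊ with hm
  have hm1 : ε * n ≤ m := Nat.le_ceil _
  have hm2 : (m : ℝ) ≤ ε * n + 1 := (Nat.ceil_lt_add_one (by positivity)).le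
  have hmn : m ≤ n := by
    refine Nat.ceil_le.2 ?_
    have : (0 : ℝ) ≤ n := Nat.cast_nonneg n
    nlinarith
  have hcount := count_upper (k := k) (C := C) m hn (hC (Fin n))
  have hcount' : (exCount n (k + 1) : ℝ) ≤
      (n : ℝ) ^ q * ((2 ^ n) ^ k * (smallSets n (m + k + C) : ℝ) ^ C) * ((n : ℝ) + 1) ^ n +
      (n : ℝ) ^ q * (2 ^ n) ^ q * (2 ^ n * ((n : ℝ) + 1) ^ (n - m)) := by exact_mod_cast hcount
  have hsmall : (smallSets n (m + k + C) : ℝ) ≤ d * s ^ n := by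
    have h3 := smallSets_le n (m + k + C) hx0 hx1.le
    have h4 : (x ^ ε) ^ n * x ^ (1 + q) ≤ x ^ (m + k + C) := by
      rw [← Real.rpow_natCast (x ^ ε) n, ← Real.rpow_mul hx0.le, ← Real.rpow_natCast x (1 + q),
        ← Real.rpow_natCast x (m + k + C), ← Real.rpow_add hx0]
      refine Real.rpow_le_rpow_of_exponent_ge hx0 hx1.le ?_
      rw [hq]; push_cast; linarith
    have h5 : (smallSets n (m + k + C) : ℝ) * ((x ^ ε) ^ n * x ^ (1 + q)) ≤ (1 + x) ^ n :=
      (mul_le_mul_of_nonneg_left h4 (Nat.cast_nonneg _)).trans h3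
    rw [hd, hs, div_pow, inv_mul_eq_div, div_div]
    exact (le_div_iff₀ (by positivity)).2 h5
  have hpow := pow_self_le n
  have hU1 : (n : ℝ) ^ q * ((2 ^ n) ^ k * (smallSets n (m + k + C) : ℝ) ^ C) * ((n : ℝ) + 1) ^ n ≤
      n.factorial * (exp 1 * d ^ C * (n : ℝ) ^ q * (2 ^ k * exp 1 * s ^ C) ^ n) := by
    calc _ ≤ (n : ℝ) ^ q * ((2 ^ n) ^ k * (d * s ^ n) ^ C) *
          (n.factorial * (exp 1 * exp 1 ^ n)) := by gcongr
      _ = _ := by ring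
  have hU2 : (n : ℝ) ^ q * (2 ^ n) ^ q * (2 ^ n * ((n : ℝ) + 1) ^ (n - m)) ≤
      n.factorial * (exp 1 * (n : ℝ) ^ q * exp 1 ^ n) := by
    have h3 : ((2 : ℝ) ^ n) ^ q * 2 ^ n ≤ ((n : ℝ) + 1) ^ m := by
      calc ((2 : ℝ) ^ n) ^ q * 2 ^ n = (2 ^ (q + 1)) ^ n := by ring
        _ ≤ (((n : ℝ) + 1) ^ ε) ^ n := by gcongr
        _ = ((n : ℝ) + 1) ^ (ε * n) := by
            rw [← Real.rpow_natCast (((n : ℝ) + 1) ^ ε) n, ← Real.rpow_mul (by positivity)]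
        _ ≤ ((n : ℝ) + 1) ^ (m : ℝ) := Real.rpow_le_rpow_of_exponent_le (by simp) hm1
        _ = _ := Real.rpow_natCast _ _
    calc _ = (n : ℝ) ^ q * (((2 : ℝ) ^ n) ^ q * 2 ^ n) * ((n : ℝ) + 1) ^ (n - m) := by ring
      _ ≤ (n : ℝ) ^ q * ((n : ℝ) + 1) ^ m * ((n : ℝ) + 1) ^ (n - m) := by gcongr
      _ = (n : ℝ) ^ q * ((n : ℝ) + 1) ^ n := by
          rw [mul_assoc, ← pow_add, Nat.add_sub_cancel' hmn]
      _ ≤ (n : ℝ) ^ q * (n.factorial * (exp 1 * exp 1 ^ n)) := by gcongr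
      _ = _ := by ring
  have hf : (0 : ℝ) < n.factorial := by positivity
  rw [div_lt_iff₀ hf]
  refine (hcount'.trans (add_le_add hU1 hU2)).trans_lt ?_
  rw [← mul_add, mul_comm]
  refine mul_lt_mul_of_pos_right ?_ hf
  linarith

end Asymptotics
end Growth

/-- Ex (k+1)C has growth constant 2^k e. -/
theorem stmt_3 (k : ℕ) (hk : 1 ≤ k) :
    Filter.Tendsto
      (fun n : ℕ => ((exCount n (k+1) : ℝ) / (Nat.factorial n : ℝ)) ^ ((n : ℝ)⁻¹))
      Filter.atTop (nhds (2 ^ k * Real.exp 1)) := by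
  exact tendsto_order.2 ⟨fun l hl => Growth.eventually_lower k hl,
    fun u hu => Growth.eventually_upper k hu⟩
end
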